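/- Let 1/2 ≤ γ < 1 and let m be a smooth function on ℝ×S² with symbol decay of order 1+2γ. Define M(σ) = ∫_ℝ m(q,σ) dq and M̄ = (1/4π)∫_{S²} M(σ) dS(σ). Then: (a) there exists a unique smooth function Q on S² with ∫_{S²} Q dS = 0 and Δ_ω Q(ω) = −M(ω) + M̄ for all ω ∈ S²; and (b) for every smooth 𝓖̃₀ on ℝ×S² with symbol decay of order 2 such that ω ↦ ∫_ℝ 𝓖̃₀(q,ω) dq − Q(ω) is a constant function on S², there exists a smooth function φ on {(t,x) ∈ ℝ×ℝ³ : t > 2} satisfying ∂ₜ²φ − Δφ = χ(⟨t−r⟩/r)·m(r−t, ω)/r³ there (the right-hand side extended by 0 where the cutoff χ vanishes), such that: (i) for every q ∈ ℝ and ω ∈ S², lim_{r→∞} r·φ(r−q, rω) = M̄·⟨q⟩^{−1}·χ_{q<0}(q) + 𝓖̃₀(q,ω); and (ii) for every x ∈ ℝ³ with 0 < |x| < 1, lim_{a→∞} a²·φ(a, a·x) = 2M̄/(1 − |x|²). -/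

import Mathlib

/-!
**The Poisson equation on the sphere.** For uniqueness, the difference `u` of two solutions is
harmonic, so `Δ(u²) = 2|∇u|²` on the sphere; the Laplacian has zero mean (`integral_sphLap`), hence
`u` is constant (`harmonic_const`). For existence, `M` is convolved with the Green function
`-(1/4π) log (1 - ⟨ω, σ⟩)` (`lapD_zconv_log`, `poisson_exists`). The singular kernel is never
differentiated: conjugation by a half-turn depending on `x` moves the dependence on `x` to `M`
(`zconv_eq`, `zconv_param`), and the Laplacian is identified by regularising the logarithm, which
turns it into an approximate identity (`rhoK_tendsto`). Zonal integrals are evaluated with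
Archimedes' theorem (`zonal_cont`, `zonal_measure`).

**The scattering solution.** It has the form `φ = u + ψ`, with `u` a free wave and `ψ` the advanced
potential of the source.

* `u = ∫ K(⟨x, σ⟩ - t, σ) dσ` with `K = (2π)⁻¹ ∂_q F` and `F = M̄ ⟨q⟩⁻¹ χ_{q<0} + G0` the prescribed
  radiation field (`free_part`). At null infinity only `σ` near `ω` matters, and the fundamental
  theorem of calculus returns `F` (`fw_rad`). Inside the cone only the tail `q² K → M̄ / 2π`
  as `q → -∞` matters, and `∫ (1 - ⟨x, σ⟩)⁻² dσ = 4π / (1 - |x|²)` gives the limit (`fw_int`).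
* `ψ` is the integral of the source over forward light cones (`pot`). The affine parameter is
  compactified by `v = s / (1 + s)`; because the source decays like `r⁻³` and is cut off near
  `r = 0`, the integrand is smooth up to `v = 1`, so `ψ` is smooth, and integration along light
  rays shows that it solves the wave equation (`pot_box`). On the support of the cutoff the integrand is
  bounded by a multiple of `((1 - v) t + v)⁻³ ⟨q'⟩⁻²`, with `q'` the value of `r - t` on the cone
  (`srcH_bound`). Since `∫₀¹ ((1 - v) t + v)⁻² dv = 1 / t`, this makes `ψ` of order `t⁻³` inside the
  cone and of order `r⁻²` at null infinity, so that it contributes to neither limit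
  (`pot_interior`, `pot_radiation`).
-/

noncomputable section

open MeasureTheory Real Set Filter Topology Metric
open scoped RealInnerProductSpace Classical

/-- ℝ³ as a Euclidean space. -/
abbrev E3 : Type := EuclideanSpace ℝ (Fin 3)

/-- The unit sphere S² in ℝ³. -/
abbrev S2 : Set E3 := Metric.sphere (0 : E3) 1

/-- The surface measure on the unit sphere (total mass 4π). -/
noncomputable def sphereMeasure : Measure (Metric.sphere (0 : E3) 1) :=
  (volume : Measure E3).toSphere

/-- Integral over the unit sphere with respect to the surface measure. -/
noncomputable def sphereIntegral (f : E3 → ℝ) : ℝ :=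
  ∫ σ : Metric.sphere (0 : E3) 1, f σ ∂sphereMeasure

/-- Japanese bracket ⟨q⟩ = √(1+q²). -/
noncomputable def jb (q : ℝ) : ℝ := Real.sqrt (1 + q ^ 2)

/-- Iterates of the operator g ↦ ⟨q⟩ ∂_q g. -/
noncomputable def qIter : ℕ → (ℝ → ℝ) → ℝ → ℝ
  | 0, g => g
  | k + 1, g => fun q => jb q * deriv (qIter k g) q

/-- Partial derivative in the i-th coordinate direction. -/
noncomputable def pd (i : Fin 3) (g : E3 → ℝ) : E3 → ℝ :=
  fun x => fderiv ℝ g x (EuclideanSpace.single i 1)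

/-- Iterated partial derivatives along a multi-index (list of directions). -/
noncomputable def pdMulti : List (Fin 3) → (E3 → ℝ) → E3 → ℝ
  | [], g => g
  | i :: l, g => pd i (pdMulti l g)

/-- Euclidean Laplacian in ℝ³. -/
noncomputable def lap3 (g : E3 → ℝ) (x : E3) : ℝ :=
  ∑ i : Fin 3, pd i (pd i g) x

/-- Second time derivative ∂ₜ²φ. -/
noncomputable def dt2 (φ : ℝ → E3 → ℝ) (t : ℝ) (x : E3) : ℝ :=
  deriv (fun s => deriv (fun u => φ u x) s) t

/-- Homogeneity of degree zero on ℝ³ ∖ {0}. -/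
def HomogZero (f : E3 → ℝ) : Prop := ∀ c : ℝ, 0 < c → ∀ x : E3, f (c • x) = f x

/-- A smooth function on S², represented by its degree-zero homogeneous extension. -/
def SmoothOnSphere (f : E3 → ℝ) : Prop :=
  HomogZero f ∧ ContDiffOn ℝ (⊤ : ℕ∞) f {x : E3 | x ≠ 0}

/-- A smooth function on ℝ×S², represented via degree-zero homogeneous extension
in the angular variable. -/
def SmoothQSphere (f : ℝ → E3 → ℝ) : Prop :=
  (∀ q, HomogZero (f q)) ∧
  ContDiffOn ℝ (⊤ : ℕ∞) (fun p : ℝ × E3 => f p.1 p.2) {p : ℝ × E3 | p.2 ≠ 0}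

/-- Symbol decay of order κ: |(⟨q⟩∂_q)^k ∂_ω^α f(q,ω)| ≤ C_{k,α} ⟨q⟩^{-κ}. -/
def SymbolDecay (κ : ℝ) (f : ℝ → E3 → ℝ) : Prop :=
  ∀ (k : ℕ) (α : List (Fin 3)), ∃ C : ℝ, ∀ (q : ℝ) (ω : E3), ‖ω‖ = 1 →
    |qIter k (fun s => pdMulti α (f s) ω) q| ≤ C * jb q ^ (-κ)

/-- A smooth cutoff χ with χ = 1 on (-∞, 1/4] and χ = 0 on [1/2, ∞), 0 ≤ χ ≤ 1. -/
def IsCutChi (χ : ℝ → ℝ) : Prop :=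
  ContDiff ℝ (⊤ : ℕ∞) χ ∧ (∀ s, χ s ∈ Set.Icc (0:ℝ) 1) ∧
  (∀ s, s ≤ (1/4 : ℝ) → χ s = 1) ∧ (∀ s, (1/2 : ℝ) ≤ s → χ s = 0)

/-- A smooth cutoff χ_{q<0} with χ = 1 on (-∞, -1] and χ = 0 on [0, ∞), 0 ≤ χ ≤ 1. -/
def IsCutNeg (χ : ℝ → ℝ) : Prop :=
  ContDiff ℝ (⊤ : ℕ∞) χ ∧ (∀ s, χ s ∈ Set.Icc (0:ℝ) 1) ∧
  (∀ s, s ≤ (-1 : ℝ) → χ s = 1) ∧ (∀ s, (0 : ℝ) ≤ s → χ s = 0)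

set_option linter.unusedSectionVars false

/-! ### The surface measure of `S²` -/

/-- The surface measure of `S²`, viewed as a measure on the ambient space `ℝ³`. -/
def muS : Measure E3 := sphereMeasure.map Subtype.val

lemma sphere_emb : MeasurableEmbedding (Subtype.val : Metric.sphere (0 : E3) 1 → E3) :=
  MeasurableEmbedding.subtype_coe isClosed_sphere.measurableSet

instance : IsFiniteMeasure sphereMeasure := by unfold sphereMeasure; infer_instance

instance : IsFiniteMeasure muS := by unfold muS; infer_instance

lemma sphereIntegral_eq (f : E3 → ℝ) : sphereIntegral f = ∫ σ, f σ ∂muS := by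
  unfold muS; rw [sphere_emb.integral_map]; rfl

lemma muS_ae : ∀ᵐ σ ∂muS, ‖σ‖ = 1 := by
  unfold muS
  rw [sphere_emb.ae_map_iff]
  exact Eventually.of_forall fun σ => by simp

lemma muS_compl : muS S2ᶜ = 0 := by
  have := muS_ae
  rw [ae_iff] at this
  convert this using 2
  ext x; simp

lemma muS_apply {s : Set E3} (hs : MeasurableSet s) :
    muS s = 3 * volume ({x : E3 | ∃ c ∈ Ioo (0:ℝ) 1, ∃ y ∈ s, ‖y‖ = 1 ∧ x = c • y}) := by
  unfold muS sphereMeasure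
  rw [sphere_emb.map_apply, Measure.toSphere_apply' _ (hs.preimage sphere_emb.measurable)]
  congr 1
  · simp
  · congr 1
    ext x
    simp only [Set.mem_smul, Set.mem_ofPred_eq]
    constructor
    · rintro ⟨c, hc, y, ⟨z, hz, rfl⟩, rfl⟩
      exact ⟨c, hc, z, hz, by simp, rfl⟩
    · rintro ⟨c, hc, y, hy, hy1, rfl⟩
      exact ⟨c, hc, y, ⟨⟨y, by simpa using hy1⟩, hy, rfl⟩, rfl⟩

/-- Rotation invariance of the surface measure. -/
lemma muS_map (L : E3 ≃ₗᵢ[ℝ] E3) : muS.map L = muS := by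
  ext s hs
  rw [Measure.map_apply L.continuous.measurable hs, muS_apply hs,
    muS_apply (hs.preimage L.continuous.measurable)]
  congr 1
  rw [← L.measurePreserving.measure_preimage_equiv (f := L.toMeasurableEquiv)
    {x : E3 | ∃ c ∈ Ioo (0:ℝ) 1, ∃ y ∈ s, ‖y‖ = 1 ∧ x = c • y}]
  congr 1
  ext x
  simp only [Set.mem_ofPred_eq, Set.mem_preimage]
  constructor
  · rintro ⟨c, hc, y, hy, hy1, rfl⟩
    exact ⟨c, hc, L y, hy, by simpa using hy1, by simp⟩
  · rintro ⟨c, hc, y, hy, hy1, h⟩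
    refine ⟨c, hc, L.symm y, by simpa using hy, by simpa using hy1, ?_⟩
    apply L.injective
    simpa using h

lemma muS_integral_comp (L : E3 ≃ₗᵢ[ℝ] E3) {V : Type*} [NormedAddCommGroup V] [NormedSpace ℝ V]
    (f : E3 → V) : ∫ σ, f (L σ) ∂muS = ∫ σ, f σ ∂muS := by
  conv_rhs => rw [← muS_map L]
  exact (L.toHomeomorph.measurableEmbedding.integral_map (μ := muS) f).symm

lemma muS_univ : muS.real univ = 4 * π := by
  have h1 : muS univ = sphereMeasure univ := by
    unfold muS; rw [sphere_emb.map_apply]; simp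
  rw [measureReal_def, h1]
  unfold sphereMeasure
  rw [Measure.toSphere_apply_univ, EuclideanSpace.volume_ball_fin_three]
  simp only [finrank_euclideanSpace, Fintype.card_fin]
  rw [ENNReal.toReal_mul, ENNReal.toReal_mul, ENNReal.toReal_ofReal (by positivity)]
  simp
  ring

/-- A nonnegative function continuous on the sphere with vanishing integral vanishes there. -/
lemma muS_zero_of_integral_zero {f : E3 → ℝ} (hf : ContinuousOn f S2) (h0 : ∀ σ, ‖σ‖ = 1 → 0 ≤ f σ)
    (hi : ∫ σ, f σ ∂muS = 0) : ∀ σ, ‖σ‖ = 1 → f σ = 0 := by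
  rw [← sphereIntegral_eq] at hi
  unfold sphereIntegral at hi
  have hc : Continuous (fun σ : Metric.sphere (0 : E3) 1 => f σ) :=
    continuousOn_iff_continuous_domRestrict.1 hf
  have hint : Integrable (fun σ : Metric.sphere (0 : E3) 1 => f σ) sphereMeasure :=
    hc.integrable_of_hasCompactSupport (HasCompactSupport.of_compactSpace _)
  have h1 : (fun σ : Metric.sphere (0 : E3) 1 => f σ) =ᵐ[sphereMeasure] fun _ => 0 :=
    (integral_eq_zero_iff_of_nonneg (fun σ => h0 _ (by simp)) hint).1 hi
  have : sphereMeasure.IsOpenPosMeasure := by unfold sphereMeasure; infer_instance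
  have h2 := (hc.ae_eq_iff_eq sphereMeasure continuous_const).1 h1
  intro σ hσ
  exact congrFun h2 ⟨σ, by simpa using hσ⟩

/-! ### Integrals depending on a parameter -/

section Param

variable {P Y V : Type} [NormedAddCommGroup P] [NormedSpace ℝ P]
  [NormedAddCommGroup Y] [NormedSpace ℝ Y] [MeasurableSpace Y] [BorelSpace Y]
  [SecondCountableTopology Y] [NormedAddCommGroup V] [NormedSpace ℝ V]

/-- The partial derivative of `f : P × Y → V` in its first argument. -/
def pfd (f : P × Y → V) (z : P × Y) : P →L[ℝ] V := fderiv ℝ (fun p => f (p, z.2)) z.1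

lemma pfd_contDiffAt {n : WithTop ℕ∞} {f : P × Y → V} {z : P × Y}
    (hf : ContDiffAt ℝ (n + 1) f z) : ContDiffAt ℝ n (pfd f) z := by
  unfold pfd
  refine ContDiffAt.fderiv (m := n) (n := n + 1)
    (f := fun (z : P × Y) (p : P) => f (p, z.2)) (g := fun z => z.1) ?_ contDiffAt_fst le_rfl
  refine ContDiffAt.comp (f := fun w : (P × Y) × P => (w.2, w.1.2)) (z, z.1) ?_ ?_
  · exact hf
  · exact contDiffAt_snd.prodMk (contDiffAt_snd.comp _ contDiffAt_fst)

lemma pfd_hasFDerivAt {f : P × Y → V} {z : P × Y} (hf : ContDiffAt ℝ 1 f z) :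
    HasFDerivAt (fun p => f (p, z.2)) (pfd f z) z.1 := by
  have h : DifferentiableAt ℝ (fun p => f (p, z.2)) z.1 := by
    refine DifferentiableAt.comp (f := fun p : P => (p, z.2)) z.1
      (hf.differentiableAt one_ne_zero) ?_
    fun_prop
  exact h.hasFDerivAt

/-- A continuous integrand is bounded uniformly over a compact set of `y` for all `p` near `p0`;
this supplies the dominating constants below. -/
lemma tube_bound {K : Set Y} (hK : IsCompact K) {f : P × Y → V} {p0 : P}
    (hf : ∀ y ∈ K, ContinuousAt f (p0, y)) :
    ∃ C : ℝ, ∀ᶠ p in 𝓝 p0, ∀ y ∈ K, ‖f (p, y)‖ ≤ C := by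
  obtain ⟨C, hC⟩ : ∃ C : ℝ, ∀ y ∈ K, ‖f (p0, y)‖ ≤ C := by
    apply hK.exists_bound_of_continuousOn (f := fun y => f (p0, y))
    intro y hy
    exact ((hf y hy).comp (f := fun y => (p0, y)) (by fun_prop)).continuousWithinAt
  refine ⟨C + 1, hK.eventually_forall_of_forall_eventually fun y hy => ?_⟩
  have := (hf y hy).norm.eventually_lt_const (lt_of_le_of_lt (hC y hy) (lt_add_one C))
  filter_upwards [this] with z hz using hz.le

lemma slice_aesm {μ : Measure Y} {K : Set Y} (hK : IsCompact K) (hμ : μ Kᶜ = 0)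
    {g : Y → V} (hg : ∀ y ∈ K, ContinuousAt g y) : AEStronglyMeasurable g μ := by
  rw [← Measure.restrict_eq_self_of_ae_mem (s := K) (μ := μ) (mem_ae_iff.2 hμ)]
  exact ContinuousOn.aestronglyMeasurable (fun y hy => (hg y hy).continuousWithinAt)
    hK.measurableSet

lemma slice_integrable {μ : Measure Y} [IsFiniteMeasure μ] {K : Set Y} (hK : IsCompact K)
    (hμ : μ Kᶜ = 0) {g : Y → V} (hg : ∀ y ∈ K, ContinuousAt g y) : Integrable g μ := by
  obtain ⟨C, hC⟩ := hK.exists_bound_of_continuousOn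
    (f := g) (fun y hy => (hg y hy).continuousWithinAt)
  refine Integrable.of_bound (slice_aesm hK hμ hg) C ?_
  filter_upwards [mem_ae_iff.2 hμ] with y hy using hC y hy

lemma slice_continuousAt {f : P × Y → V} {p : P} {y : Y} (hf : ContinuousAt f (p, y)) :
    ContinuousAt (fun y => f (p, y)) y :=
  hf.comp (f := fun y => (p, y)) (by fun_prop)

lemma param_continuousAt {μ : Measure Y} [IsFiniteMeasure μ] {K : Set Y} (hK : IsCompact K)
    (hμ : μ Kᶜ = 0) {f : P × Y → V} {p0 : P} (hf : ∀ y ∈ K, ContDiffAt ℝ 0 f (p0, y)) :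
    ContinuousAt (fun p => ∫ y, f (p, y) ∂μ) p0 := by
  obtain ⟨C, hC⟩ := tube_bound hK (fun y hy => (hf y hy).continuousAt)
  refine continuousAt_of_dominated (bound := fun _ => C) ?_ ?_ (integrable_const _) ?_
  · have : ∀ᶠ p in 𝓝 p0, ∀ y ∈ K, ContDiffAt ℝ 0 f (p, y) :=
      hK.eventually_forall_of_forall_eventually fun y hy => (hf y hy).eventually (by simp)
    filter_upwards [this] with p hp
    exact slice_aesm hK hμ fun y hy => slice_continuousAt (hp y hy).continuousAt
  · filter_upwards [hC] with p hp
    filter_upwards [mem_ae_iff.2 hμ] with y hy using hp y hy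
  · filter_upwards [mem_ae_iff.2 hμ] with y hy
    exact (hf y hy).continuousAt.comp (f := fun p => (p, y)) (by fun_prop)

/-- Differentiation under the integral sign over a compact set carrying the measure. -/
lemma param_hasFDerivAt {μ : Measure Y} [IsFiniteMeasure μ] {K : Set Y} (hK : IsCompact K)
    (hμ : μ Kᶜ = 0) {f : P × Y → V} {p0 : P} (hf : ∀ y ∈ K, ContDiffAt ℝ 1 f (p0, y)) :
    HasFDerivAt (fun p => ∫ y, f (p, y) ∂μ) (∫ y, pfd f (p0, y) ∂μ) p0 := by
  have hd : ∀ y ∈ K, ContDiffAt ℝ 0 (pfd f) (p0, y) := fun y hy =>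
    pfd_contDiffAt (by simpa using hf y hy)
  obtain ⟨C, hC⟩ := tube_bound hK (fun y hy => (hd y hy).continuousAt)
  have h1 : ∀ᶠ p in 𝓝 p0, ∀ y ∈ K, ContDiffAt ℝ 1 f (p, y) :=
      hK.eventually_forall_of_forall_eventually fun y hy => (hf y hy).eventually (by simp)
  have hs := hC.and h1
  refine hasFDerivAt_integral_of_dominated_of_fderiv_le (bound := fun _ => C)
    (F' := fun p y => pfd f (p, y)) hs ?_ ?_ ?_ ?_ (integrable_const _) ?_
  · filter_upwards [h1] with p hp
    exact slice_aesm hK hμ fun y hy => slice_continuousAt (hp y hy).continuousAt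
  · exact slice_integrable hK hμ fun y hy => slice_continuousAt (hf y hy).continuousAt
  · exact slice_aesm hK hμ fun y hy => slice_continuousAt (hd y hy).continuousAt
  · filter_upwards [mem_ae_iff.2 hμ] with y hy p hp using hp.1 y hy
  · filter_upwards [mem_ae_iff.2 hμ] with y hy p hp
    exact pfd_hasFDerivAt (hp.2 y hy)

end Param

section Param2

variable {P Y : Type} [NormedAddCommGroup P] [NormedSpace ℝ P]
  [NormedAddCommGroup Y] [NormedSpace ℝ Y] [MeasurableSpace Y] [BorelSpace Y]
  [SecondCountableTopology Y]

lemma param_contDiffAt_nat {μ : Measure Y} [IsFiniteMeasure μ] {K : Set Y} (hK : IsCompact K)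
    (hμ : μ Kᶜ = 0) (n : ℕ) : ∀ {V : Type} [NormedAddCommGroup V] [NormedSpace ℝ V]
    {f : P × Y → V} {p0 : P}, (∀ y ∈ K, ContDiffAt ℝ n f (p0, y)) →
    ContDiffAt ℝ n (fun p => ∫ y, f (p, y) ∂μ) p0 := by
  induction n with
  | zero =>
    intro V _ _ f p0 hf
    have : ∀ᶠ p in 𝓝 p0, ∀ y ∈ K, ContDiffAt ℝ 0 f (p, y) :=
      hK.eventually_forall_of_forall_eventually fun y hy => (hf y hy).eventually (by simp)
    rw [CharP.cast_eq_zero, contDiffAt_zero]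
    exact ⟨_, this, fun p hp => (param_continuousAt hK hμ hp).continuousWithinAt⟩
  | succ n ih =>
    intro V _ _ f p0 hf
    rw [Nat.cast_add, Nat.cast_one, contDiffAt_succ_iff_hasFDerivAt]
    refine ⟨fun p => ∫ y, pfd f (p, y) ∂μ, ?_, ?_⟩
    · have : ∀ᶠ p in 𝓝 p0, ∀ y ∈ K, ContDiffAt ℝ (n + 1 : ℕ) f (p, y) :=
        hK.eventually_forall_of_forall_eventually fun y hy => (hf y hy).eventually (by simp)
      refine ⟨_, this, fun p hp => param_hasFDerivAt hK hμ fun y hy => (hp y hy).of_le ?_⟩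
      simp
    · exact ih fun y hy => pfd_contDiffAt (by exact_mod_cast hf y hy)

/-- Smooth dependence on parameters for integrals over a compact set: joint regularity of the
integrand near `{p0} × K` suffices, as compactness of `K` supplies the dominating constants. -/
lemma param_contDiffAt {μ : Measure Y} [IsFiniteMeasure μ] {K : Set Y} (hK : IsCompact K)
    (hμ : μ Kᶜ = 0) {V : Type} [NormedAddCommGroup V] [NormedSpace ℝ V]
    {f : P × Y → V} {p0 : P} (hf : ∀ y ∈ K, ContDiffAt ℝ (⊤ : ℕ∞) f (p0, y)) :
    ContDiffAt ℝ (⊤ : ℕ∞) (fun p => ∫ y, f (p, y) ∂μ) p0 := by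
  rw [contDiffAt_infty]
  exact fun n => param_contDiffAt_nat hK hμ n fun y hy => contDiffAt_infty.1 (hf y hy) n

/-- The second derivative of `u` at `p` applied to the pair `(v, w)`. -/
def D2 (u : P → ℝ) (p v w : P) : ℝ := fderiv ℝ (fderiv ℝ u) p v w

lemma param_fderiv {μ : Measure Y} [IsFiniteMeasure μ] {K : Set Y} (hK : IsCompact K)
    (hμ : μ Kᶜ = 0) {f : P × Y → ℝ} {p0 : P} (hf : ∀ y ∈ K, ContDiffAt ℝ 1 f (p0, y)) (v : P) :
    fderiv ℝ (fun p => ∫ y, f (p, y) ∂μ) p0 v = ∫ y, fderiv ℝ (fun p => f (p, y)) p0 v ∂μ := by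
  rw [(param_hasFDerivAt hK hμ hf).fderiv, ContinuousLinearMap.integral_apply]
  · rfl
  · exact slice_integrable hK hμ fun y hy => slice_continuousAt
      (pfd_contDiffAt (n := 0) (by simpa using hf y hy)).continuousAt

lemma param_D2 {μ : Measure Y} [IsFiniteMeasure μ] {K : Set Y} (hK : IsCompact K)
    (hμ : μ Kᶜ = 0) {f : P × Y → ℝ} {p0 : P} (hf : ∀ y ∈ K, ContDiffAt ℝ 2 f (p0, y)) (v w : P) :
    D2 (fun p => ∫ y, f (p, y) ∂μ) p0 v w = ∫ y, D2 (fun p => f (p, y)) p0 v w ∂μ := by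
  have h1 : ∀ᶠ p in 𝓝 p0, ∀ y ∈ K, ContDiffAt ℝ 2 f (p, y) :=
    hK.eventually_forall_of_forall_eventually fun y hy => (hf y hy).eventually (by simp)
  have h2 : fderiv ℝ (fun p => ∫ y, f (p, y) ∂μ) =ᶠ[𝓝 p0] fun p => ∫ y, pfd f (p, y) ∂μ := by
    filter_upwards [h1] with p hp
    exact (param_hasFDerivAt hK hμ fun y hy => (hp y hy).of_le one_le_two).fderiv
  have h3 : ∀ y ∈ K, ContDiffAt ℝ 1 (pfd f) (p0, y) := fun y hy =>
    pfd_contDiffAt (by simpa [one_add_one_eq_two] using hf y hy)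
  have h4 : ∀ y ∈ K, ContDiffAt ℝ 0 (pfd (pfd f)) (p0, y) := fun y hy =>
    pfd_contDiffAt (by simpa using h3 y hy)
  have i1 : Integrable (fun y => pfd (pfd f) (p0, y)) μ :=
    slice_integrable hK hμ fun y hy => slice_continuousAt (h4 y hy).continuousAt
  unfold D2
  rw [h2.fderiv_eq, (param_hasFDerivAt hK hμ h3).fderiv, ContinuousLinearMap.integral_apply i1,
    ContinuousLinearMap.integral_apply]
  · rfl
  · exact i1.apply_continuousLinearMap v

end Param2

/-! ### The Laplace–Beltrami operator through rotations -/

lemma S2_compact : IsCompact S2 := isCompact_sphere 0 1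

/-- The `i`-th standard basis vector of `ℝ³`. -/
abbrev bv (i : Fin 3) : E3 := EuclideanSpace.single i (1:ℝ)

lemma E3_expand (x : E3) : x = x 0 • bv 0 + x 1 • bv 1 + x 2 • bv 2 := by
  ext i; fin_cases i <;> simp

lemma inner_bv (i : Fin 3) (x : E3) : ⟪bv i, x⟫ = x i := by
  simp [EuclideanSpace.inner_single_left]

/-- The infinitesimal rotation in the plane spanned by `a` and `b`. -/
def rotGen (a b : E3) : E3 →L[ℝ] E3 :=
  (innerSL ℝ a).smulRight b - (innerSL ℝ b).smulRight a

lemma rotGen_apply (a b x : E3) : rotGen a b x = ⟪a, x⟫ • b - ⟪b, x⟫ • a := by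
  simp [rotGen]

/-- The rotation vector fields have zero mean derivative on the sphere.  The rotations are
generated by composing two reflections across the lines through `a` and `a + θ b`. -/
lemma integral_rotGen {a b : E3} (ha : ‖a‖ = 1) (hb : ‖b‖ = 1) (hab : ⟪a, b⟫ = 0)
    {g : E3 → ℝ} (hg : ∀ σ ∈ S2, ContDiffAt ℝ 1 g σ) :
    ∫ σ, fderiv ℝ g σ (rotGen a b σ) ∂muS = 0 := by
  have hn : ∀ θ : ℝ, ‖a + θ • b‖ ^ 2 = 1 + θ ^ 2 := by
    intro θ
    rw [norm_add_sq_real, norm_smul, inner_smul_right, hab, ha, hb]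
    simp
  -- The half-turn about the axis `a + θ b`: as `θ` varies these move by rotations in the `(a,
  -- b)`-plane.
  let R : ℝ → E3 ≃ₗᵢ[ℝ] E3 := fun θ => (Submodule.span ℝ {a + θ • b}).reflection
  have hR : ∀ θ σ, R θ σ = (2 * (⟪a, σ⟫ + θ * ⟪b, σ⟫) / (1 + θ ^ 2)) • (a + θ • b) - σ := by
    intro θ σ
    simp only [R, Submodule.reflection_singleton_apply]
    have := hn θ
    simp only [RCLike.ofReal_real_eq_id, id] at *
    rw [this, inner_add_left, real_inner_smul_left]
    congr 1
    module
  let f : ℝ × E3 → ℝ := fun z => g (R z.1 z.2)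
  have hf : ∀ σ ∈ S2, ContDiffAt ℝ 1 f (0, σ) := by
    intro σ hσ
    refine ContDiffAt.comp (f := fun z : ℝ × E3 => R z.1 z.2) (0, σ) (hg _ (by simpa using hσ)) ?_
    simp only [hR]
    have hne : ∀ θ : ℝ, 1 + θ ^ 2 ≠ 0 := fun θ => by positivity
    have e : ∀ c x : E3, ⟪c, x⟫ = innerSL ℝ c x := fun _ _ => rfl
    simp only [e]
    fun_prop (disch := exact hne _)
  have h1 := param_hasFDerivAt S2_compact muS_compl hf
  -- By rotation invariance the integral of `g ∘ R θ` does not depend on `θ`.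
  have hc : (fun p => ∫ y, f (p, y) ∂muS) = fun _ => ∫ y, g y ∂muS := by
    funext p; exact muS_integral_comp (R p) g
  rw [hc] at h1
  have h2 := h1.unique (hasFDerivAt_const _ _)
  have h3 : ∫ y, pfd f (0, y) 1 ∂muS = 0 := by
    rw [← ContinuousLinearMap.integral_apply, h2]
    · simp
    · exact slice_integrable S2_compact muS_compl fun y hy => slice_continuousAt
        (pfd_contDiffAt (n := 0) (by simpa using hf y hy)).continuousAt
  have h4 : ∀ σ ∈ S2, pfd f (0, σ) 1 = 2 * fderiv ℝ g (R 0 σ) (rotGen a b (R 0 σ)) := by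
    intro σ hσ
    have hd : HasDerivAt (fun θ : ℝ => R θ σ) ((2:ℝ) • (⟪a, σ⟫ • b + ⟪b, σ⟫ • a)) 0 := by
      simp only [hR]
      have e1 : HasDerivAt (fun θ : ℝ => 2 * (⟪a, σ⟫ + θ * ⟪b, σ⟫) / (1 + θ ^ 2))
          (2 * ⟪b, σ⟫) 0 := by
        have u1 : HasDerivAt (fun θ : ℝ => 2 * (⟪a, σ⟫ + θ * ⟪b, σ⟫)) (2 * (1 * ⟪b, σ⟫)) 0 :=
          (((hasDerivAt_id (0:ℝ)).mul_const _).const_add _).const_mul _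
        have u2 : HasDerivAt (fun θ : ℝ => 1 + θ ^ 2) (((2:ℕ):ℝ) * (0:ℝ) ^ (2 - 1) * 1) 0 :=
          ((hasDerivAt_id (0:ℝ)).pow 2).const_add _
        refine (u1.fun_div u2 (by norm_num)).congr_deriv ?_
        norm_num
      have e2 : HasDerivAt (fun θ : ℝ => a + θ • b) ((1:ℝ) • b) 0 :=
        ((hasDerivAt_id (0:ℝ)).smul_const b).const_add a
      refine ((e1.fun_smul e2).sub_const σ).congr_deriv ?_
      norm_num
      module
    have hgd : HasFDerivAt g (fderiv ℝ g (R 0 σ)) (R 0 σ) :=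
      ((hg (R 0 σ) (by simpa using hσ)).differentiableAt one_ne_zero).hasFDerivAt
    have h5 := hgd.comp_hasDerivAt (0:ℝ) hd
    have h6 := (pfd_hasFDerivAt (hf σ hσ)).hasDerivAt
    have h7 := h6.unique h5
    rw [h7, rotGen_apply]
    have k1 : ⟪a, R 0 σ⟫ = ⟪a, σ⟫ := by
      rw [hR, inner_sub_right, inner_smul_right]; simp [ha]; ring
    have k2 : ⟪b, R 0 σ⟫ = - ⟪b, σ⟫ := by
      rw [hR, inner_sub_right, inner_smul_right]; simp [real_inner_comm, hab]
    rw [k1, k2, map_smul, smul_eq_mul]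
    congr 2
    module
  rw [integral_congr_ae (muS_ae.mono fun σ hσ => h4 σ (by simpa using hσ)),
    integral_const_mul, muS_integral_comp (R 0) (fun τ => fderiv ℝ g τ (rotGen a b τ))] at h3
  simpa using h3

/-- For a symmetric bilinear form, the sum over the three infinitesimal rotations at a unit vector
is the trace minus the radial part: the rotations span the tangent plane of the sphere. -/
lemma bilin_rot (B : E3 →L[ℝ] E3 →L[ℝ] ℝ) (hB : ∀ u v, B u v = B v u) (x : E3) (hx : ‖x‖ = 1) :
    B (rotGen (bv 0) (bv 1) x) (rotGen (bv 0) (bv 1) x)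
    + B (rotGen (bv 0) (bv 2) x) (rotGen (bv 0) (bv 2) x)
    + B (rotGen (bv 1) (bv 2) x) (rotGen (bv 1) (bv 2) x) = ∑ i, B (bv i) (bv i) - B x x := by
  have hx2 : x 0 ^ 2 + x 1 ^ 2 + x 2 ^ 2 = 1 := by
    have := EuclideanSpace.real_norm_sq_eq x
    rw [hx, Fin.sum_univ_three] at this
    linarith
  simp only [rotGen_apply, inner_bv, Fin.sum_univ_three]
  conv_rhs => rw [E3_expand x]
  simp only [map_add, map_sub, map_smul, _root_.add_apply, _root_.sub_apply,
    _root_.smul_apply, smul_eq_mul]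
  rw [hB (bv 1) (bv 0), hB (bv 2) (bv 0), hB (bv 2) (bv 1)]
  linear_combination (B (bv 0) (bv 0) + B (bv 1) (bv 1) + B (bv 2) (bv 2)) * hx2

lemma bv_norm (i : Fin 3) : ‖bv i‖ = 1 := by simp

lemma bv_orth {i j : Fin 3} (h : i ≠ j) : ⟪bv i, bv j⟫ = 0 := by
  rw [inner_bv]; simp [h]

/-- The Laplace–Beltrami operator of `S²`, applied to the restriction of a function defined near
the sphere. -/
def sphLap (g : E3 → ℝ) (σ : E3) : ℝ :=
  ∑ i, D2 g σ (bv i) (bv i) - 2 * fderiv ℝ g σ σ - D2 g σ σ σ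

/-- The square of the infinitesimal rotation in the `(a, b)`-plane, applied to `g`. -/
def rot2 (g : E3 → ℝ) (a b σ : E3) : ℝ :=
  fderiv ℝ (fun τ => fderiv ℝ g τ (rotGen a b τ)) σ (rotGen a b σ)

/-- The Laplace–Beltrami operator is the sum of the squares of the three infinitesimal
rotations. -/
lemma sphLap_eq_rot {g : E3 → ℝ} {σ : E3} (hσ : ‖σ‖ = 1) (hg : ContDiffAt ℝ 2 g σ) :
    rot2 g (bv 0) (bv 1) σ + rot2 g (bv 0) (bv 2) σ + rot2 g (bv 1) (bv 2) σ = sphLap g σ := by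
  have hd : DifferentiableAt ℝ (fderiv ℝ g) σ :=
    (hg.fderiv_right (m := 1) (by norm_num)).differentiableAt one_ne_zero
  have key : ∀ a b : E3, fderiv ℝ (fun τ => fderiv ℝ g τ (rotGen a b τ)) σ (rotGen a b σ)
      = D2 g σ (rotGen a b σ) (rotGen a b σ) + fderiv ℝ g σ (rotGen a b (rotGen a b σ)) := by
    intro a b
    have := (hd.hasFDerivAt.clm_apply ((rotGen a b).hasFDerivAt (x := σ))).fderiv
    rw [this]
    simp [D2, add_comm]
  have hsymm : ∀ u v, fderiv ℝ (fderiv ℝ g) σ u v = fderiv ℝ (fderiv ℝ g) σ v u := by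
    intro u v
    exact (hg.isSymmSndFDerivAt (by simp)) u v
  simp only [rot2, key]
  have h1 := bilin_rot (fderiv ℝ (fderiv ℝ g) σ) hsymm σ hσ
  have h2 : rotGen (bv 0) (bv 1) (rotGen (bv 0) (bv 1) σ)
    + rotGen (bv 0) (bv 2) (rotGen (bv 0) (bv 2) σ)
    + rotGen (bv 1) (bv 2) (rotGen (bv 1) (bv 2) σ) = (-2 : ℝ) • σ := by
    simp only [rotGen_apply, inner_bv]
    ext i
    fin_cases i <;> simp <;> ring
  have h3 := congrArg (fderiv ℝ g σ) h2
  simp only [map_add, map_smul, smul_eq_mul] at h3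
  unfold sphLap
  simp only [D2] at *
  linarith

/-- The Laplace–Beltrami operator has zero mean. -/
lemma integral_sphLap {g : E3 → ℝ} (hg : ∀ σ ∈ S2, ContDiffAt ℝ 2 g σ) :
    ∫ σ, sphLap g σ ∂muS = 0 := by
  have hc : ∀ a b : E3, ∀ σ ∈ S2, ContDiffAt ℝ 1 (fun τ => fderiv ℝ g τ (rotGen a b τ)) σ := by
    intro a b σ hσ
    exact ((hg σ hσ).fderiv_right (m := 1) (by norm_num)).clm_apply (rotGen a b).contDiff.contDiffAt
  have hi : ∀ a b : E3, Integrable (fun σ => fderiv ℝ (fun τ => fderiv ℝ g τ (rotGen a b τ)) σ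
      (rotGen a b σ)) muS := by
    intro a b
    refine slice_integrable S2_compact muS_compl fun σ hσ => ?_
    exact (((hc a b σ hσ).fderiv_right (m := 0) (by norm_num)).clm_apply
      (rotGen a b).contDiff.contDiffAt).continuousAt
  have hz : ∀ i j : Fin 3, i ≠ j → ∫ σ, rot2 g (bv i) (bv j) σ ∂muS = 0 := fun i j hij =>
    integral_rotGen (bv_norm i) (bv_norm j) (bv_orth hij) (hc _ _)
  rw [← integral_congr_ae (muS_ae.mono fun σ hσ => sphLap_eq_rot hσ (hg σ (by simpa using hσ))),
    integral_add, integral_add, hz _ _ (by decide), hz _ _ (by decide), hz _ _ (by decide)]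
  · simp
  · exact hi _ _
  · exact hi _ _
  · exact (hi _ _).add (hi _ _)
  · exact hi _ _

/-! ### Zonal integrals and Archimedes' theorem -/

lemma fderiv_comp_lin {P : Type} [NormedAddCommGroup P] [NormedSpace ℝ P] {k : ℝ → ℝ}
    (l : P →L[ℝ] ℝ) {p : P} (hk : DifferentiableAt ℝ k (l p)) :
    fderiv ℝ (fun x => k (l x)) p = deriv k (l p) • l :=
  (hk.hasDerivAt.comp_hasFDerivAt p l.hasFDerivAt).fderiv

lemma D2_comp_lin {P : Type} [NormedAddCommGroup P] [NormedSpace ℝ P] {k : ℝ → ℝ}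
    (l : P →L[ℝ] ℝ) {p : P} (hk : ContDiffAt ℝ 2 k (l p)) (v w : P) :
    D2 (fun x => k (l x)) p v w = deriv (deriv k) (l p) * l v * l w := by
  have h1 : fderiv ℝ (fun x => k (l x)) =ᶠ[𝓝 p] fun x => deriv k (l x) • l := by
    have : ∀ᶠ z in 𝓝 (l p), ContDiffAt ℝ 2 k z := hk.eventually (by simp)
    filter_upwards [l.continuous.continuousAt.eventually this] with x hx
    exact fderiv_comp_lin l (hx.differentiableAt two_ne_zero)
  have h2 : DifferentiableAt ℝ (deriv k) (l p) := by
    have := hk.fderiv_right (m := 1) (by norm_num)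
    exact ((this.clm_apply (contDiffAt_const (c := (1:ℝ)))).differentiableAt one_ne_zero)
  unfold D2
  rw [h1.fderiv_eq, fderiv_smul_const (f := l) ?_]
  · rw [fderiv_comp_lin l h2]; simp
  · exact h2.comp p l.differentiableAt

lemma sum_inner_sq (e : E3) : ∑ i, ⟪e, bv i⟫ ^ 2 = ‖e‖ ^ 2 := by
  rw [EuclideanSpace.real_norm_sq_eq]
  refine Finset.sum_congr rfl fun i _ => ?_
  rw [real_inner_comm, inner_bv]

lemma inner_mem_Icc {e σ : E3} (he : ‖e‖ = 1) (hσ : ‖σ‖ = 1) : ⟪e, σ⟫ ∈ Icc (-1:ℝ) 1 := by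
  have := abs_real_inner_le_norm e σ
  rw [he, hσ, mul_one, abs_le] at this
  exact this

lemma sphLap_zonal {e σ : E3} (he : ‖e‖ = 1) {k : ℝ → ℝ}
    (hk : ContDiffAt ℝ 2 k ⟪e, σ⟫) : sphLap (fun x => k ⟪e, x⟫) σ =
      (1 - ⟪e, σ⟫ ^ 2) * deriv (deriv k) ⟪e, σ⟫ - 2 * ⟪e, σ⟫ * deriv k ⟪e, σ⟫ := by
  have hD := D2_comp_lin (innerSL ℝ e) (p := σ) hk
  have hf := fderiv_comp_lin (innerSL ℝ e) (p := σ) (hk.differentiableAt two_ne_zero)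
  simp only [innerSL_apply_apply] at hD hf
  unfold sphLap
  rw [hf]
  simp only [hD]
  have : ∑ i, deriv (deriv k) ⟪e, σ⟫ * ⟪e, bv i⟫ * ⟪e, bv i⟫ = deriv (deriv k) ⟪e, σ⟫ := by
    simp only [mul_assoc, ← Finset.mul_sum]
    simp only [← pow_two, sum_inner_sq, he]; norm_num
  rw [this]
  simp
  ring

/-- The zonal form of the Laplacian of `S²` has zero mean. -/
lemma integral_zonal {e : E3} (he : ‖e‖ = 1) {k : ℝ → ℝ}
    (hk : ∀ z ∈ Icc (-1:ℝ) 1, ContDiffAt ℝ 2 k z) :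
    ∫ σ, ((1 - ⟪e, σ⟫ ^ 2) * deriv (deriv k) ⟪e, σ⟫ - 2 * ⟪e, σ⟫ * deriv k ⟪e, σ⟫) ∂muS = 0 := by
  rw [← integral_sphLap (g := fun x => k ⟪e, x⟫)]
  · refine integral_congr_ae (muS_ae.mono fun σ hσ => ?_)
    exact (sphLap_zonal he (hk _ (inner_mem_Icc he hσ))).symm
  · intro σ hσ
    exact (hk _ (inner_mem_Icc he (by simpa using hσ))).comp (f := fun x => innerSL ℝ e x) σ
      (innerSL ℝ e).contDiff.contDiffAt

lemma muS_integrable {f : E3 → ℝ} (hf : ∀ σ ∈ S2, ContinuousAt f σ) : Integrable f muS :=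
  slice_integrable S2_compact muS_compl hf

lemma muS_integrable_zonal (e : E3) {f : ℝ → ℝ} (hf : Continuous f) :
    Integrable (fun σ => f ⟪e, σ⟫) muS :=
  muS_integrable fun _ _ => (hf.comp (innerSL ℝ e).continuous).continuousAt

lemma moment_one {e : E3} (he : ‖e‖ = 1) : ∫ σ, ⟪e, σ⟫ ∂muS = 0 := by
  have := integral_zonal he (k := fun z => z) (fun z _ => contDiffAt_id)
  simp only [deriv_id'', deriv_const', mul_zero, zero_sub, mul_one] at this
  rw [integral_neg, integral_const_mul] at this
  linarith

/-- The recursion is `integral_zonal` for `k z = z ^ (n + 2)`. -/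
lemma moment_rec {e : E3} (he : ‖e‖ = 1) (n : ℕ) :
    (n + 1) * ∫ σ, ⟪e, σ⟫ ^ n ∂muS = (n + 3) * ∫ σ, ⟪e, σ⟫ ^ (n + 2) ∂muS := by
  have := integral_zonal he (k := fun z => z ^ (n + 2)) (fun z _ => contDiffAt_id.pow _)
  have d1 : deriv (fun z : ℝ => z ^ (n + 2)) = fun z : ℝ => ((n:ℝ) + 2) * z ^ (n + 1) := by
    funext z; simp
  have d2 : deriv (fun z : ℝ => ((n:ℝ) + 2) * z ^ (n + 1)) =
      fun z : ℝ => ((n:ℝ) + 2) * (((n:ℝ) + 1) * z ^ n) := by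
    funext z; simp
  rw [d1, d2] at this
  have h2 : ∀ σ : E3, (1 - ⟪e, σ⟫ ^ 2) * (((n:ℝ) + 2) * ((n + 1) * ⟪e, σ⟫ ^ n))
      - 2 * ⟪e, σ⟫ * ((n + 2) * ⟪e, σ⟫ ^ (n + 1))
      = (n + 2) * ((n + 1) * ⟪e, σ⟫ ^ n - (n + 3) * ⟪e, σ⟫ ^ (n + 2)) := by
    intro σ; ring
  simp only [h2] at this
  rw [integral_const_mul, integral_sub, integral_const_mul, integral_const_mul] at this
  · have h3 : (n:ℝ) + 2 ≠ 0 := by positivity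
    have := (mul_eq_zero.1 this).resolve_left h3
    linarith
  · exact (muS_integrable_zonal e (f := fun z => z ^ n) (by fun_prop)).const_mul _
  · exact (muS_integrable_zonal e (f := fun z => z ^ (n + 2)) (by fun_prop)).const_mul _

lemma moment {e : E3} (he : ‖e‖ = 1) (n : ℕ) :
    ∫ σ, ⟪e, σ⟫ ^ n ∂muS = 2 * π * ∫ z in (-1:ℝ)..1, z ^ n := by
  induction n using Nat.twoStepInduction with
  | zero =>
    simp [muS_univ]; ring
  | one =>
    simp [moment_one he]
  | more n ih _ =>
    have := moment_rec he n
    rw [ih] at this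
    rw [integral_pow] at this ⊢
    have h3 : (n:ℝ) + 3 ≠ 0 := by positivity
    have h4 : (n:ℝ) + 1 ≠ 0 := by positivity
    have h5 : ((-1:ℝ)) ^ (n + 2 + 1) = (-1) ^ (n + 1) := by ring
    rw [h5]
    push_cast
    rw [show (n:ℝ) + 2 + 1 = n + 3 by ring]
    field_simp at this ⊢
    simp only [one_pow] at this ⊢
    linarith

lemma zonal_poly {e : E3} (he : ‖e‖ = 1) (p : Polynomial ℝ) :
    ∫ σ, p.eval ⟪e, σ⟫ ∂muS = 2 * π * ∫ z in (-1:ℝ)..1, p.eval z := by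
  simp only [Polynomial.eval_eq_sum_range]
  rw [integral_finsetSum, intervalIntegral.integral_finsetSum, Finset.mul_sum]
  · refine Finset.sum_congr rfl fun i _ => ?_
    rw [integral_const_mul, intervalIntegral.integral_const_mul, moment he]; ring
  · intro i _; exact Continuous.intervalIntegrable (by fun_prop) _ _
  · intro i _; exact (muS_integrable_zonal e (f := fun z => p.coeff i * z ^ i) (by fun_prop))

/-- Archimedes' theorem: the height function on `S²` is uniformly distributed.  For polynomials
this follows from the recursion between the moments, and then by density. -/
lemma zonal_cont {e : E3} (he : ‖e‖ = 1) {f : ℝ → ℝ} (hf : Continuous f) :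
    ∫ σ, f ⟪e, σ⟫ ∂muS = 2 * π * ∫ z in (-1:ℝ)..1, f z := by
  rw [← sub_eq_zero, ← abs_eq_zero]
  refine le_antisymm (le_of_forall_pos_le_add fun ε hε => ?_) (abs_nonneg _)
  -- Weierstrass approximation reduces the claim to polynomials.
  obtain ⟨p, hp⟩ := exists_polynomial_near_of_continuousOn (-1) 1 f hf.continuousOn
    (ε / (8 * π)) (by positivity)
  have h1 : |∫ σ, f ⟪e, σ⟫ ∂muS - ∫ σ, p.eval ⟪e, σ⟫ ∂muS| ≤ ε / (8 * π) * (4 * π) := by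
    rw [← integral_sub (muS_integrable_zonal e hf) (muS_integrable_zonal e p.continuous),
      ← muS_univ, ← Real.norm_eq_abs]
    refine norm_integral_le_of_norm_le_const (muS_ae.mono fun σ hσ => ?_)
    rw [Real.norm_eq_abs, abs_sub_comm]
    exact (hp _ (inner_mem_Icc he hσ)).le
  have h2 : |(∫ z in (-1:ℝ)..1, f z) - ∫ z in (-1:ℝ)..1, p.eval z| ≤ ε / (8 * π) * |1 - (-1)| := by
    rw [← intervalIntegral.integral_sub (hf.intervalIntegrable _ _)
      (p.continuous.intervalIntegrable _ _), ← Real.norm_eq_abs]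
    refine intervalIntegral.norm_integral_le_of_norm_le_const fun z hz => ?_
    rw [Real.norm_eq_abs, abs_sub_comm]
    rw [Set.uIoc_of_le (by norm_num)] at hz
    exact (hp _ ⟨hz.1.le, hz.2⟩).le
  rw [zonal_poly he] at h1
  have h3 : ∫ σ, f ⟪e, σ⟫ ∂muS - 2 * π * ∫ z in (-1:ℝ)..1, f z =
    (∫ σ, f ⟪e, σ⟫ ∂muS - 2 * π * ∫ z in (-1:ℝ)..1, p.eval z)
    - 2 * π * ((∫ z in (-1:ℝ)..1, f z) - ∫ z in (-1:ℝ)..1, p.eval z) := by ring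
  rw [h3]
  refine (abs_sub _ _).trans ?_
  rw [abs_mul, abs_of_pos (show 0 < 2 * π by positivity)]
  have h4 : 2 * π * |(∫ z in (-1:ℝ)..1, f z) - ∫ z in (-1:ℝ)..1, p.eval z| ≤
    2 * π * (ε / (8 * π) * |1 - (-1)|) := by gcongr
  have h5 : ε / (8 * π) * (4 * π) = ε / 2 := by field_simp; ring
  have h6 : 2 * π * (ε / (8 * π) * |1 - (-1)|) = ε / 2 := by
    rw [show |(1:ℝ) - (-1)| = 2 by norm_num]; field_simp; ring
  linarith

/-- Archimedes' theorem as an identity of measures, which also covers unbounded zonal functions.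
-/
lemma zonal_measure {e : E3} (he : ‖e‖ = 1) :
    muS.map (fun σ => ⟪e, σ⟫) = ENNReal.ofReal (2 * π) • volume.restrict (Ioc (-1:ℝ) 1) := by
  have hm : Measurable (fun σ : E3 => ⟪e, σ⟫) := (innerSL ℝ e).continuous.measurable
  have : IsFiniteMeasure (ENNReal.ofReal (2 * π) • volume.restrict (Ioc (-1:ℝ) 1)) :=
    Measure.smul_finite _ ENNReal.ofReal_ne_top
  apply ext_of_forall_integral_eq_of_IsFiniteMeasure
  intro f
  rw [integral_map hm.aemeasurable f.continuous.aestronglyMeasurable, zonal_cont he f.continuous,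
    integral_smul_measure, intervalIntegral.integral_of_le (by norm_num),
    ENNReal.toReal_ofReal (by positivity), smul_eq_mul]

/-! ### Symbol bounds and smoothness of `M` -/

lemma clm_expand (L : E3 →L[ℝ] ℝ) : L = ∑ i, L (bv i) • innerSL ℝ (bv i) := by
  ext x
  conv_lhs => rw [E3_expand x]
  simp [Fin.sum_univ_three, inner_bv, mul_comm]

lemma clm_norm_le (L : E3 →L[ℝ] ℝ) : ‖L‖ ≤ ∑ i, |L (bv i)| := by
  conv_lhs => rw [clm_expand L]
  refine (norm_sum_le _ _).trans (Finset.sum_le_sum fun i _ => ?_)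
  rw [norm_smul, innerSL_apply_norm, bv_norm, mul_one, Real.norm_eq_abs]

/-- Homogeneity of degree `-k`. -/
def HomDeg (k : ℕ) (f : E3 → ℝ) : Prop := ∀ c : ℝ, 0 < c → ∀ x, f (c • x) = (c ^ k)⁻¹ * f x

lemma HomDeg.pd {k : ℕ} {f : E3 → ℝ} (hf : HomDeg k f) (i : Fin 3) : HomDeg (k + 1) (pd i f) := by
  intro c hc x
  have h1 : (fun x => f (c • x)) = (c ^ k)⁻¹ • f := by
    funext y; simp [hf c hc y]
  have h2 := fderiv_comp_smul (𝕜 := ℝ) (f := f) (x := x) c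
  rw [h1, fderiv_const_smul_field] at h2
  have h3 := congrArg (fun L : E3 →L[ℝ] ℝ => L (bv i)) h2
  simp only [Pi.smul_apply, _root_.smul_apply, smul_eq_mul] at h3
  unfold _root_.pd
  have : c ≠ 0 := hc.ne'
  have h4 : fderiv ℝ f (c • x) (bv i) = c⁻¹ * (c * fderiv ℝ f (c • x) (bv i)) := by
    field_simp
  rw [h4, ← h3, pow_succ, mul_inv]; ring

lemma HomogZero.homDeg {f : E3 → ℝ} (hf : HomogZero f) : HomDeg 0 f := by
  intro c hc x; simp [hf c hc x]

lemma HomDeg.pdMulti {k : ℕ} {f : E3 → ℝ} (hf : HomDeg k f) (α : List (Fin 3)) :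
    HomDeg (k + α.length) (pdMulti α f) := by
  induction α with
  | nil => exact hf
  | cons i l ih => exact ih.pd i

lemma HomDeg.eq {k : ℕ} {f : E3 → ℝ} (hf : HomDeg k f) {x : E3} (hx : x ≠ 0) :
    f x = (‖x‖ ^ k)⁻¹ * f (‖x‖⁻¹ • x) := by
  conv_lhs => rw [← smul_inv_smul₀ (norm_ne_zero_iff.2 hx) x]
  exact hf _ (norm_pos_iff.2 hx) _

lemma unit_norm {x : E3} (hx : x ≠ 0) : ‖‖x‖⁻¹ • x‖ = 1 := by
  rw [norm_smul, norm_inv, norm_norm, inv_mul_cancel₀ (norm_ne_zero_iff.2 hx)]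

lemma jb_pos (q : ℝ) : 0 < jb q := Real.sqrt_pos.2 (by positivity)

lemma jb_sq (q : ℝ) : jb q ^ 2 = 1 + q ^ 2 := Real.sq_sqrt (by positivity)

lemma one_le_jb (q : ℝ) : 1 ≤ jb q := by
  rw [jb, Real.one_le_sqrt]; nlinarith [sq_nonneg q]

lemma abs_le_jb (q : ℝ) : |q| ≤ jb q := by
  rw [jb]; apply Real.abs_le_sqrt; linarith

lemma jb_rpow_le {κ : ℝ} (hκ : 2 ≤ κ) (q : ℝ) : jb q ^ (-κ) ≤ (1 + q ^ 2)⁻¹ := by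
  rw [← jb_sq, ← Real.rpow_natCast, ← Real.rpow_neg (jb_pos q).le]
  exact Real.rpow_le_rpow_of_exponent_le (one_le_jb q) (by simpa using hκ)

/-- The bounds on angular derivatives contained in symbol decay of order at least two, in
homogeneous form on all of `ℝ³ ∖ {0}`. -/
lemma SymbolDecay.bound {κ : ℝ} (hκ : 2 ≤ κ) {m : ℝ → E3 → ℝ} (hh : ∀ q, HomogZero (m q))
    (hm : SymbolDecay κ m) (α : List (Fin 3)) : ∃ C : ℝ, 0 ≤ C ∧ ∀ (q : ℝ) (x : E3), x ≠ 0 →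
    |pdMulti α (m q) x| ≤ C * (‖x‖ ^ α.length)⁻¹ * (1 + q ^ 2)⁻¹ := by
  obtain ⟨C, hC⟩ := hm 0 α
  refine ⟨|C|, abs_nonneg _, fun q x hx => ?_⟩
  have h1 := ((hh q).homDeg.pdMulti α).eq hx
  have h2 := hC q _ (unit_norm hx)
  simp only [qIter, zero_add] at h1 h2
  have h3 : (0:ℝ) ≤ (‖x‖ ^ α.length)⁻¹ := by positivity
  rw [h1, abs_mul, abs_of_nonneg h3, mul_comm |C|, mul_assoc]
  refine mul_le_mul_of_nonneg_left (h2.trans ?_) h3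
  have h4 := jb_rpow_le hκ q
  have h5 : 0 ≤ jb q ^ (-κ) := (Real.rpow_pos_of_pos (jb_pos q) _).le
  calc C * jb q ^ (-κ) ≤ |C| * jb q ^ (-κ) := by gcongr; exact le_abs_self C
    _ ≤ _ := by gcongr

lemma pdMulti_contDiffAt {m : ℝ → E3 → ℝ} (hm : SmoothQSphere m) (α : List (Fin 3)) {z : E3 × ℝ}
    (hz : z.1 ≠ 0) : ContDiffAt ℝ (⊤ : ℕ∞) (fun w : E3 × ℝ => pdMulti α (m w.2) w.1) z := by
  induction α generalizing z with
  | nil =>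
    have ho : IsOpen {p : ℝ × E3 | p.2 ≠ 0} := isOpen_ne_fun continuous_snd continuous_const
    exact (hm.2.contDiffAt (ho.mem_nhds (x := (z.2, z.1)) hz)).comp
      (f := fun w : E3 × ℝ => (w.2, w.1)) z (contDiffAt_snd.prodMk contDiffAt_fst)
  | cons i l ih =>
    exact (pfd_contDiffAt (n := (⊤ : ℕ∞)) (ih hz)).clm_apply contDiffAt_const

lemma integrable_bound {f : ℝ → ℝ} (hf : Continuous f) {C : ℝ}
    (h : ∀ q, |f q| ≤ C * (1 + q ^ 2)⁻¹) : Integrable f :=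
  (integrable_inv_one_add_sq.const_mul C).mono' hf.aestronglyMeasurable
    (Eventually.of_forall h)

lemma pdMulti_cont_q {m : ℝ → E3 → ℝ} (hm : SmoothQSphere m) (α : List (Fin 3)) {x : E3}
    (hx : x ≠ 0) : Continuous (fun q => pdMulti α (m q) x) := by
  rw [continuous_iff_continuousAt]
  intro q
  exact (pdMulti_contDiffAt hm α (z := (x, q)) hx).continuousAt.comp
    (f := fun q => (x, q)) (by fun_prop)

/-- Angular derivatives pass under `∫ dq`, since symbol decay provides the dominating function `C
(1 + q²)⁻¹`. -/
lemma int_hasFDerivAt {κ : ℝ} (hκ : 2 ≤ κ) {m : ℝ → E3 → ℝ} (hm : SmoothQSphere m)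
    (hd : SymbolDecay κ m) (α : List (Fin 3)) {x : E3} (hx : x ≠ 0) :
    HasFDerivAt (fun x => ∫ q, pdMulti α (m q) x)
      (∑ i, (∫ q, pdMulti (i :: α) (m q) x) • innerSL ℝ (bv i)) x := by
  have hb := hd.bound hκ hm.1
  choose C hC0 hC using hb
  have hxp : 0 < ‖x‖ := norm_pos_iff.2 hx
  have hball : ∀ y ∈ ball x (‖x‖ / 2), ‖x‖ / 2 ≤ ‖y‖ := by
    intro y hy
    rw [mem_ball, dist_eq_norm] at hy
    have := norm_sub_norm_le x y
    rw [norm_sub_rev] at this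
    linarith
  have hne : ∀ y ∈ ball x (‖x‖ / 2), y ≠ 0 := fun y hy =>
    norm_pos_iff.1 (lt_of_lt_of_le (by positivity) (hball y hy))
  have key := hasFDerivAt_integral_of_dominated_of_fderiv_le (𝕜 := ℝ) (μ := volume)
    (F := fun x q => pdMulti α (m q) x)
    (F' := fun x q => fderiv ℝ (pdMulti α (m q)) x)
    (bound := fun q => ∑ i, C (i :: α) * ((‖x‖ / 2) ^ (i :: α).length)⁻¹ * (1 + q ^ 2)⁻¹)
    (x₀ := x) (s := ball x (‖x‖ / 2)) (ball_mem_nhds _ (by positivity)) ?_ ?_ ?_ ?_ ?_ ?_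
  · refine key.congr_fderiv ?_
    have hi : ∀ q, fderiv ℝ (pdMulti α (m q)) x =
        ∑ i, pdMulti (i :: α) (m q) x • innerSL ℝ (bv i) := fun q => clm_expand _
    simp only [hi]
    rw [integral_finsetSum]
    · exact Finset.sum_congr rfl fun i _ => integral_smul_const _ _
    · intro i _
      exact (integrable_bound (pdMulti_cont_q hm _ hx) (fun q => hC (i :: α) q x hx)).smul_const _
  · filter_upwards [ball_mem_nhds x (show 0 < ‖x‖ / 2 by positivity)] with y hy
    exact (pdMulti_cont_q hm α (hne y hy)).aestronglyMeasurable
  · exact integrable_bound (pdMulti_cont_q hm _ hx) (fun q => hC α q x hx)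
  · have hi : ∀ q, fderiv ℝ (pdMulti α (m q)) x =
        ∑ i, pdMulti (i :: α) (m q) x • innerSL ℝ (bv i) := fun q => clm_expand _
    simp only [hi]
    exact Continuous.aestronglyMeasurable (continuous_finsetSum _ fun i _ =>
      (pdMulti_cont_q hm _ hx).smul continuous_const)
  · refine Eventually.of_forall fun q y hy => (clm_norm_le _).trans
      (Finset.sum_le_sum fun i _ => (hC (i :: α) q y (hne y hy)).trans ?_)
    have h1 := hball y hy
    have h2 := hC0 (i :: α)
    gcongr
  · exact integrable_finsetSum _ fun i _ => integrable_inv_one_add_sq.const_mul _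
  · refine Eventually.of_forall fun q y hy => ?_
    have := (pdMulti_contDiffAt hm α (z := (y, q)) (hne y hy)).comp
      (f := fun y => (y, q)) y (contDiffAt_id.prodMk contDiffAt_const)
    exact (this.differentiableAt (by simp)).hasFDerivAt

lemma int_contDiffAt {κ : ℝ} (hκ : 2 ≤ κ) {m : ℝ → E3 → ℝ} (hm : SmoothQSphere m)
    (hd : SymbolDecay κ m) (n : ℕ) : ∀ (α : List (Fin 3)) {x : E3}, x ≠ 0 →
    ContDiffAt ℝ n (fun x => ∫ q, pdMulti α (m q) x) x := by
  have ho : IsOpen {x : E3 | x ≠ 0} := isOpen_ne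
  induction n with
  | zero =>
    intro α x hx
    rw [Nat.cast_zero, contDiffAt_zero]
    exact ⟨{x | x ≠ 0}, ho.mem_nhds hx, fun y hy =>
      (int_hasFDerivAt hκ hm hd α hy).continuousAt.continuousWithinAt⟩
  | succ n ih =>
    intro α x hx
    rw [Nat.cast_succ, contDiffAt_succ_iff_hasFDerivAt]
    refine ⟨fun x => ∑ i, (∫ q, pdMulti (i :: α) (m q) x) • innerSL ℝ (bv i),
      ⟨{x | x ≠ 0}, ho.mem_nhds hx, fun y hy => int_hasFDerivAt hκ hm hd α hy⟩, ?_⟩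
    exact ContDiffAt.sum fun i _ => (ih (i :: α) hx).smul contDiffAt_const

/-- The integrated source `M(σ) = ∫ m(q, σ) dq` is a smooth function on the sphere. -/
lemma M_smooth {κ : ℝ} (hκ : 2 ≤ κ) {m : ℝ → E3 → ℝ} (hm : SmoothQSphere m)
    (hd : SymbolDecay κ m) {M : E3 → ℝ} (hM : ∀ σ : E3, M σ = ∫ q : ℝ, m q σ) :
    SmoothOnSphere M := by
  constructor
  · intro c hc x
    rw [hM, hM]
    exact integral_congr_ae (Eventually.of_forall fun q => hm.1 q c hc x)
  · intro x hx
    refine ContDiffAt.contDiffWithinAt ?_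
    rw [contDiffAt_infty]
    intro n
    have := int_contDiffAt hκ hm hd n [] (x := x) hx
    rwa [show M = fun x => ∫ q, pdMulti [] (m q) x from funext hM]

/-! ### Uniqueness for the Poisson equation -/

section Calc

variable {P : Type} [NormedAddCommGroup P] [NormedSpace ℝ P]

lemma fderiv_differentiableAt {u : P → ℝ} {p : P} (hu : ContDiffAt ℝ 2 u p) :
    DifferentiableAt ℝ (fderiv ℝ u) p :=
  (hu.fderiv_right (m := 1) (by norm_num)).differentiableAt one_ne_zero

lemma D2_eq_fderiv {u : P → ℝ} {p : P} (hu : ContDiffAt ℝ 2 u p) (v w : P) :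
    fderiv ℝ (fun x => fderiv ℝ u x w) p v = D2 u p v w := by
  rw [fderiv_clm_apply (fderiv_differentiableAt hu) (differentiableAt_const w)]
  simp [D2]

lemma line_hasDerivAt (p v : P) (s : ℝ) : HasDerivAt (fun s : ℝ => p + s • v) v s := by
  simpa using ((hasDerivAt_id s).smul_const v).const_add p

lemma deriv_line {u : P → ℝ} {p v : P} {s : ℝ} (hu : DifferentiableAt ℝ u (p + s • v)) :
    deriv (fun s : ℝ => u (p + s • v)) s = fderiv ℝ u (p + s • v) v :=
  (hu.hasFDerivAt.comp_hasDerivAt s (line_hasDerivAt p v s)).deriv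

lemma deriv2_line {u : P → ℝ} {p : P} (hu : ContDiffAt ℝ 2 u p) (v : P) :
    deriv (deriv (fun s : ℝ => u (p + s • v))) 0 = D2 u p v v := by
  have hc : ContinuousAt (fun s : ℝ => p + s • v) 0 := by fun_prop
  have h1 : deriv (fun s : ℝ => u (p + s • v)) =ᶠ[𝓝 0] fun s => fderiv ℝ u (p + s • v) v := by
    have h2 : ∀ᶠ x in 𝓝 (p + (0:ℝ) • v), ContDiffAt ℝ 2 u x := by
      simpa using hu.eventually (by simp)
    filter_upwards [hc.eventually h2] with s hs
    exact deriv_line (hs.differentiableAt two_ne_zero)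
  have h3 : DifferentiableAt ℝ (fun x => fderiv ℝ u x v) (p + (0:ℝ) • v) := by
    rw [zero_smul, add_zero]
    exact (fderiv_differentiableAt hu).clm_apply (differentiableAt_const v)
  rw [h1.deriv_eq, deriv_line (u := fun x => fderiv ℝ u x v) h3, zero_smul, add_zero,
    D2_eq_fderiv hu]

lemma D2_congr {u u' : P → ℝ} {p : P} (h : u =ᶠ[𝓝 p] u') (v w : P) : D2 u p v w = D2 u' p v w := by
  unfold D2
  rw [h.fderiv.fderiv_eq]

lemma D2_add {u u' : P → ℝ} {p : P} (hu : ContDiffAt ℝ 2 u p) (hu' : ContDiffAt ℝ 2 u' p)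
    (v w : P) : D2 (fun x => u x + u' x) p v w = D2 u p v w + D2 u' p v w := by
  have h1 : fderiv ℝ (fun x => u x + u' x) =ᶠ[𝓝 p] fun x => fderiv ℝ u x + fderiv ℝ u' x := by
    filter_upwards [hu.eventually (by simp), hu'.eventually (by simp)] with x hx hx'
    exact fderiv_fun_add (hx.differentiableAt two_ne_zero) (hx'.differentiableAt two_ne_zero)
  unfold D2
  rw [h1.fderiv_eq, fderiv_fun_add (fderiv_differentiableAt hu) (fderiv_differentiableAt hu')]
  rfl

lemma D2_const_mul {u : P → ℝ} {p : P} (hu : ContDiffAt ℝ 2 u p) (c : ℝ)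
    (v w : P) : D2 (fun x => c * u x) p v w = c * D2 u p v w := by
  have h1 : fderiv ℝ (fun x => c * u x) =ᶠ[𝓝 p] fun x => c • fderiv ℝ u x := by
    filter_upwards [hu.eventually (by simp)] with x hx
    exact fderiv_const_mul (hx.differentiableAt two_ne_zero) c
  unfold D2
  rw [h1.fderiv_eq, fderiv_fun_const_smul (fderiv_differentiableAt hu)]
  rfl

lemma D2_sq {u : P → ℝ} {p : P} (hu : ContDiffAt ℝ 2 u p) (v : P) :
    D2 (fun x => u x * u x) p v v = 2 * u p * D2 u p v v + 2 * (fderiv ℝ u p v) ^ 2 := by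
  have h1 : fderiv ℝ (fun x => u x * u x) =ᶠ[𝓝 p] fun x => (2 * u x) • fderiv ℝ u x := by
    filter_upwards [hu.eventually (by simp)] with x hx
    have hx' := hx.differentiableAt two_ne_zero
    rw [fderiv_fun_mul hx' hx']; module
  have hd := hu.differentiableAt two_ne_zero
  unfold D2
  rw [h1.fderiv_eq, fderiv_fun_smul (hd.const_mul 2) (fderiv_differentiableAt hu),
    fderiv_const_mul hd]
  simp
  ring

end Calc

/-- The Euclidean Laplacian expressed through second derivatives. -/
def lapD (u : E3 → ℝ) (x : E3) : ℝ := ∑ i, D2 u x (bv i) (bv i)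

lemma lap3_eq {u : E3 → ℝ} {x : E3} (hu : ContDiffAt ℝ 2 u x) : lap3 u x = lapD u x :=
  Finset.sum_congr rfl fun i _ => D2_eq_fderiv hu (bv i) (bv i)

lemma SmoothOnSphere.contDiffAt {f : E3 → ℝ} (hf : SmoothOnSphere f) {x : E3} (hx : x ≠ 0) :
    ContDiffAt ℝ (⊤ : ℕ∞) f x :=
  hf.2.contDiffAt (isOpen_ne.mem_nhds hx)

lemma ne_zero_of_norm_one {x : E3} (hx : ‖x‖ = 1) : x ≠ 0 :=
  norm_ne_zero_iff.1 (by rw [hx]; exact one_ne_zero)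

lemma ContDiffAt.two {P : Type} [NormedAddCommGroup P] [NormedSpace ℝ P] {f : P → ℝ} {x : P}
    (h : ContDiffAt ℝ (⊤ : ℕ∞) f x) : ContDiffAt ℝ 2 f x :=
  contDiffAt_infty.1 h 2

lemma HomogZero.radial {f : E3 → ℝ} (hf : HomogZero f) {x : E3} (hd : DifferentiableAt ℝ f x) :
    fderiv ℝ f x x = 0 := by
  have h1 : deriv (fun s : ℝ => f (x + s • x)) 0 = fderiv ℝ f (x + (0:ℝ) • x) x :=
    deriv_line (by simpa using hd)
  have h2 : (fun s : ℝ => f (x + s • x)) =ᶠ[𝓝 0] fun _ => f x := by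
    filter_upwards [Ioi_mem_nhds (show (-1:ℝ) < 0 by norm_num)] with s hs
    rw [show x + s • x = (1 + s) • x by module]
    exact hf _ (by have := mem_Ioi.1 hs; linarith) _
  rw [h2.deriv_eq] at h1
  simpa using h1.symm

lemma HomogZero.radial2 {f : E3 → ℝ} (hf : HomogZero f) {x : E3} (hd : ContDiffAt ℝ 2 f x) :
    D2 f x x x = 0 := by
  have h1 : (fun y => fderiv ℝ f y y) =ᶠ[𝓝 x] fun _ => 0 := by
    filter_upwards [hd.eventually (by simp)] with y hy
    exact hf.radial (hy.differentiableAt two_ne_zero)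
  have h2 := h1.fderiv_eq (𝕜 := ℝ)
  rw [fderiv_clm_apply (fderiv_differentiableAt hd) differentiableAt_fun_id] at h2
  have h3 := congrArg (fun L : E3 →L[ℝ] ℝ => L x) h2
  simpa [hf.radial (hd.differentiableAt two_ne_zero), D2] using h3

lemma HomogZero.sphLap_eq {f : E3 → ℝ} (hf : HomogZero f) {x : E3} (hd : ContDiffAt ℝ 2 f x) :
    sphLap f x = lapD f x := by
  unfold sphLap lapD
  rw [hf.radial (hd.differentiableAt two_ne_zero), hf.radial2 hd]; ring

/-- A harmonic function on `S²` is constant: integrate the Laplacian of its square. -/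
lemma harmonic_const {u : E3 → ℝ} (hu : SmoothOnSphere u)
    (h : ∀ σ : E3, ‖σ‖ = 1 → lap3 u σ = 0) : ∃ c, ∀ σ : E3, σ ≠ 0 → u σ = c := by
  have hcd : ∀ σ ∈ S2, ContDiffAt ℝ 2 u σ := fun σ hσ =>
    (hu.contDiffAt (ne_zero_of_norm_one (by simpa using hσ))).two
  have hsq : HomogZero (fun x => u x * u x) := fun c hc x => by simp only [hu.1 c hc x]
  have h1 := integral_sphLap (g := fun x => u x * u x) fun σ hσ => (hcd σ hσ).mul (hcd σ hσ)
  -- For harmonic `u` the Laplacian of `u²` is `2 |∇u|²`, whose integral therefore vanishes.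
  have h2 : ∀ σ, ‖σ‖ = 1 → sphLap (fun x => u x * u x) σ =
      ∑ i, 2 * (fderiv ℝ u σ (bv i)) ^ 2 := by
    intro σ hσ
    have hσ' := hcd σ (by simpa using hσ)
    rw [hsq.sphLap_eq (hσ'.mul hσ')]
    have h3 := h σ hσ
    rw [lap3_eq hσ'] at h3
    unfold lapD at h3 ⊢
    simp only [D2_sq hσ']
    rw [Finset.sum_add_distrib, ← Finset.mul_sum, h3]; ring
  rw [integral_congr_ae (muS_ae.mono h2)] at h1
  have h4 := muS_zero_of_integral_zero (f := fun σ => ∑ i, 2 * (fderiv ℝ u σ (bv i)) ^ 2) ?_ ?_ h1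
  · have h5 : ∀ σ, ‖σ‖ = 1 → ∀ i, fderiv ℝ u σ (bv i) = 0 := by
      intro σ hσ i
      have := (Finset.sum_eq_zero_iff_of_nonneg fun i _ => by positivity).1 (h4 σ hσ) i
        (Finset.mem_univ i)
      simpa using this
    -- Homogeneity propagates the vanishing of the gradient from the sphere to `ℝ³ ∖ {0}`.
    have h6 : ∀ x ∈ {x : E3 | x ≠ 0}, fderiv ℝ u x = 0 := by
      intro x hx
      rw [clm_expand (fderiv ℝ u x)]
      refine Finset.sum_eq_zero fun i _ => ?_
      have h7 : fderiv ℝ u x (bv i) = _ := (hu.1.homDeg.pd i).eq hx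
      unfold pd at h7
      rw [h7, h5 _ (unit_norm hx)]; simp
    have hconn : IsPreconnected {x : E3 | x ≠ 0} := by
      have := isConnected_compl_singleton_of_one_lt_rank (E := E3) (by
        rw [← Module.finrank_eq_rank]; simp) 0
      exact this.isPreconnected
    exact IsOpen.exists_is_const_of_fderiv_eq_zero isOpen_ne hconn
      (fun x hx => ((hu.contDiffAt hx).differentiableAt (by simp)).differentiableWithinAt) h6
  · intro σ hσ
    have h8 : ∀ i, ContinuousAt (fun σ => fderiv ℝ u σ (bv i)) σ := fun i =>
      ((fderiv_differentiableAt (hcd σ hσ)).clm_apply (differentiableAt_const _)).continuousAt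
    exact ContinuousAt.continuousWithinAt
      (tendsto_finsetSum _ fun i _ => ((h8 i).pow 2).const_mul 2)
  · intro σ _
    positivity

lemma SmoothOnSphere.muS_integrable {f : E3 → ℝ} (hf : SmoothOnSphere f) : Integrable f muS :=
  _root_.muS_integrable fun σ hσ =>
    (hf.contDiffAt (ne_zero_of_norm_one (by simpa using hσ))).continuousAt

/-- Two solutions differ by a harmonic function, which is constant and has zero mean. -/
lemma poisson_unique {Q Q' g : E3 → ℝ} (hQ : SmoothOnSphere Q) (hQ' : SmoothOnSphere Q')
    (h0 : sphereIntegral Q = 0) (h0' : sphereIntegral Q' = 0)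
    (h : ∀ ω : E3, ‖ω‖ = 1 → lap3 Q ω = g ω) (h' : ∀ ω : E3, ‖ω‖ = 1 → lap3 Q' ω = g ω) :
    ∀ ω : E3, ‖ω‖ = 1 → Q' ω = Q ω := by
  have hneg : SmoothOnSphere (fun x => Q' x + (-1) * Q x) := by
    refine ⟨fun c hc x => by simp only [hQ.1 c hc x, hQ'.1 c hc x], ?_⟩
    exact hQ'.2.add (contDiffOn_const.mul hQ.2)
  obtain ⟨c, hc⟩ := harmonic_const hneg fun σ hσ => by
    have hσ0 := ne_zero_of_norm_one hσ
    have d := (hQ.contDiffAt hσ0).two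
    have d' := (hQ'.contDiffAt hσ0).two
    rw [lap3_eq (hneg.contDiffAt hσ0).two]
    have e := h σ hσ
    have e' := h' σ hσ
    rw [lap3_eq d] at e
    rw [lap3_eq d'] at e'
    unfold lapD at *
    simp only [D2_add d' (contDiffAt_const.mul d), D2_const_mul d]
    rw [Finset.sum_add_distrib, ← Finset.mul_sum, e, e']; ring
  have h1 : ∫ σ, (Q' σ + (-1) * Q σ) ∂muS = 0 := by
    rw [integral_add hQ'.muS_integrable (hQ.muS_integrable.const_mul _), integral_const_mul,
      ← sphereIntegral_eq, ← sphereIntegral_eq, h0, h0']; simp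
  rw [integral_congr_ae (muS_ae.mono fun σ hσ => hc σ (ne_zero_of_norm_one hσ)), integral_const,
    muS_univ, smul_eq_mul] at h1
  have hc0 : c = 0 := by
    have : 4 * π ≠ 0 := by positivity
    exact (mul_eq_zero.1 h1).resolve_left this
  intro ω hω
  have := hc ω (ne_zero_of_norm_one hω)
  rw [hc0] at this
  linarith

/-! ### Zonal convolutions -/

lemma line_norm_hasDerivAt {e v : E3} (he : ‖e‖ = 1) {s : ℝ} (hs : e + s • v ≠ 0) :
    HasDerivAt (fun s : ℝ => ‖e + s • v‖) ((⟪e, v⟫ + s * ‖v‖ ^ 2) / ‖e + s • v‖) s := by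
  have hsq : ∀ s : ℝ, ‖e + s • v‖ = √(1 + 2 * s * ⟪e, v⟫ + s ^ 2 * ‖v‖ ^ 2) := by
    intro s
    rw [← Real.sqrt_sq (norm_nonneg (e + s • v)), norm_add_sq_real, he, norm_smul,
      inner_smul_right, mul_pow, Real.norm_eq_abs, sq_abs]
    congr 1; ring
  have hpos : 0 < ‖e + s • v‖ := norm_pos_iff.2 hs
  have h1 : HasDerivAt (fun s : ℝ => 1 + 2 * s * ⟪e, v⟫ + s ^ 2 * ‖v‖ ^ 2)
      (2 * ⟪e, v⟫ + 2 * s * ‖v‖ ^ 2) s := by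
    have a := ((hasDerivAt_id s).const_mul 2).mul_const ⟪e, v⟫
    have b := ((hasDerivAt_id s).fun_pow 2).mul_const (‖v‖ ^ 2)
    refine ((a.const_add 1).fun_add b).congr_deriv ?_
    simp
  have h2 := h1.sqrt (by
    intro h0
    have := hsq s
    rw [h0, Real.sqrt_zero] at this
    exact hpos.ne' this)
  rw [← hsq s] at h2
  simp only [← hsq] at h2
  refine h2.congr_deriv ?_
  field_simp

/-- The Laplacian on `S²` of a zonal function, as the Euclidean Laplacian of the degree-zero
homogeneous extension. -/
lemma lapD_zonal {e σ : E3} (he : ‖e‖ = 1) (hσ : ‖σ‖ = 1) {k : ℝ → ℝ}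
    (hk : ContDiffAt ℝ 2 k ⟪e, σ⟫) : lapD (fun x => k ⟪‖x‖⁻¹ • x, σ⟫) e =
      (1 - ⟪e, σ⟫ ^ 2) * deriv (deriv k) ⟪e, σ⟫ - 2 * ⟪e, σ⟫ * deriv k ⟪e, σ⟫ := by
  have he0 := ne_zero_of_norm_one he
  set z := ⟪e, σ⟫ with hz
  have hg : ContDiffAt ℝ 2 (fun x : E3 => ⟪‖x‖⁻¹ • x, σ⟫) e :=
    ((((contDiffAt_norm ℝ he0).inv (norm_ne_zero_iff.2 he0)).smul contDiffAt_id).inner ℝ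
      contDiffAt_const)
  have hge : ⟪‖e‖⁻¹ • e, σ⟫ = z := by rw [he, inv_one, one_smul]
  have hu : ContDiffAt ℝ 2 (fun x => k ⟪‖x‖⁻¹ • x, σ⟫) e :=
    ContDiffAt.comp (g := k) e (by simpa only [hge] using hk) hg
  have key : ∀ v : E3, ‖v‖ = 1 → D2 (fun x => k ⟪‖x‖⁻¹ • x, σ⟫) e v v =
      deriv (deriv k) z * (⟪σ, v⟫ - z * ⟪e, v⟫) ^ 2
      + deriv k z * (z * (3 * ⟪e, v⟫ ^ 2 - 1) - 2 * (⟪σ, v⟫ * ⟪e, v⟫)) := by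
    intro v hv
    rw [← deriv2_line hu v]
    set a := ⟪σ, v⟫
    set b := ⟪e, v⟫ with hb
    let ρ : ℝ → ℝ := fun s => ‖e + s • v‖
    let G : ℝ → ℝ := fun s => (z + s * a) / ρ s
    have hG : (fun s : ℝ => k ⟪‖e + s • v‖⁻¹ • (e + s • v), σ⟫) = fun s => k (G s) := by
      funext s
      simp only [G, ρ, a]
      rw [real_inner_smul_left, inner_add_left, real_inner_smul_left, real_inner_comm σ v, ← hz]
      congr 1; ring
    have hρ0 : ρ 0 = 1 := by simp [ρ, he]
    have hρc : ContinuousAt ρ 0 := by simp only [ρ]; fun_prop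
    have hne : ∀ᶠ s in 𝓝 (0:ℝ), ρ s ≠ 0 := hρc.eventually_ne (by rw [hρ0]; exact one_ne_zero)
    have hρ' : ∀ s, ρ s ≠ 0 → HasDerivAt ρ ((b + s) / ρ s) s := by
      intro s hs
      have := line_norm_hasDerivAt (v := v) he (norm_ne_zero_iff.1 hs)
      simpa [hv] using this
    have hG' : ∀ s, ρ s ≠ 0 → HasDerivAt G (a / ρ s - (z + s * a) * (b + s) / ρ s ^ 3) s := by
      intro s hs
      have h1 : HasDerivAt (fun s : ℝ => z + s * a) a s := by
        simpa using ((hasDerivAt_id s).mul_const a).const_add z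
      refine (h1.fun_div (hρ' s hs) hs).congr_deriv ?_
      field_simp
    have hG0 : G 0 = z := by simp [G, hρ0]
    have hGc : ContinuousAt G 0 := (hG' 0 hne.self_of_nhds).continuousAt
    have hkd : ∀ᶠ s in 𝓝 (0:ℝ), DifferentiableAt ℝ k (G s) := by
      have : ∀ᶠ y in 𝓝 (G 0), ContDiffAt ℝ 2 k y := by rw [hG0]; exact hk.eventually (by simp)
      filter_upwards [hGc.eventually this] with s hs using hs.differentiableAt two_ne_zero
    have h1 : deriv (fun s => k (G s)) =ᶠ[𝓝 0]
        fun s => deriv k (G s) * (a / ρ s - (z + s * a) * (b + s) / ρ s ^ 3) := by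
      filter_upwards [hne, hkd] with s hs hs'
      exact (hs'.hasDerivAt.comp s (hG' s hs)).deriv
    have h2 : HasDerivAt (deriv k) (deriv (deriv k) z) (G 0) := by
      rw [hG0]
      have := hk.fderiv_right (m := 1) (by norm_num)
      exact ((this.clm_apply (contDiffAt_const (c := (1:ℝ)))).differentiableAt
        one_ne_zero).hasDerivAt
    have h0 : ρ 0 ≠ 0 := hne.self_of_nhds
    have h3 : HasDerivAt (fun s => a / ρ s - (z + s * a) * (b + s) / ρ s ^ 3)
        (z * (3 * b ^ 2 - 1) - 2 * (a * b)) 0 := by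
      have e1 : HasDerivAt (fun s : ℝ => (z + s * a) * (b + s)) (a * b + z) 0 := by
        refine ((((hasDerivAt_id (0:ℝ)).mul_const a).const_add z).fun_mul
          ((hasDerivAt_id (0:ℝ)).const_add b)).congr_deriv ?_
        simp
      refine (((hasDerivAt_const (0:ℝ) a).fun_div (hρ' 0 h0) h0).fun_sub
        (e1.fun_div ((hρ' 0 h0).fun_pow 3) (pow_ne_zero 3 h0))).congr_deriv ?_
      simp [hρ0]; ring
    have h4 : HasDerivAt (fun s => deriv k (G s)) (deriv (deriv k) z *
        (a / ρ 0 - (z + 0 * a) * (b + 0) / ρ 0 ^ 3)) 0 := h2.comp (0:ℝ) (hG' 0 h0)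
    rw [hG, h1.deriv_eq, (h4.fun_mul h3).deriv]
    simp [hG0, hρ0]; ring
  unfold lapD
  rw [Finset.sum_congr rfl fun i _ => key (bv i) (bv_norm i)]
  have s1 := sum_inner_sq e
  have s2 := sum_inner_sq σ
  have s3 : ∑ i, ⟪σ, bv i⟫ * ⟪e, bv i⟫ = z := by
    rw [hz, real_inner_comm, PiLp.inner_apply]
    refine Finset.sum_congr rfl fun i _ => ?_
    rw [real_inner_comm, inner_bv, real_inner_comm, inner_bv]
    simp [mul_comm]
  rw [he] at s1
  rw [hσ] at s2
  rw [Fin.sum_univ_three] at s1 s2 s3 ⊢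
  linear_combination (deriv (deriv k) z * z ^ 2 + 3 * deriv k z * z) * s1
    + deriv (deriv k) z * s2 + (- 2 * z * deriv (deriv k) z - 2 * deriv k z) * s3

/-- Convolution of `M` with a zonal kernel, extended to be homogeneous of degree zero. -/
def zconv (k : ℝ → ℝ) (M : E3 → ℝ) (x : E3) : ℝ := ∫ σ, k ⟪‖x‖⁻¹ • x, σ⟫ * M σ ∂muS

/-- The half-turn about the axis bisecting `e` and `x / ‖x‖`; it takes `e` to `x / ‖x‖`. -/
def halfTurn (e x σ : E3) : E3 :=
  (2 * ⟪‖x‖⁻¹ • x + e, σ⟫ / ‖‖x‖⁻¹ • x + e‖ ^ 2) • (‖x‖⁻¹ • x + e) - σ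

lemma halfTurn_self {e : E3} (he : ‖e‖ = 1) (σ : E3) : halfTurn e e σ = (2 * ⟪e, σ⟫) • e - σ := by
  unfold halfTurn
  rw [he, inv_one, one_smul, ← two_smul ℝ e, norm_smul, he, real_inner_smul_left, smul_smul]
  norm_num
  ring_nf

lemma halfTurn_norm {e : E3} (he : ‖e‖ = 1) (σ : E3) : ‖halfTurn e e σ‖ = ‖σ‖ := by
  rw [halfTurn_self he, ← sq_eq_sq₀ (norm_nonneg _) (norm_nonneg _), norm_sub_sq_real, norm_smul,
    real_inner_smul_left, he, mul_one, Real.norm_eq_abs, sq_abs]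
  ring

/-- Conjugation by the half-turn moves the dependence on `x` from the kernel, which may be
singular, to the smooth function `M`. -/
lemma zconv_eq {e x : E3} (he : ‖e‖ = 1) (hx : x ≠ 0) (hn : ‖x‖⁻¹ • x + e ≠ 0) (k : ℝ → ℝ)
    (M : E3 → ℝ) : zconv k M x = ∫ σ, k ⟪e, σ⟫ * M (halfTurn e x σ) ∂muS := by
  unfold zconv
  set n := ‖x‖⁻¹ • x + e with hnd
  let L : E3 ≃ₗᵢ[ℝ] E3 := (Submodule.span ℝ {n}).reflection
  have hL : ∀ σ, L σ = halfTurn e x σ := by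
    intro σ
    simp only [L, Submodule.reflection_singleton_apply, halfTurn, RCLike.ofReal_real_eq_id, id]
    rw [← hnd, two_smul, ← two_smul ℝ, smul_smul, mul_div_assoc]
  have hLe : L e = ‖x‖⁻¹ • x := by
    rw [hL]
    unfold halfTurn
    rw [← hnd]
    have h1 : ‖n‖ ^ 2 = 2 * ⟪n, e⟫ := by
      rw [hnd, norm_add_sq_real, unit_norm hx, he, inner_add_left, real_inner_self_eq_norm_sq, he]
      ring
    have h2 : ‖n‖ ^ 2 ≠ 0 := pow_ne_zero 2 (norm_ne_zero_iff.2 hn)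
    rw [← h1, div_self h2, one_smul, hnd]; abel
  rw [← muS_integral_comp L]
  simp only [← hLe, ← hL, LinearIsometryEquiv.inner_map_map]

lemma halfTurn_contDiffAt {e σ : E3} (he : ‖e‖ = 1) :
    ContDiffAt ℝ (⊤ : ℕ∞) (fun z : E3 × E3 => halfTurn e z.1 z.2) (e, σ) := by
  have he0 := ne_zero_of_norm_one he
  have hν : ContDiffAt ℝ (⊤ : ℕ∞) (fun z : E3 × E3 => ‖z.1‖⁻¹ • z.1 + e) (e, σ) :=
    (((contDiffAt_fst.norm ℝ he0).inv (norm_ne_zero_iff.2 he0)).smul contDiffAt_fst).add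
      contDiffAt_const
  have hn : ‖e‖⁻¹ • e + e ≠ 0 := by
    rw [he, inv_one, one_smul, ← two_smul ℝ e]
    exact smul_ne_zero two_ne_zero he0
  unfold halfTurn
  exact (((contDiffAt_const.mul (hν.inner ℝ contDiffAt_snd)).div (hν.norm_sq ℝ)
    (pow_ne_zero 2 (norm_ne_zero_iff.2 hn))).smul hν).sub contDiffAt_snd

/-! ### The regularised logarithmic kernel -/

/-- For a nonnegative integrable kernel, possibly singular, the convolution is smooth and its
Laplacian is computed by differentiating the rotated copies of `M`. The kernel is absorbed into
the measure. -/
lemma zconv_param {e : E3} (he : ‖e‖ = 1) {k : ℝ → ℝ} (hkm : Measurable k)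
    (hk0 : ∀ z ∈ Icc (-1:ℝ) 1, 0 ≤ k z) (hki : Integrable (fun σ => k ⟪e, σ⟫) muS)
    {M : E3 → ℝ} (hM : SmoothOnSphere M) :
    ContDiffAt ℝ (⊤ : ℕ∞) (zconv k M) e ∧
    lapD (zconv k M) e = ∫ σ, k ⟪e, σ⟫ * lapD (fun x => M (halfTurn e x σ)) e ∂muS := by
  have he0 := ne_zero_of_norm_one he
  let μ : Measure E3 := muS.withDensity (fun σ => ENNReal.ofReal (k ⟪e, σ⟫))
  have hfin : IsFiniteMeasure μ := isFiniteMeasure_withDensity_ofReal hki.2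
  have hμ : μ S2ᶜ = 0 := withDensity_absolutelyContinuous _ _ muS_compl
  have hme : Measurable (fun σ : E3 => ⟪e, σ⟫) := (innerSL ℝ e).continuous.measurable
  have hint : ∀ g : E3 → ℝ, ∫ σ, g σ ∂μ = ∫ σ, k ⟪e, σ⟫ * g σ ∂muS := by
    intro g
    have hm' : Measurable (fun σ => ENNReal.ofReal (k ⟪e, σ⟫)) := (hkm.comp hme).ennreal_ofReal
    rw [integral_withDensity_eq_integral_toReal_smul hm'
      (Eventually.of_forall fun _ => ENNReal.ofReal_lt_top)]
    refine integral_congr_ae (muS_ae.mono fun σ hσ => ?_)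
    simp only [smul_eq_mul]
    rw [ENNReal.toReal_ofReal (hk0 _ (inner_mem_Icc he hσ))]
  have hz : zconv k M =ᶠ[𝓝 e] fun x => ∫ σ, M (halfTurn e x σ) ∂μ := by
    have h1 : ∀ᶠ x in 𝓝 e, x ≠ 0 := isOpen_ne.mem_nhds he0
    have h2 : ∀ᶠ x : E3 in 𝓝 e, ‖x‖⁻¹ • x + e ≠ 0 := by
      have hc : ContinuousAt (fun x : E3 => ‖x‖⁻¹ • x + e) e :=
        ((continuousAt_id.norm.inv₀ (norm_ne_zero_iff.2 he0)).smul continuousAt_id).add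
          continuousAt_const
      refine hc.eventually_ne ?_
      rw [he, inv_one, one_smul, ← two_smul ℝ e]
      exact smul_ne_zero two_ne_zero he0
    filter_upwards [h1, h2] with x hx hn
    rw [hint, zconv_eq he hx hn]
  have hf : ∀ σ ∈ S2, ContDiffAt ℝ (⊤ : ℕ∞) (fun z : E3 × E3 => M (halfTurn e z.1 z.2)) (e, σ) := by
    intro σ hσ
    refine ContDiffAt.comp (g := M) (e, σ) (hM.contDiffAt ?_) (halfTurn_contDiffAt he)
    refine ne_zero_of_norm_one ?_
    rw [halfTurn_norm he]; simpa using hσ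
  constructor
  · exact (param_contDiffAt S2_compact hμ hf).congr_of_eventuallyEq hz
  · unfold lapD
    simp only [D2_congr hz]
    rw [← hint, integral_finsetSum]
    · exact Finset.sum_congr rfl fun i _ => param_D2 S2_compact hμ (fun σ hσ => (hf σ hσ).two) _ _
    · intro i _
      refine slice_integrable S2_compact hμ fun σ hσ => ?_
      have h1 := pfd_contDiffAt (n := (⊤ : ℕ∞)) (pfd_contDiffAt (n := (⊤ : ℕ∞)) (hf σ hσ))
      exact slice_continuousAt
        ((h1.clm_apply contDiffAt_const).clm_apply contDiffAt_const (g := fun _ => bv i)).continuousAt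

/-- Continuity at `e` with a modulus quadratic in `1 - ⟨e, σ⟩`, the weight that absorbs the
singularity of `rhoK`. -/
lemma cont_quad {f : E3 → ℝ} (hf : ContinuousOn f S2) {e : E3} (he : ‖e‖ = 1) {δ : ℝ} (hδ : 0 < δ) :
    ∃ C, 0 ≤ C ∧ ∀ σ, ‖σ‖ = 1 → |f σ - f e| ≤ δ + C * (1 - ⟪e, σ⟫) ^ 2 := by
  obtain ⟨B, hB⟩ := S2_compact.exists_bound_of_continuousOn hf
  have heS : e ∈ S2 := by simpa using he
  obtain ⟨η, hη, h⟩ := Metric.continuousWithinAt_iff.1 (hf e heS) δ hδ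
  have hB0 : 0 ≤ B := (norm_nonneg _).trans (hB e heS)
  -- For `|σ - e| ≥ η` the identity `|σ - e|² = 2 (1 - ⟨e, σ⟩)` gives `η⁴ ≤ 4 (1 - ⟨e, σ⟩)²`,
  -- while the left side is at most `2 B`.
  refine ⟨8 * B / η ^ 4, by positivity, fun σ hσ => ?_⟩
  have hσS : σ ∈ S2 := by simpa using hσ
  by_cases hd : dist σ e < η
  · have := (h hσS hd).le
    rw [Real.dist_eq] at this
    have h2 : 0 ≤ 8 * B / η ^ 4 * (1 - ⟪e, σ⟫) ^ 2 := by positivity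
    linarith
  · push Not at hd
    rw [dist_eq_norm] at hd
    have h1 : ‖σ - e‖ ^ 2 = 2 * (1 - ⟪e, σ⟫) := by
      rw [norm_sub_sq_real, hσ, he, real_inner_comm]; ring
    have h2 : η ^ 2 ≤ 2 * (1 - ⟪e, σ⟫) := by rw [← h1]; gcongr
    have h3 : η ^ 4 ≤ 4 * (1 - ⟪e, σ⟫) ^ 2 := by
      have : (η ^ 2) ^ 2 ≤ (2 * (1 - ⟪e, σ⟫)) ^ 2 := by gcongr
      nlinarith
    have h4 : 2 * B ≤ 8 * B / η ^ 4 * (1 - ⟪e, σ⟫) ^ 2 := by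
      rw [div_mul_eq_mul_div, le_div_iff₀ (by positivity)]
      nlinarith
    have h5 : |f σ - f e| ≤ 2 * B := by
      have a := hB σ hσS
      have b := hB e heS
      have := norm_sub_le (f σ) (f e)
      rw [← Real.norm_eq_abs]; linarith
    linarith

/-- The logarithmic kernel, regularised by `ε`. The constant `log 3` makes it nonnegative on `[-1,
1]` for `0 ≤ ε ≤ 1`. -/
def logK (ε z : ℝ) : ℝ := Real.log 3 - Real.log (1 + ε - z)

lemma logK_measurable (ε : ℝ) : Measurable (logK ε) := by
  unfold logK
  exact measurable_const.sub (Real.measurable_log.comp (by fun_prop))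

lemma logK_nonneg {ε : ℝ} (hε : 0 ≤ ε) (hε1 : ε ≤ 1) : ∀ z ∈ Icc (-1:ℝ) 1, 0 ≤ logK ε z := by
  intro z hz
  unfold logK
  rcases eq_or_lt_of_le (show 0 ≤ 1 + ε - z by linarith [hz.2]) with h | h
  · rw [← h, Real.log_zero, sub_zero]; exact Real.log_nonneg (by norm_num)
  · have := Real.log_le_log h (show 1 + ε - z ≤ 3 by linarith [hz.1])
    linarith

lemma logK_le {ε z : ℝ} (hε : 0 ≤ ε) (hz : z < 1) : logK ε z ≤ logK 0 z := by
  unfold logK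
  have := Real.log_le_log (show 0 < 1 + 0 - z by linarith) (show 1 + 0 - z ≤ 1 + ε - z by linarith)
  linarith

lemma logK_contDiffAt {ε z : ℝ} (hz : z < 1 + ε) : ContDiffAt ℝ (⊤ : ℕ∞) (logK ε) z := by
  unfold logK
  exact contDiffAt_const.sub ((contDiffAt_const.sub contDiffAt_id).log (by simp; linarith))

lemma logK_deriv {ε z : ℝ} (hz : z < 1 + ε) : deriv (logK ε) z = (1 + ε - z)⁻¹ := by
  have h0 : (1 + ε - z) ≠ 0 := by linarith
  have h1 : HasDerivAt (fun z : ℝ => 1 + ε - z) (-1) z := (hasDerivAt_id z).const_sub (1 + ε)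
  have h2 := (h1.log h0).const_sub (Real.log 3)
  unfold logK
  rw [h2.deriv]; field_simp

lemma logK_deriv2 {ε z : ℝ} (hz : z < 1 + ε) : deriv (deriv (logK ε)) z = ((1 + ε - z) ^ 2)⁻¹ := by
  have h0 : (1 + ε - z) ≠ 0 := by linarith
  have h1 : HasDerivAt (fun z : ℝ => 1 + ε - z) (-1) z := (hasDerivAt_id z).const_sub (1 + ε)
  have h2 : deriv (logK ε) =ᶠ[𝓝 z] fun z => (1 + ε - z)⁻¹ := by
    filter_upwards [Iio_mem_nhds hz] with y hy using logK_deriv hy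
  rw [h2.deriv_eq, (h1.fun_inv h0).deriv]; field_simp

/-- The approximate identity produced by applying the zonal Laplacian to `logK ε`. -/
def rhoK (ε z : ℝ) : ℝ := ε * (2 + ε) / (1 + ε - z) ^ 2

/-- The zonal Laplacian of `logK ε` is `1 - rhoK ε`. -/
lemma logK_zonal {ε z : ℝ} (hz : z < 1 + ε) :
    (1 - z ^ 2) * deriv (deriv (logK ε)) z - 2 * z * deriv (logK ε) z = 1 - rhoK ε z := by
  have h0 : (1 + ε - z) ≠ 0 := by linarith
  rw [logK_deriv hz, logK_deriv2 hz, rhoK]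
  field_simp; ring

lemma rhoK_nonneg {ε z : ℝ} (hε : 0 ≤ ε) : 0 ≤ rhoK ε z := by unfold rhoK; positivity

lemma rhoK_integrable (e : E3) {ε : ℝ} (hε : 0 < ε) (he : ‖e‖ = 1) {f : E3 → ℝ}
    (hf : ∀ σ ∈ S2, ContinuousAt f σ) : Integrable (fun σ => rhoK ε ⟪e, σ⟫ * f σ) muS := by
  refine muS_integrable fun σ hσ => ContinuousAt.mul ?_ (hf σ hσ)
  have h1 := (inner_mem_Icc he (show ‖σ‖ = 1 by simpa using hσ)).2
  have h2 : (1 + ε - ⟪e, σ⟫) ^ 2 ≠ 0 := pow_ne_zero 2 (by linarith)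
  have hc : ContinuousAt (fun σ : E3 => ⟪e, σ⟫) σ := (innerSL ℝ e).continuous.continuousAt
  unfold rhoK
  exact continuousAt_const.div ((continuousAt_const.sub hc).pow 2) h2

lemma rhoK_integral {e : E3} {ε : ℝ} (hε : 0 < ε) (he : ‖e‖ = 1) :
    ∫ σ, rhoK ε ⟪e, σ⟫ ∂muS = 4 * π := by
  have hlt : ∀ z ∈ Icc (-1:ℝ) 1, z < 1 + ε := fun z hz => by linarith [hz.2]
  have h1 := integral_zonal he (k := logK ε) fun z hz => (logK_contDiffAt (hlt z hz)).two
  rw [integral_congr_ae (muS_ae.mono fun σ hσ => logK_zonal (hlt _ (inner_mem_Icc he hσ)))] at h1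
  have h2 := rhoK_integrable e hε he (f := fun _ => 1) fun _ _ => continuousAt_const
  simp only [mul_one] at h2
  rw [integral_sub (integrable_const _) h2, integral_const, muS_univ] at h1
  simp only [smul_eq_mul, mul_one] at h1
  linarith

lemma rhoK_sq_le {ε z : ℝ} (hε : 0 < ε) (hε1 : ε ≤ 1) (hz : z ≤ 1) :
    rhoK ε z * (1 - z) ^ 2 ≤ 3 * ε := by
  unfold rhoK
  have h0 : 0 < 1 + ε - z := by linarith
  rw [div_mul_eq_mul_div, div_le_iff₀ (by positivity)]
  have h1 : (1 - z) ^ 2 ≤ (1 + ε - z) ^ 2 := by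
    apply pow_le_pow_left₀ <;> linarith
  have h2 : ε * (2 + ε) ≤ 3 * ε := by nlinarith
  calc ε * (2 + ε) * (1 - z) ^ 2 ≤ (3 * ε) * (1 + ε - z) ^ 2 := by gcongr

/-- For `ε > 0` the kernel is smooth on the sphere and can be differentiated directly. -/
lemma lapD_zconv_logK {e : E3} (he : ‖e‖ = 1) {ε : ℝ} (hε : 0 < ε) {M : E3 → ℝ}
    (hM : SmoothOnSphere M) :
    lapD (zconv (logK ε) M) e = ∫ σ, M σ ∂muS - ∫ σ, rhoK ε ⟪e, σ⟫ * M σ ∂muS := by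
  have he0 := ne_zero_of_norm_one he
  have hMc : ∀ σ ∈ S2, ContDiffAt ℝ (⊤ : ℕ∞) M σ := fun σ hσ =>
    hM.contDiffAt (ne_zero_of_norm_one (by simpa using hσ))
  have hlt : ∀ σ ∈ S2, ⟪e, σ⟫ < 1 + ε := fun σ hσ => by
    linarith [(inner_mem_Icc he (show ‖σ‖ = 1 by simpa using hσ)).2]
  have hge : ∀ σ : E3, ⟪‖e‖⁻¹ • e, σ⟫ = ⟪e, σ⟫ := fun σ => by rw [he, inv_one, one_smul]
  have hk : ∀ σ ∈ S2, ContDiffAt ℝ (⊤ : ℕ∞)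
      (fun w : E3 × E3 => logK ε ⟪‖w.1‖⁻¹ • w.1, w.2⟫) (e, σ) := by
    intro σ hσ
    refine ContDiffAt.comp (g := logK ε) (e, σ) (logK_contDiffAt ?_) ?_
    · simpa only [hge] using hlt σ hσ
    · exact (((contDiffAt_fst.norm ℝ he0).inv (norm_ne_zero_iff.2 he0)).smul contDiffAt_fst).inner
        ℝ contDiffAt_snd
  have hf : ∀ σ ∈ S2, ContDiffAt ℝ (⊤ : ℕ∞)
      (fun w : E3 × E3 => logK ε ⟪‖w.1‖⁻¹ • w.1, w.2⟫ * M w.2) (e, σ) := fun σ hσ =>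
    (hk σ hσ).mul (ContDiffAt.comp (g := M) (e, σ) (hMc σ hσ) contDiffAt_snd)
  have hc : ∀ i, Integrable (fun σ =>
      D2 (fun x => logK ε ⟪‖x‖⁻¹ • x, σ⟫ * M σ) e (bv i) (bv i)) muS := by
    intro i
    refine muS_integrable fun σ hσ => ?_
    have h1 := pfd_contDiffAt (n := (⊤ : ℕ∞)) (pfd_contDiffAt (n := (⊤ : ℕ∞)) (hf σ hσ))
    exact slice_continuousAt
      ((h1.clm_apply contDiffAt_const).clm_apply contDiffAt_const (g := fun _ => bv i)).continuousAt
  have h1 : lapD (zconv (logK ε) M) e =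
      ∫ σ, lapD (fun x => logK ε ⟪‖x‖⁻¹ • x, σ⟫ * M σ) e ∂muS := by
    unfold lapD
    rw [integral_finsetSum _ fun i _ => hc i]
    exact Finset.sum_congr rfl fun i _ =>
      param_D2 S2_compact muS_compl (fun σ hσ => (hf σ hσ).two) _ _
  have h2 : ∀ σ, ‖σ‖ = 1 → lapD (fun x => logK ε ⟪‖x‖⁻¹ • x, σ⟫ * M σ) e =
      M σ - rhoK ε ⟪e, σ⟫ * M σ := by
    intro σ hσ
    have hσS : σ ∈ S2 := by simpa using hσ
    have h3 : ContDiffAt ℝ 2 (fun x : E3 => logK ε ⟪‖x‖⁻¹ • x, σ⟫) e :=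
      ((hk σ hσS).comp (f := fun x => (x, σ)) e (contDiffAt_id.prodMk contDiffAt_const)).two
    have h4 : lapD (fun x => logK ε ⟪‖x‖⁻¹ • x, σ⟫ * M σ) e =
        M σ * lapD (fun x => logK ε ⟪‖x‖⁻¹ • x, σ⟫) e := by
      simp only [mul_comm _ (M σ)]
      unfold lapD
      simp only [D2_const_mul h3]
      rw [Finset.mul_sum]
    rw [h4, lapD_zonal he hσ (logK_contDiffAt (hlt σ hσS)).two, logK_zonal (hlt σ hσS)]
    ring
  rw [h1, integral_congr_ae (muS_ae.mono h2), integral_sub hM.muS_integrable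
    (rhoK_integrable e hε he fun σ hσ => (hMc σ hσ).continuousAt)]

/-- The kernels `rhoK ε` have total mass `4π` and concentrate at `e` as `ε → 0`. -/
lemma rhoK_tendsto {e : E3} (he : ‖e‖ = 1) {M : E3 → ℝ} (hM : SmoothOnSphere M) :
    Tendsto (fun n : ℕ => ∫ σ, rhoK (1 / ((n:ℝ) + 1)) ⟪e, σ⟫ * M σ ∂muS) atTop
      (𝓝 (4 * π * M e)) := by
  have hMc : ∀ σ ∈ S2, ContinuousAt M σ := fun σ hσ =>
    (hM.contDiffAt (ne_zero_of_norm_one (by simpa using hσ))).continuousAt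
  rw [Metric.tendsto_atTop]
  intro δ hδ
  obtain ⟨C, hC0, hC⟩ := cont_quad (fun σ hσ => (hMc σ hσ).continuousWithinAt) he
    (show 0 < δ / (8 * π) by positivity)
  have ht : Tendsto (fun n : ℕ => C * (3 * (1 / ((n:ℝ) + 1))) * (4 * π)) atTop (𝓝 0) := by
    have := ((tendsto_one_div_add_atTop_nhds_zero_nat (𝕜 := ℝ)).const_mul 3).const_mul C
    simpa using this.mul_const (4 * π)
  obtain ⟨N, hN⟩ := (Metric.tendsto_atTop.1 ht) (δ / 2) (by positivity)
  refine ⟨N, fun n hn => ?_⟩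
  set ε : ℝ := 1 / ((n:ℝ) + 1) with hεd
  have hε : 0 < ε := by positivity
  have hε1 : ε ≤ 1 := by
    rw [hεd, div_le_one (by positivity)]; linarith [(Nat.cast_nonneg n : (0:ℝ) ≤ n)]
  have hNn := hN n hn
  rw [Real.dist_eq, sub_zero, ← hεd] at hNn
  have hI1 := rhoK_integrable e hε he hMc
  have hI2 := rhoK_integrable e hε he (f := fun _ => M e) fun _ _ => continuousAt_const
  have hI3 := rhoK_integrable e hε he (f := fun _ => 1) fun _ _ => continuousAt_const
  simp only [mul_one] at hI3
  have e1 : ∫ σ, rhoK ε ⟪e, σ⟫ * M σ ∂muS - 4 * π * M e =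
      ∫ σ, rhoK ε ⟪e, σ⟫ * (M σ - M e) ∂muS := by
    simp only [mul_sub]
    rw [integral_sub hI1 hI2, integral_mul_const, rhoK_integral hε he]
  rw [Real.dist_eq, e1]
  have e2 : |∫ σ, rhoK ε ⟪e, σ⟫ * (M σ - M e) ∂muS| ≤
      ∫ σ, (δ / (8 * π) * rhoK ε ⟪e, σ⟫ + C * (3 * ε)) ∂muS := by
    rw [← Real.norm_eq_abs]
    refine norm_integral_le_of_norm_le ((hI3.const_mul _).add (integrable_const _))
      (muS_ae.mono fun σ hσ => ?_)
    have h1 := rhoK_nonneg (z := ⟪e, σ⟫) hε.le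
    have h2 := rhoK_sq_le hε hε1 (inner_mem_Icc he hσ).2
    rw [Real.norm_eq_abs, abs_mul, abs_of_nonneg h1]
    calc rhoK ε ⟪e, σ⟫ * |M σ - M e|
        ≤ rhoK ε ⟪e, σ⟫ * (δ / (8 * π) + C * (1 - ⟪e, σ⟫) ^ 2) := by
          gcongr; exact hC σ hσ
      _ = δ / (8 * π) * rhoK ε ⟪e, σ⟫ + C * (rhoK ε ⟪e, σ⟫ * (1 - ⟪e, σ⟫) ^ 2) := by ring
      _ ≤ _ := by gcongr
  rw [integral_add (hI3.const_mul _) (integrable_const _), integral_const_mul, rhoK_integral hε he,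
    integral_const, muS_univ, smul_eq_mul] at e2
  have e3 : δ / (8 * π) * (4 * π) = δ / 2 := by field_simp; ring
  have e4 := le_abs_self (C * (3 * ε) * (4 * π))
  linarith

/-! ### Solvability of the Poisson equation -/

lemma lap_halfTurn_continuousAt {e : E3} (he : ‖e‖ = 1) {M : E3 → ℝ} (hM : SmoothOnSphere M) :
    ∀ σ ∈ S2, ContinuousAt (fun σ => lapD (fun x => M (halfTurn e x σ)) e) σ := by
  intro σ hσ
  have hf : ContDiffAt ℝ (⊤ : ℕ∞) (fun z : E3 × E3 => M (halfTurn e z.1 z.2)) (e, σ) := by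
    refine ContDiffAt.comp (g := M) (e, σ) (hM.contDiffAt ?_) (halfTurn_contDiffAt he)
    refine ne_zero_of_norm_one ?_
    rw [halfTurn_norm he]; simpa using hσ
  refine tendsto_finsetSum _ fun i _ => ?_
  have h1 := pfd_contDiffAt (n := (⊤ : ℕ∞)) (pfd_contDiffAt (n := (⊤ : ℕ∞)) hf)
  exact slice_continuousAt
    ((h1.clm_apply contDiffAt_const).clm_apply contDiffAt_const (g := fun _ => bv i)).continuousAt

lemma logK_integrable {e : E3} (he : ‖e‖ = 1) : Integrable (fun σ => logK 0 ⟪e, σ⟫) muS := by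
  have hme : Measurable (fun σ : E3 => ⟪e, σ⟫) := (innerSL ℝ e).continuous.measurable
  have h := integrable_map_measure (μ := muS) (f := fun σ : E3 => ⟪e, σ⟫) (g := logK 0)
    (logK_measurable 0).aestronglyMeasurable hme.aemeasurable
  refine h.1 ?_
  rw [zonal_measure he]
  refine Integrable.smul_measure ?_ ENNReal.ofReal_ne_top
  have h1 : IntervalIntegrable Real.log volume (1 - (-1)) (1 - 1) :=
    intervalIntegral.intervalIntegrable_log'
  have h2 := h1.comp_sub_left 1
  have h3 : IntervalIntegrable (logK 0) volume (-1) 1 := by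
    unfold logK
    refine intervalIntegrable_const.sub ?_
    simpa using h2
  exact (intervalIntegrable_iff_integrableOn_Ioc_of_le (by norm_num)).1 h3

lemma inner_ne_one_ae {e : E3} (he : ‖e‖ = 1) : ∀ᵐ σ ∂muS, ⟪e, σ⟫ ≠ 1 := by
  have hme : Measurable (fun σ : E3 => ⟪e, σ⟫) := (innerSL ℝ e).continuous.measurable
  refine ae_of_ae_map hme.aemeasurable (p := fun z => z ≠ 1) ?_
  rw [zonal_measure he]
  refine Measure.ae_smul_measure ?_ _
  exact ae_restrict_of_ae (Measure.ae_ne volume 1)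

lemma logK_integrable_pos {e : E3} (he : ‖e‖ = 1) {ε : ℝ} (hε : 0 < ε) :
    Integrable (fun σ => logK ε ⟪e, σ⟫) muS := by
  refine muS_integrable fun σ hσ => ?_
  have h1 := (inner_mem_Icc he (show ‖σ‖ = 1 by simpa using hσ)).2
  have hc : ContinuousAt (fun σ : E3 => ⟪e, σ⟫) σ := (innerSL ℝ e).continuous.continuousAt
  exact ContinuousAt.comp (g := logK ε) (logK_contDiffAt (by linarith)).continuousAt hc

/-- `-(1 / 4π) log (1 - ⟪e, σ⟫)` is, modulo constants, a Green function for minus the Laplacian of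
`S²`. Both representations of the convolution with the regularised kernel pass to the limit: the
rotated one by dominated convergence, the unrotated one because `rhoK` is an approximate identity.
-/
lemma lapD_zconv_log {e : E3} (he : ‖e‖ = 1) {M : E3 → ℝ} (hM : SmoothOnSphere M) :
    lapD (zconv (logK 0) M) e = ∫ σ, M σ ∂muS - 4 * π * M e := by
  have hεpos : ∀ n : ℕ, 0 < 1 / ((n:ℝ) + 1) := fun n => by positivity
  have hε1 : ∀ n : ℕ, 1 / ((n:ℝ) + 1) ≤ 1 := fun n => by
    rw [div_le_one (by positivity)]; linarith [(Nat.cast_nonneg n : (0:ℝ) ≤ n)]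
  have hN := lap_halfTurn_continuousAt he hM
  set N : E3 → ℝ := fun σ => lapD (fun x => M (halfTurn e x σ)) e with hNd
  obtain ⟨B, hB⟩ := S2_compact.exists_bound_of_continuousOn
    (fun σ hσ => (hN σ hσ).continuousWithinAt)
  have hNm : AEStronglyMeasurable N muS := slice_aesm S2_compact muS_compl hN
  -- Unrotated form: `rhoK` is an approximate identity.
  have t1 : Tendsto (fun n : ℕ => lapD (zconv (logK (1 / ((n:ℝ) + 1))) M) e) atTop
      (𝓝 (∫ σ, M σ ∂muS - 4 * π * M e)) := by
    simp only [fun n : ℕ => lapD_zconv_logK he (hεpos n) hM]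
    exact tendsto_const_nhds.sub (rhoK_tendsto he hM)
  -- Rotated form: `logK ε ≤ logK 0` dominates.
  have t2 : Tendsto (fun n : ℕ => lapD (zconv (logK (1 / ((n:ℝ) + 1))) M) e) atTop
      (𝓝 (lapD (zconv (logK 0) M) e)) := by
    simp only [fun n : ℕ => (zconv_param he (logK_measurable _)
      (logK_nonneg (hεpos n).le (hε1 n)) (logK_integrable_pos he (hεpos n)) hM).2]
    rw [(zconv_param he (logK_measurable 0) (logK_nonneg le_rfl zero_le_one)
      (logK_integrable he) hM).2]
    refine tendsto_integral_of_dominated_convergence (fun σ => logK 0 ⟪e, σ⟫ * B) ?_ ?_ ?_ ?_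
    · exact fun n => (logK_integrable_pos he (hεpos n)).aestronglyMeasurable.mul hNm
    · exact (logK_integrable he).mul_const B
    · intro n
      filter_upwards [muS_ae, inner_ne_one_ae he] with σ hσ h1
      have h2 := inner_mem_Icc he hσ
      have h3 := logK_nonneg (hεpos n).le (hε1 n) _ h2
      have h4 := logK_le (hεpos n).le (lt_of_le_of_ne h2.2 h1)
      rw [norm_mul, Real.norm_eq_abs, abs_of_nonneg h3]
      exact mul_le_mul h4 (hB σ (by simpa using hσ)) (norm_nonneg _)
        (logK_nonneg le_rfl zero_le_one _ h2)
    · filter_upwards [muS_ae, inner_ne_one_ae he] with σ hσ h1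
      have h2 := lt_of_le_of_ne (inner_mem_Icc he hσ).2 h1
      refine Tendsto.mul_const _ ?_
      unfold logK
      refine tendsto_const_nhds.sub ?_
      have h5 : Tendsto (fun n : ℕ => 1 + 1 / ((n:ℝ) + 1) - ⟪e, σ⟫) atTop
          (𝓝 (1 + 0 - ⟪e, σ⟫)) :=
        (tendsto_const_nhds.add tendsto_one_div_add_atTop_nhds_zero_nat).sub tendsto_const_nhds
      exact ((Real.continuousAt_log (by linarith)).tendsto).comp h5
  exact tendsto_nhds_unique t2 t1

lemma zconv_homog (k : ℝ → ℝ) (M : E3 → ℝ) : HomogZero (zconv k M) := by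
  intro c hc x
  unfold zconv
  have : ‖c • x‖⁻¹ • (c • x) = ‖x‖⁻¹ • x := by
    rw [norm_smul, Real.norm_eq_abs, abs_of_pos hc, smul_smul, mul_inv]
    congr 1; field_simp
  rw [this]

lemma zconv_smooth {M : E3 → ℝ} (hM : SmoothOnSphere M) : SmoothOnSphere (zconv (logK 0) M) := by
  refine ⟨zconv_homog _ _, fun x hx => ContDiffAt.contDiffWithinAt ?_⟩
  have he := unit_norm hx
  have h1 := (zconv_param he (logK_measurable 0) (logK_nonneg le_rfl zero_le_one)
      (logK_integrable he) hM).1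
  -- Homogeneity reduces smoothness at `x` to smoothness at a unit vector.
  have h2 : zconv (logK 0) M = fun y => zconv (logK 0) M (‖x‖⁻¹ • y) := by
    funext y
    exact (zconv_homog (logK 0) M _ (inv_pos.2 (norm_pos_iff.2 hx)) y).symm
  refine ContDiffAt.congr_of_eventuallyEq ?_ (Eventually.of_forall (congrFun h2))
  exact ContDiffAt.comp (g := zconv (logK 0) M) (f := fun y : E3 => ‖x‖⁻¹ • y) x h1
    (contDiffAt_id.const_smul _)

/-- Solvability of the Poisson equation on `S²`. -/
lemma poisson_exists {M : E3 → ℝ} (hM : SmoothOnSphere M) {Mbar : ℝ}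
    (hMbar : Mbar = (1 / (4 * π)) * sphereIntegral M) :
    ∃ Q : E3 → ℝ, SmoothOnSphere Q ∧ sphereIntegral Q = 0 ∧
      ∀ ω : E3, ‖ω‖ = 1 → lap3 Q ω = -M ω + Mbar := by
  have hZ := zconv_smooth hM
  set Z := zconv (logK 0) M with hZd
  have hpi : 4 * π ≠ 0 := by positivity
  let c : ℝ := (1 / (4 * π)) * ∫ σ, (1 / (4 * π)) * Z σ ∂muS
  have hQ : SmoothOnSphere (fun x => (1 / (4 * π)) * Z x + -c) :=
    ⟨fun a ha x => by simp only [hZ.1 a ha x], (contDiffOn_const.mul hZ.2).add contDiffOn_const⟩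
  refine ⟨_, hQ, ?_, ?_⟩
  · rw [sphereIntegral_eq, integral_add (hZ.muS_integrable.const_mul _) (integrable_const _),
      integral_const, muS_univ, smul_eq_mul]
    simp only [c]
    field_simp
    ring
  · intro ω hω
    have hω0 := ne_zero_of_norm_one hω
    have hZ2 := (hZ.contDiffAt hω0).two
    rw [lap3_eq (hQ.contDiffAt hω0).two]
    unfold lapD
    simp only [D2_add (contDiffAt_const.mul hZ2) contDiffAt_const, D2_const_mul hZ2]
    have h0 : ∀ v w : E3, D2 (fun _ : E3 => -c) ω v w = 0 := fun v w => by
      unfold D2; simp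
    simp only [h0, add_zero, ← Finset.mul_sum]
    have := lapD_zconv_log hω hM
    unfold lapD at this
    rw [this, hMbar, sphereIntegral_eq]
    field_simp; ring

/-! ### Superpositions of plane waves -/

/-- Superposition over directions `σ ∈ S²` of the plane waves `K (⟪x, σ⟫ - t, σ)`. -/
def fw (K : ℝ → E3 → ℝ) (p : ℝ × E3) : ℝ := ∫ σ, K (⟪p.2, σ⟫ - p.1) σ ∂muS

/-- The phase `⟪x, σ⟫ - t` of a plane wave as a linear form on space-time. -/
def phase (σ : E3) : (ℝ × E3) →L[ℝ] ℝ :=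
  (innerSL ℝ σ).comp (ContinuousLinearMap.snd ℝ ℝ E3) - ContinuousLinearMap.fst ℝ ℝ E3

lemma phase_apply (σ : E3) (p : ℝ × E3) : phase σ p = ⟪p.2, σ⟫ - p.1 := by
  simp [phase, real_inner_comm]

/-- Joint smoothness of `K` on `ℝ × (ℝ³ ∖ {0})`. -/
def SmoothOff (K : ℝ → E3 → ℝ) : Prop :=
  ∀ q σ, σ ≠ 0 → ContDiffAt ℝ (⊤ : ℕ∞) (fun z : ℝ × E3 => K z.1 z.2) (q, σ)

lemma fw_joint {K : ℝ → E3 → ℝ} (hK : SmoothOff K) (p : ℝ × E3) {σ : E3} (hσ : σ ≠ 0) :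
    ContDiffAt ℝ (⊤ : ℕ∞) (fun z : (ℝ × E3) × E3 => K (⟪z.1.2, z.2⟫ - z.1.1) z.2) (p, σ) := by
  refine ContDiffAt.comp (g := fun z : ℝ × E3 => K z.1 z.2)
    (f := fun z : (ℝ × E3) × E3 => (⟪z.1.2, z.2⟫ - z.1.1, z.2)) (p, σ) (hK _ σ hσ) ?_
  refine ContDiffAt.prodMk (ContDiffAt.sub (ContDiffAt.inner ℝ ?_ contDiffAt_snd) ?_)
    contDiffAt_snd
  · exact contDiffAt_snd.comp _ contDiffAt_fst
  · exact contDiffAt_fst.comp _ contDiffAt_fst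

lemma S2_ne {σ : E3} (hσ : σ ∈ S2) : σ ≠ 0 :=
  ne_zero_of_norm_one (by simpa [S2] using hσ)

lemma fw_smooth {K : ℝ → E3 → ℝ} (hK : SmoothOff K) (p : ℝ × E3) :
    ContDiffAt ℝ (⊤ : ℕ∞) (fw K) p :=
  param_contDiffAt S2_compact muS_compl (f := fun z : (ℝ × E3) × E3 => K (⟪z.1.2, z.2⟫ - z.1.1) z.2)
    fun _ hσ => fw_joint hK p (S2_ne hσ)

/-- The d'Alembertian `∂ₜ² - Δ`. -/
def boxD (u : ℝ × E3 → ℝ) (p : ℝ × E3) : ℝ :=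
  D2 u p (1, 0) (1, 0) - ∑ i, D2 u p (0, bv i) (0, bv i)

lemma SmoothOff.slice {K : ℝ → E3 → ℝ} (hK : SmoothOff K) {σ : E3} (hσ : σ ≠ 0) (q : ℝ) :
    ContDiffAt ℝ (⊤ : ℕ∞) (fun q => K q σ) q :=
  ContDiffAt.comp (g := fun z : ℝ × E3 => K z.1 z.2) (f := fun q => (q, σ)) q (hK q σ hσ)
    (contDiffAt_id.prodMk contDiffAt_const)

/-- Each plane wave solves the wave equation because `|σ| = 1`. -/
lemma fw_box {K : ℝ → E3 → ℝ} (hK : SmoothOff K) (p : ℝ × E3) : boxD (fw K) p = 0 := by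
  have hD : ∀ v w, D2 (fw K) p v w =
      ∫ σ, deriv (deriv fun q => K q σ) (phase σ p) * phase σ v * phase σ w ∂muS := by
    intro v w
    refine (param_D2 S2_compact muS_compl
      (f := fun z : (ℝ × E3) × E3 => K (⟪z.1.2, z.2⟫ - z.1.1) z.2) (p0 := p)
      (fun σ hσ => (fw_joint hK p (S2_ne hσ)).two) v w).trans ?_
    refine integral_congr_ae (muS_ae.mono fun σ hσ => ?_)
    have := D2_comp_lin (phase σ) (p := p) (hK.slice (ne_zero_of_norm_one hσ) _).two v w
    simpa only [phase_apply] using this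
  have hc : ∀ σ ∈ S2, ContinuousAt
      (fun σ => deriv (deriv fun q => K q σ) (phase σ p)) σ := by
    intro σ hσ
    have h1 : ContDiffAt ℝ 0 (pfd (fun z : ℝ × E3 => pfd (fun z : ℝ × E3 => K z.1 z.2) z 1))
        (phase σ p, σ) := by
      refine pfd_contDiffAt (n := 0) ?_
      refine ContDiffAt.clm_apply (pfd_contDiffAt ?_) contDiffAt_const
      simpa [one_add_one_eq_two] using (hK (phase σ p) σ (S2_ne hσ)).two
    have h2 := (h1.clm_apply (contDiffAt_const (c := (1:ℝ)))).continuousAt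
    refine ContinuousAt.comp (f := fun σ : E3 => (phase σ p, σ)) h2 ?_
    refine ContinuousAt.prodMk ?_ continuousAt_id
    simp only [phase_apply]
    exact ((innerSL ℝ p.2).continuous.sub continuous_const).continuousAt
  have hi : ∀ v w, Integrable (fun σ =>
      deriv (deriv fun q => K q σ) (phase σ p) * phase σ v * phase σ w) muS := by
    intro v w
    refine muS_integrable fun σ hσ => ((hc σ hσ).mul ?_).mul ?_ <;>
    · simp only [phase_apply]
      exact ((innerSL ℝ _).continuous.sub continuous_const).continuousAt
  unfold boxD
  simp only [hD]
  rw [← integral_finsetSum _ (fun i _ => hi _ _), ← integral_sub (hi _ _)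
    (integrable_finsetSum _ fun i _ => hi _ _)]
  rw [integral_eq_zero_of_ae]
  filter_upwards [muS_ae] with σ hσ
  have h3 := sum_inner_sq σ
  rw [hσ, Fin.sum_univ_three] at h3
  simp only [phase_apply, Fin.sum_univ_three, inner_zero_left, Pi.zero_apply,
    real_inner_comm σ (bv _)] at *
  linear_combination (-deriv (deriv fun q => K q σ) (⟪p.2, σ⟫ - p.1)) * h3

/-! ### Asymptotics of superpositions of plane waves -/

lemma SmoothOff.cont_comp {K : ℝ → E3 → ℝ} (hK : SmoothOff K) {f : E3 → ℝ} (hf : Continuous f) :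
    ∀ σ ∈ S2, ContinuousAt (fun σ => K (f σ) σ) σ := fun σ hσ =>
  ContinuousAt.comp (g := fun z : ℝ × E3 => K z.1 z.2) (f := fun σ => (f σ, σ))
    (hK _ σ (S2_ne hσ)).continuousAt (hf.continuousAt.prodMk continuousAt_id)

lemma phase_cont (p : ℝ × E3) : Continuous fun σ : E3 => ⟪p.2, σ⟫ - p.1 :=
  (innerSL ℝ p.2).continuous.sub continuous_const

/-- The angular average that turns the `q⁻²` tail of a profile into the interior limit. -/
lemma integral_inv_sq {x : E3} (hx0 : 0 < ‖x‖) (hx : ‖x‖ < 1) :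
    ∫ σ, ((1 - ⟪x, σ⟫) ^ 2)⁻¹ ∂muS = 4 * π / (1 - ‖x‖ ^ 2) := by
  have he : ‖‖x‖⁻¹ • x‖ = 1 := unit_norm (norm_pos_iff.1 hx0)
  have hcont : Continuous fun z : ℝ => ((max (1 - ‖x‖) (1 - ‖x‖ * z)) ^ 2)⁻¹ := by
    refine Continuous.inv₀ (by fun_prop) fun z => ?_
    have := le_max_left (1 - ‖x‖) (1 - ‖x‖ * z)
    have : 0 < max (1 - ‖x‖) (1 - ‖x‖ * z) := by linarith
    positivity
  have hmax : ∀ z : ℝ, z ≤ 1 → max (1 - ‖x‖) (1 - ‖x‖ * z) = 1 - ‖x‖ * z := fun z hz =>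
    max_eq_right (by nlinarith)
  have h1 := zonal_cont he hcont
  have h2 : ∫ σ, ((1 - ⟪x, σ⟫) ^ 2)⁻¹ ∂muS =
      ∫ σ, ((max (1 - ‖x‖) (1 - ‖x‖ * ⟪‖x‖⁻¹ • x, σ⟫)) ^ 2)⁻¹ ∂muS := by
    refine integral_congr_ae (muS_ae.mono fun σ hσ => ?_)
    simp only [hmax _ (inner_mem_Icc he hσ).2]
    rw [real_inner_smul_left, mul_inv_cancel_left₀ hx0.ne']
  have h3 : ∫ z in (-1:ℝ)..1, ((max (1 - ‖x‖) (1 - ‖x‖ * z)) ^ 2)⁻¹ =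
      (‖x‖ * (1 - ‖x‖ * 1))⁻¹ - (‖x‖ * (1 - ‖x‖ * (-1)))⁻¹ := by
    refine intervalIntegral.integral_eq_sub_of_hasDerivAt
      (f := fun z => (‖x‖ * (1 - ‖x‖ * z))⁻¹) (fun z hz => ?_) (hcont.intervalIntegrable _ _)
    rw [uIcc_of_le (by norm_num)] at hz
    rw [hmax z hz.2]
    have h4 : 0 < 1 - ‖x‖ * z := by nlinarith [hz.2]
    have h5 : HasDerivAt (fun z => ‖x‖ * (1 - ‖x‖ * z)) (‖x‖ * (-(‖x‖ * 1))) z :=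
      (((hasDerivAt_id z).const_mul ‖x‖).const_sub 1).const_mul ‖x‖
    refine (h5.fun_inv (by positivity)).congr_deriv ?_
    field_simp
  rw [h2, h1, h3]
  have a1 : 1 - ‖x‖ ≠ 0 := by linarith
  have a2 : 1 + ‖x‖ ≠ 0 := by linarith
  have a3 : 1 - ‖x‖ ^ 2 ≠ 0 := by nlinarith
  rw [mul_one, mul_neg_one, sub_neg_eq_add]
  field_simp
  ring

/-- Rescaled limit of a superposition of plane waves inside the light cone, governed by the
`q⁻²` tail of the profile. -/
lemma fw_int {K : ℝ → E3 → ℝ} (hK : SmoothOff K) {C c : ℝ}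
    (hb : ∀ q σ, ‖σ‖ = 1 → |K q σ| ≤ C * (1 + q ^ 2)⁻¹)
    (hc : ∀ σ, ‖σ‖ = 1 → Tendsto (fun q => q ^ 2 * K q σ) atBot (𝓝 c))
    {x : E3} (hx0 : 0 < ‖x‖) (hx : ‖x‖ < 1) :
    Tendsto (fun a : ℝ => a ^ 2 * fw K (a, a • x)) atTop (𝓝 (4 * π * c / (1 - ‖x‖ ^ 2))) := by
  have hz : ∀ σ : E3, ‖σ‖ = 1 → 1 - ‖x‖ ≤ 1 - ⟪x, σ⟫ := by
    intro σ hσ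
    have := real_inner_le_norm x σ
    rw [hσ, mul_one] at this
    linarith
  have hC : 0 ≤ C := by
    have := (abs_nonneg _).trans (hb 0 (bv 0) (bv_norm 0))
    simpa using this
  rw [show 4 * π * c / (1 - ‖x‖ ^ 2) = ∫ σ, ((1 - ⟪x, σ⟫) ^ 2)⁻¹ * c ∂muS by
    rw [integral_mul_const, integral_inv_sq hx0 hx]; ring]
  simp only [fw, ← integral_const_mul]
  refine tendsto_integral_filter_of_dominated_convergence (fun _ => C * ((1 - ‖x‖) ^ 2)⁻¹)
    (Eventually.of_forall fun a => ?_) ?_ (integrable_const _) ?_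
  · exact (muS_integrable (hK.cont_comp (phase_cont (a, a • x)))).aestronglyMeasurable.const_mul _
  · filter_upwards [eventually_gt_atTop 0] with a ha
    filter_upwards [muS_ae] with σ hσ
    have h1 := hz σ hσ
    have h2 := hb (⟪a • x, σ⟫ - a) σ hσ
    rw [norm_mul, Real.norm_eq_abs, Real.norm_eq_abs, abs_of_nonneg (sq_nonneg a)]
    -- The phase satisfies `a ⟨x, σ⟩ - a ≤ -a (1 - |x|)`, so the integrand is dominated by a
    -- constant.
    have h3 : (1 - ‖x‖) ^ 2 * a ^ 2 ≤ 1 + (⟪a • x, σ⟫ - a) ^ 2 := by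
      rw [real_inner_smul_left, show (a * ⟪x, σ⟫ - a) = -(a * (1 - ⟪x, σ⟫)) by ring, neg_sq,
        mul_pow]
      have : (1 - ‖x‖) ^ 2 ≤ (1 - ⟪x, σ⟫) ^ 2 := by
        apply pow_le_pow_left₀ <;> linarith
      nlinarith [sq_nonneg a]
    have h4 : 0 < (1 - ‖x‖) ^ 2 := by have : 0 < 1 - ‖x‖ := by linarith
                                      positivity
    calc a ^ 2 * |K (⟪a • x, σ⟫ - a) σ| ≤ a ^ 2 * (C * (1 + (⟪a • x, σ⟫ - a) ^ 2)⁻¹) := by gcongr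
      _ ≤ a ^ 2 * (C * ((1 - ‖x‖) ^ 2 * a ^ 2)⁻¹) := by gcongr
      _ = _ := by field_simp
  · filter_upwards [muS_ae] with σ hσ
    have h1 : 0 < 1 - ⟪x, σ⟫ := by linarith [hz σ hσ]
    have h2 : Tendsto (fun a : ℝ => ⟪a • x, σ⟫ - a) atTop atBot := by
      simp only [real_inner_smul_left]
      have : (fun a : ℝ => a * ⟪x, σ⟫ - a) = fun a => a * (-(1 - ⟪x, σ⟫)) := by
        funext a; ring
      rw [this]
      exact tendsto_id.atTop_mul_const_of_neg (by linarith)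
    refine (((hc σ hσ).comp h2).const_mul ((1 - ⟪x, σ⟫) ^ 2)⁻¹).congr fun a => ?_
    simp only [Function.comp, real_inner_smul_left]
    rw [show (a * ⟪x, σ⟫ - a) = -(a * (1 - ⟪x, σ⟫)) by ring]
    field_simp

lemma norm_sub_sq_unit {ω σ : E3} (hω : ‖ω‖ = 1) (hσ : ‖σ‖ = 1) :
    ‖σ - ω‖ ^ 2 = 2 * (1 - ⟪ω, σ⟫) := by
  rw [norm_sub_sq_real, hω, hσ, real_inner_comm]; ring

/-- Concentration at the forward direction: zonal averages of `F'` recover increments of `F`. -/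
lemma zonal_ftc {ω : E3} (hω : ‖ω‖ = 1) {F F' : ℝ → ℝ} (hF : ∀ q, HasDerivAt F (F' q) q)
    (hc : Continuous F') (q r : ℝ) :
    r * ∫ σ, F' (r * ⟪ω, σ⟫ - (r - q)) ∂muS = 2 * π * (F q - F (q - 2 * r)) := by
  rw [zonal_cont hω (f := fun z => F' (r * z - (r - q))) (by fun_prop), mul_left_comm]
  congr 1
  rw [← intervalIntegral.integral_const_mul]
  have h := intervalIntegral.integral_eq_sub_of_hasDerivAt (a := -1) (b := 1)
    (f := fun z => F (r * z - (r - q))) (f' := fun z => r * F' (r * z - (r - q)))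
    (fun z _ => ?_) (Continuous.intervalIntegrable (by fun_prop) _ _)
  · rw [h]; congr 2 <;> ring
  · have h5 : HasDerivAt (fun z => r * z - (r - q)) (r * 1) z :=
      ((hasDerivAt_id z).const_mul r).sub_const _
    refine ((hF _).comp z h5).congr_deriv (by ring)

/-- `zonal_ftc` for `F = arctan`: the gain of a factor `r⁻¹` is uniform in `q`. -/
lemma zonal_arctan_le {ω : E3} (hω : ‖ω‖ = 1) (q r : ℝ) :
    r * ∫ σ, (1 + (r * ⟪ω, σ⟫ - (r - q)) ^ 2)⁻¹ ∂muS ≤ 2 * π * π := by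
  rw [zonal_ftc hω (F := arctan) (F' := fun q => (1 + q ^ 2)⁻¹)
    (fun q => by simpa using Real.hasDerivAt_arctan q)]
  · gcongr
    linarith [Real.arctan_lt_pi_div_two q, Real.neg_pi_div_two_lt_arctan (q - 2 * r)]
  · exact Continuous.inv₀ (by fun_prop) fun q => by positivity

/-- Radiation field of a superposition of plane waves: only directions `σ` near `ω` contribute. -/
lemma fw_rad {K : ℝ → E3 → ℝ} (hK : SmoothOff K) {ω : E3} (hω : ‖ω‖ = 1) {F : ℝ → ℝ}
    (hF : ∀ q, HasDerivAt F (K q ω) q) (hF0 : Tendsto F atBot (𝓝 0))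
    (hu : ∀ ε > 0, ∃ R, ∀ p σ, ‖σ‖ = 1 → R < |p| → |K p σ - K p ω| ≤ ε * (1 + p ^ 2)⁻¹) (q : ℝ) :
    Tendsto (fun r => r * fw K (r - q, r • ω)) atTop (𝓝 (2 * π * F q)) := by
  have hω0 := ne_zero_of_norm_one hω
  have hKc : Continuous fun q => K q ω :=
    continuous_iff_continuousAt.2 fun q => (hK.slice hω0 q).continuousAt
  have hlin : ∀ r : ℝ, Continuous fun σ : E3 => r * ⟪ω, σ⟫ - (r - q) := fun r =>
    (continuous_const.mul (innerSL ℝ ω).continuous).sub continuous_const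
  have hmain : Tendsto (fun r => 2 * π * (F q - F (q - 2 * r))) atTop (𝓝 (2 * π * F q)) := by
    have h1 : Tendsto (fun r : ℝ => q - 2 * r) atTop atBot := by
      have : (fun r : ℝ => q - 2 * r) = fun r => r * (-2) + q := by funext r; ring
      rw [this]
      exact (tendsto_id.atTop_mul_const_of_neg (by norm_num)).atBot_add tendsto_const_nhds
    simpa using ((tendsto_const_nhds (x := F q)).sub (hF0.comp h1)).const_mul (2 * π)
  have hi1 : ∀ r : ℝ, Integrable (fun σ => K (r * ⟪ω, σ⟫ - (r - q)) σ) muS := fun r =>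
    muS_integrable (hK.cont_comp (hlin r))
  have hi2 : ∀ r : ℝ, Integrable (fun σ => K (r * ⟪ω, σ⟫ - (r - q)) ω) muS := fun r =>
    muS_integrable fun σ _ => (hKc.comp (hlin r)).continuousAt
  have herr : Tendsto (fun r => r * ∫ σ, (K (r * ⟪ω, σ⟫ - (r - q)) σ
      - K (r * ⟪ω, σ⟫ - (r - q)) ω) ∂muS) atTop (𝓝 0) := by
    rw [Metric.tendsto_atTop]
    intro ε hε
    set ε' := ε / (2 * (2 * π * π)) with hε'
    have hε'0 : 0 < ε' := by positivity
    obtain ⟨R, hR⟩ := hu ε' hε'0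
    have hnear : ∀ᶠ σ in 𝓝 ω, ∀ p ∈ Icc (-R) R, |K p σ - K p ω| < ε' * (1 + R ^ 2)⁻¹ := by
      -- For bounded phases `|p| ≤ R`, continuity makes `K p σ` close to `K p ω` when `σ` is near
      -- `ω`.
      refine isCompact_Icc.eventually_forall_of_forall_eventually fun p _ => ?_
      have hc : ContinuousAt (fun z : E3 × ℝ => |K z.2 z.1 - K z.2 ω|) (ω, p) := by
        refine ContinuousAt.abs (ContinuousAt.sub ?_ ?_)
        · exact ContinuousAt.comp (g := fun z : ℝ × E3 => K z.1 z.2)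
            (f := fun z : E3 × ℝ => (z.2, z.1)) (hK p ω hω0).continuousAt (by fun_prop)
        · exact (hKc.comp continuous_snd).continuousAt
      exact hc.eventually_lt_const (by simp only [sub_self, abs_zero]; positivity)
    obtain ⟨δ, hδ, hδ'⟩ := Metric.eventually_nhds_iff.1 hnear
    -- Since `r (1 - ⟨ω, σ⟩) = q - p`, for large `r` the bound `|p| ≤ R` forces `|σ - ω| < δ`.
    refine ⟨max 1 (2 * (|q| + |R|) / δ ^ 2 + 1), fun r hr => ?_⟩
    have hr1 : 1 ≤ r := (le_max_left _ _).trans hr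
    have hr2 : 2 * (|q| + |R|) < r * δ ^ 2 := by
      rw [← div_lt_iff₀ (by positivity)]
      linarith [(le_max_right _ _).trans hr]
    have hpt : ∀ σ : E3, ‖σ‖ = 1 → |K (r * ⟪ω, σ⟫ - (r - q)) σ - K (r * ⟪ω, σ⟫ - (r - q)) ω| ≤
        ε' * (1 + (r * ⟪ω, σ⟫ - (r - q)) ^ 2)⁻¹ := by
      intro σ hσ
      set p := r * ⟪ω, σ⟫ - (r - q) with hp
      by_cases hpR : R < |p|
      · exact hR p σ hσ hpR
      · rw [not_lt] at hpR
        have h1 : ‖σ - ω‖ < δ := by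
          refine lt_of_pow_lt_pow_left₀ 2 hδ.le ?_
          rw [norm_sub_sq_unit hω hσ]
          have h2 : r * (1 - ⟪ω, σ⟫) = q - p := by rw [hp]; ring
          have h3 : q - p ≤ |q| + |R| := by
            linarith [le_abs_self q, neg_abs_le p, hpR.trans (le_abs_self R)]
          nlinarith
        have h4 := hδ' (y := σ) (by rwa [dist_eq_norm]) p (abs_le.1 hpR)
        refine h4.le.trans ?_
        have h5 : p ^ 2 ≤ R ^ 2 := sq_le_sq' (abs_le.1 hpR).1 (abs_le.1 hpR).2
        gcongr
    have hI : Integrable (fun σ => (1 + (r * ⟪ω, σ⟫ - (r - q)) ^ 2)⁻¹) muS :=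
      muS_integrable fun σ _ => (Continuous.inv₀
        (f := fun σ : E3 => 1 + (r * ⟪ω, σ⟫ - (r - q)) ^ 2)
        (continuous_const.add ((hlin r).pow 2)) fun σ => by positivity).continuousAt
    rw [dist_zero_right, norm_mul, Real.norm_eq_abs, abs_of_nonneg (by linarith)]
    have h6 := norm_integral_le_of_norm_le
      (f := fun σ => K (r * ⟪ω, σ⟫ - (r - q)) σ - K (r * ⟪ω, σ⟫ - (r - q)) ω) (hI.const_mul ε') (muS_ae.mono fun σ hσ => hpt σ hσ)
    rw [integral_const_mul] at h6
    have h7 := zonal_arctan_le hω q r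
    calc _ ≤ r * (ε' * ∫ σ, (1 + (r * ⟪ω, σ⟫ - (r - q)) ^ 2)⁻¹ ∂muS) := by gcongr
      _ = ε' * (r * ∫ σ, (1 + (r * ⟪ω, σ⟫ - (r - q)) ^ 2)⁻¹ ∂muS) := by ring
      _ ≤ ε' * (2 * π * π) := by gcongr
      _ = ε / 2 := by rw [hε']; field_simp
      _ < ε := by linarith
  have := hmain.add herr
  rw [add_zero] at this
  refine this.congr fun r => ?_
  rw [← zonal_ftc hω hF hKc, ← mul_add, integral_sub (hi1 r) (hi2 r)]
  simp only [fw, real_inner_smul_left]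
  ring

/-! ### The free wave -/

lemma jb_contDiff : ContDiff ℝ (⊤ : ℕ∞) jb :=
  ContDiff.sqrt (by fun_prop) fun q => by positivity

lemma jb_inv_hasDerivAt (q : ℝ) : HasDerivAt (fun q => (jb q)⁻¹) (-q / jb q ^ 3) q := by
  have h1 : HasDerivAt (fun q : ℝ => 1 + q ^ 2) (2 * q) q := by
    simpa using ((hasDerivAt_id q).pow 2).const_add 1
  have h2 : HasDerivAt jb (2 * q / (2 * jb q)) q := h1.sqrt (by positivity)
  refine (h2.fun_inv (jb_pos q).ne').congr_deriv ?_
  have := jb_pos q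
  field_simp

lemma tendsto_inv_one_add_sq : Tendsto (fun q : ℝ => (1 + q ^ 2)⁻¹) atBot (𝓝 0) := by
  refine tendsto_inv_atTop_zero.comp (tendsto_atTop_add_const_left _ 1 ?_)
  exact ((tendsto_pow_atTop two_ne_zero).comp tendsto_abs_atBot_atTop).congr fun q => sq_abs q

lemma tendsto_jb_inv : Tendsto (fun q : ℝ => (jb q)⁻¹) atBot (𝓝 0) := by
  have h := (Real.continuous_sqrt.tendsto 0).comp tendsto_inv_one_add_sq
  rw [Real.sqrt_zero] at h
  refine h.congr fun q => ?_
  simp [jb, Real.sqrt_inv]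

/-- The isotropic part of the radiation field, of size `⟨q⟩⁻¹` inside the light cone. -/
def isoF (χneg : ℝ → ℝ) (c q : ℝ) : ℝ := c * (jb q)⁻¹ * χneg q

lemma isoF_contDiff {χneg : ℝ → ℝ} (hχ : IsCutNeg χneg) (c : ℝ) :
    ContDiff ℝ (⊤ : ℕ∞) (isoF χneg c) :=
  (contDiff_const.mul (jb_contDiff.inv fun q => (jb_pos q).ne')).mul hχ.1

lemma isoF_deriv_neg {χneg : ℝ → ℝ} (hχ : IsCutNeg χneg) (c : ℝ) {q : ℝ} (hq : q < -1) :
    deriv (isoF χneg c) q = c * (-q / jb q ^ 3) := by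
  have h : isoF χneg c =ᶠ[𝓝 q] fun q => c * (jb q)⁻¹ := by
    filter_upwards [Iio_mem_nhds hq] with s hs
    rw [isoF, hχ.2.2.1 s (le_of_lt hs), mul_one]
  rw [h.deriv_eq]
  exact ((jb_inv_hasDerivAt q).const_mul c).deriv

lemma isoF_deriv_pos {χneg : ℝ → ℝ} (hχ : IsCutNeg χneg) (c : ℝ) {q : ℝ} (hq : 0 < q) :
    deriv (isoF χneg c) q = 0 := by
  have h : isoF χneg c =ᶠ[𝓝 q] fun _ => 0 := by
    filter_upwards [Ioi_mem_nhds hq] with s hs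
    rw [isoF, hχ.2.2.2 s (le_of_lt hs), mul_zero]
  rw [h.deriv_eq, deriv_const]

lemma isoF_bound {χneg : ℝ → ℝ} (hχ : IsCutNeg χneg) (c : ℝ) :
    ∃ C, ∀ q, |deriv (isoF χneg c) q| ≤ C * (1 + q ^ 2)⁻¹ := by
  have hcont : Continuous (deriv (isoF χneg c)) :=
    (isoF_contDiff hχ c).continuous_deriv (by simp)
  obtain ⟨B, hB⟩ := (isCompact_Icc (a := (-1:ℝ)) (b := 0)).exists_bound_of_continuousOn
    hcont.continuousOn
  have hB0 : 0 ≤ B := (norm_nonneg _).trans (hB 0 (by simp))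
  refine ⟨|c| + 2 * B, fun q => ?_⟩
  rcases lt_or_ge q (-1) with h | h
  · rw [isoF_deriv_neg hχ c h, abs_mul, abs_div, abs_neg, abs_of_pos (pow_pos (jb_pos q) 3),
      ← jb_sq]
    have h1 := abs_le_jb q
    have h2 := jb_pos q
    calc |c| * (|q| / jb q ^ 3) ≤ |c| * (jb q / jb q ^ 3) := by gcongr
      _ = |c| * (jb q ^ 2)⁻¹ := by field_simp
      _ ≤ (|c| + 2 * B) * (jb q ^ 2)⁻¹ := by gcongr; linarith
  · rcases le_or_gt q 0 with h' | h'
    · have h1 := hB q ⟨h, h'⟩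
      rw [Real.norm_eq_abs] at h1
      refine h1.trans ?_
      rw [← div_eq_mul_inv, le_div_iff₀ (by positivity)]
      have : q ^ 2 ≤ 1 := by nlinarith
      nlinarith [abs_nonneg c]
    · rw [isoF_deriv_pos hχ c h', abs_zero]; positivity

/-- The tail `c q⁻²` of the derivative of `isoF` is what produces the interior limit. -/
lemma isoF_tail {χneg : ℝ → ℝ} (hχ : IsCutNeg χneg) (c : ℝ) :
    Tendsto (fun q => q ^ 2 * deriv (isoF χneg c) q) atBot (𝓝 c) := by
  have h1 : Tendsto (fun q : ℝ => c * (1 - (1 + q ^ 2)⁻¹) * √(1 - (1 + q ^ 2)⁻¹)) atBot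
      (𝓝 (c * (1 - 0) * √(1 - 0))) :=
    ((tendsto_inv_one_add_sq.const_sub 1).const_mul c).mul
      ((Real.continuous_sqrt.tendsto _).comp (tendsto_inv_one_add_sq.const_sub 1))
  rw [sub_zero, Real.sqrt_one, mul_one, mul_one] at h1
  refine h1.congr' ?_
  filter_upwards [eventually_lt_atBot (-1 : ℝ)] with q hq
  rw [isoF_deriv_neg hχ c hq]
  have h2 : (1 - (1 + q ^ 2)⁻¹) = (-q / jb q) ^ 2 := by
    rw [div_pow, jb_sq]
    have : 1 + q ^ 2 ≠ 0 := by positivity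
    field_simp; ring
  have h3 := jb_pos q
  rw [h2, Real.sqrt_sq (div_nonneg (by linarith) h3.le)]
  field_simp

lemma SmoothQSphere.slice {m : ℝ → E3 → ℝ} (hm : SmoothQSphere m) {z : ℝ × E3}
    (hz : z.2 ≠ 0) : ContDiffAt ℝ (⊤ : ℕ∞) (fun p : ℝ × E3 => m p.1 p.2) z :=
  hm.2.contDiffAt ((isOpen_ne_fun continuous_snd continuous_const).mem_nhds
    (s := {p : ℝ × E3 | p.2 ≠ 0}) hz)

lemma SmoothQSphere.hasDerivAt {m : ℝ → E3 → ℝ} (hm : SmoothQSphere m) (q : ℝ) {x : E3}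
    (hx : x ≠ 0) : HasDerivAt (fun s => m s x) (deriv (fun s => m s x) q) q := by
  have h : ContDiffAt ℝ (⊤ : ℕ∞) (fun s => m s x) q :=
    ContDiffAt.comp (g := fun p : ℝ × E3 => m p.1 p.2) (f := fun s => (s, x)) q
      (hm.slice (z := (q, x)) hx) (contDiffAt_id.prodMk contDiffAt_const)
  exact (h.differentiableAt (by simp)).hasDerivAt

/-- One derivative in `q` gains a power of `⟨q⟩`, so the anisotropic part of the profile has no
`q⁻²` tail. -/
lemma SymbolDecay.deriv_bound {G : ℝ → E3 → ℝ} (hd : SymbolDecay 2 G) :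
    ∃ C, 0 ≤ C ∧ ∀ q ω, ‖ω‖ = 1 →
      |deriv (fun s => G s ω) q| ≤ C * (jb q)⁻¹ * (1 + q ^ 2)⁻¹ := by
  obtain ⟨C, hC⟩ := hd 1 []
  refine ⟨|C|, abs_nonneg _, fun q ω hω => ?_⟩
  have h1 := hC q ω hω
  simp only [qIter, pdMulti] at h1
  have h2 := jb_pos q
  rw [abs_mul, abs_of_pos h2] at h1
  have h3 : C * jb q ^ (-2:ℝ) ≤ |C| * (1 + q ^ 2)⁻¹ := by
    have := jb_rpow_le le_rfl q
    have h4 : 0 ≤ jb q ^ (-2:ℝ) := (Real.rpow_pos_of_pos h2 _).le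
    calc C * jb q ^ (-2:ℝ) ≤ |C| * jb q ^ (-2:ℝ) := by gcongr; exact le_abs_self C
      _ ≤ _ := by gcongr
  have h4 := h1.trans h3
  rw [mul_right_comm, ← div_eq_mul_inv, le_div_iff₀ h2, mul_comm]
  exact h4

/-- The homogeneous wave carrying the whole radiation field `F`: the superposition of plane waves
with profile `K = (2π)⁻¹ ∂_q F`. -/
lemma free_part {χneg : ℝ → ℝ} (hχ : IsCutNeg χneg) (c : ℝ) {G : ℝ → E3 → ℝ}
    (hG : SmoothQSphere G) (hd : SymbolDecay 2 G) : ∃ u : ℝ × E3 → ℝ,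
    (∀ p, ContDiffAt ℝ (⊤ : ℕ∞) u p) ∧ (∀ p, boxD u p = 0) ∧
    (∀ q ω, ‖ω‖ = 1 → Tendsto (fun r => r * u (r - q, r • ω)) atTop
      (𝓝 (c * (jb q)⁻¹ * χneg q + G q ω))) ∧
    ∀ x : E3, 0 < ‖x‖ → ‖x‖ < 1 → Tendsto (fun a : ℝ => a ^ 2 * u (a, a • x)) atTop
      (𝓝 (2 * c / (1 - ‖x‖ ^ 2))) := by
  let K : ℝ → E3 → ℝ := fun q σ =>
    (2 * π)⁻¹ * (deriv (isoF χneg c) q + deriv (fun s => G s σ) q)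
  have hpi : 0 < 2 * π := by positivity
  have hK : SmoothOff K := by
    intro q σ hσ
    refine contDiffAt_const.mul (ContDiffAt.add ?_ ?_)
    · have h := (isoF_contDiff hχ c).iterate_deriv 1
      exact (h.contDiffAt (x := q)).comp (f := fun z : ℝ × E3 => z.1) (q, σ) contDiffAt_fst
    · exact (pfd_contDiffAt (n := (⊤ : ℕ∞)) (hG.slice (z := (q, σ)) hσ)).clm_apply
        (contDiffAt_const (c := (1:ℝ)))
  obtain ⟨C1, hC1⟩ := isoF_bound hχ c
  obtain ⟨C2, hC20, hC2⟩ := hd.deriv_bound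
  obtain ⟨C3, hC30, hC3⟩ := hd.bound le_rfl hG.1 []
  have hjb1 : ∀ q, (jb q)⁻¹ ≤ 1 := fun q => inv_le_one_of_one_le₀ (one_le_jb q)
  refine ⟨fw K, fw_smooth hK, fw_box hK, fun q ω hω => ?_, fun x hx0 hx => ?_⟩
  · have hω0 := ne_zero_of_norm_one hω
    have h := fw_rad hK hω (F := fun q => (2 * π)⁻¹ * (isoF χneg c q + G q ω)) (fun q => ?_) ?_ ?_ q
    · rwa [mul_inv_cancel_left₀ hpi.ne'] at h
    · exact ((((isoF_contDiff hχ c).differentiable (by simp)) q).hasDerivAt.add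
        (hG.hasDerivAt q hω0)).const_mul _
    · have h1 : Tendsto (isoF χneg c) atBot (𝓝 0) := by
        have := tendsto_jb_inv.const_mul c
        rw [mul_zero] at this
        refine this.congr' ?_
        filter_upwards [eventually_le_atBot (-1 : ℝ)] with s hs
        rw [isoF, hχ.2.2.1 s hs, mul_one]
      have h2 : Tendsto (fun q => G q ω) atBot (𝓝 0) := by
        refine squeeze_zero_norm (fun q => ?_) (by simpa using tendsto_inv_one_add_sq.const_mul C3)
        simpa [pdMulti] using hC3 q ω hω0
      simpa using (h1.add h2).const_mul (2 * π)⁻¹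
    · intro ε hε
      refine ⟨2 * C2 / (2 * π * ε), fun p σ hσ hp => ?_⟩
      -- The isotropic part cancels, and the derivative of `G` has the extra decay `⟨p⟩⁻¹`.
      have h3 : K p σ - K p ω =
          (2 * π)⁻¹ * (deriv (fun s => G s σ) p - deriv (fun s => G s ω) p) := by
        simp only [K]; ring
      rw [div_lt_iff₀ (by positivity)] at hp
      have h4 := abs_le_jb p
      have h5 := jb_pos p
      have h6 : C2 * (jb p)⁻¹ * 2 ≤ 2 * π * ε := by
        rw [mul_right_comm, ← div_eq_mul_inv, div_le_iff₀ h5]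
        nlinarith [mul_pos hpi hε]
      rw [h3, abs_mul, abs_of_pos (by positivity), inv_mul_le_iff₀ hpi]
      have h7 : 0 < (1 + p ^ 2)⁻¹ := by positivity
      calc _ ≤ |deriv (fun s => G s σ) p| + |deriv (fun s => G s ω) p| := abs_sub _ _
        _ ≤ C2 * (jb p)⁻¹ * (1 + p ^ 2)⁻¹ + C2 * (jb p)⁻¹ * (1 + p ^ 2)⁻¹ :=
          add_le_add (hC2 p σ hσ) (hC2 p ω hω)
        _ = C2 * (jb p)⁻¹ * 2 * (1 + p ^ 2)⁻¹ := by ring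
        _ ≤ 2 * π * ε * (1 + p ^ 2)⁻¹ := by gcongr
        _ = _ := by ring
  · have h := fw_int hK (C := (2 * π)⁻¹ * (C1 + C2)) (c := (2 * π)⁻¹ * c) (fun q σ hσ => ?_)
      (fun σ hσ => ?_) hx0 hx
    · convert h using 2
      field_simp; ring
    · rw [abs_mul, abs_of_pos (by positivity), mul_assoc]
      gcongr
      refine (abs_add_le _ _).trans ?_
      rw [add_mul]
      refine add_le_add (hC1 q) ((hC2 q σ hσ).trans ?_)
      have := hjb1 q
      calc C2 * (jb q)⁻¹ * (1 + q ^ 2)⁻¹ ≤ C2 * 1 * (1 + q ^ 2)⁻¹ := by gcongr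
        _ = _ := by ring
    · have h1 : Tendsto (fun q => q ^ 2 * deriv (fun s => G s σ) q) atBot (𝓝 0) := by
        refine squeeze_zero_norm (fun q => ?_) (by simpa using tendsto_jb_inv.const_mul C2)
        rw [norm_mul, Real.norm_eq_abs, Real.norm_eq_abs, abs_of_nonneg (sq_nonneg q)]
        have h5 := jb_pos q
        calc q ^ 2 * |deriv (fun s => G s σ) q| ≤ q ^ 2 * (C2 * (jb q)⁻¹ * (1 + q ^ 2)⁻¹) := by
              gcongr; exact hC2 q σ hσ
          _ = C2 * (jb q)⁻¹ * (q ^ 2 * (1 + q ^ 2)⁻¹) := by ring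
          _ ≤ C2 * (jb q)⁻¹ * 1 := by
              gcongr
              rw [← div_eq_mul_inv, div_le_one (by positivity)]; linarith
          _ = _ := mul_one _
      have h2 := ((isoF_tail hχ c).add h1).const_mul (2 * π)⁻¹
      rw [add_zero] at h2
      refine h2.congr fun q => ?_
      simp only [K]; ring

/-! ### The source along forward light cones -/

/-- The source with cutoff, with an extra scaling parameter `w` in the cutoff; `w = 1` gives the
source itself and `w = 1 - v` its rescaling along the cone. -/
def core (χ : ℝ → ℝ) (m : ℝ → E3 → ℝ) (w q : ℝ) (y : E3) : ℝ :=
  χ (w * jb q / ‖y‖) * m q y / ‖y‖ ^ 3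

lemma core_zero {χ : ℝ → ℝ} (hχ : IsCutChi χ) (m : ℝ → E3 → ℝ) {w : ℝ} (q : ℝ) {y : E3}
    (hy : ‖y‖ ≤ 2 * w) : core χ m w q y = 0 := by
  rcases eq_or_ne y 0 with rfl | h
  · simp [core]
  · have hn : 0 < ‖y‖ := norm_pos_iff.2 h
    rw [core, hχ.2.2.2, zero_mul, zero_div]
    rw [le_div_iff₀ hn]
    nlinarith [one_le_jb q]

lemma core_smooth {χ : ℝ → ℝ} (hχ : IsCutChi χ) {m : ℝ → E3 → ℝ} (hm : SmoothQSphere m)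
    {Z : Type} [NormedAddCommGroup Z] [NormedSpace ℝ Z] {w q : Z → ℝ} {y : Z → E3} {z : Z}
    (hw : ContDiffAt ℝ (⊤ : ℕ∞) w z) (hq : ContDiffAt ℝ (⊤ : ℕ∞) q z)
    (hy : ContDiffAt ℝ (⊤ : ℕ∞) y z) (h0 : y z ≠ 0) :
    ContDiffAt ℝ (⊤ : ℕ∞) (fun z => core χ m (w z) (q z) (y z)) z := by
  have hn : ContDiffAt ℝ (⊤ : ℕ∞) (fun z => ‖y z‖) z := hy.norm ℝ h0
  have hn0 : ‖y z‖ ≠ 0 := norm_ne_zero_iff.2 h0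
  have hj : ContDiffAt ℝ (⊤ : ℕ∞) (fun z => jb (q z)) z := jb_contDiff.contDiffAt.comp z hq
  have h1 : ContDiffAt ℝ (⊤ : ℕ∞) (fun z => χ (w z * jb (q z) / ‖y z‖)) z :=
    hχ.1.contDiffAt.comp z ((hw.mul hj).div hn hn0)
  have h2 : ContDiffAt ℝ (⊤ : ℕ∞) (fun z => m (q z) (y z)) z :=
    ContDiffAt.comp (g := fun p : ℝ × E3 => m p.1 p.2) (f := fun z => (q z, y z)) z
      (hm.slice (z := (q z, y z)) h0) (hq.prodMk hy)
  exact (h1.mul h2).div (hn.pow 3) (pow_ne_zero 3 hn0)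

/-- The source term. -/
def src (χ : ℝ → ℝ) (m : ℝ → E3 → ℝ) (p : ℝ × E3) : ℝ := core χ m 1 (‖p.2‖ - p.1) p.2

/-- The rescaled point `(1 - v) x + v σ` on the compactified forward cone of `(t, x)`. -/
def yv (z : (ℝ × E3) × (ℝ × E3)) : E3 := (1 - z.2.1) • z.1.2 + z.2.1 • z.2.2

/-- The value of `r - t` at the point of the forward cone with parameter `(v, σ)`. For `v < 1` it
equals `(‖yv‖ - v) / (1 - v) - t`; the quotient used here extends smoothly to `v = 1`. -/
def qv (z : (ℝ × E3) × (ℝ × E3)) : ℝ :=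
  ((1 - z.2.1) * ‖z.1.2‖ ^ 2 + 2 * z.2.1 * ⟪z.1.2, z.2.2⟫) / (‖yv z‖ + z.2.1) - z.1.1

/-- The source along the forward light cone of `(t, x)`, in the compactified affine parameter
`v = s / (1 + s)`, and rescaled by `(1 - v)⁻³` so as to be smooth up to `v = 1`. -/
def srcH (χ : ℝ → ℝ) (m : ℝ → E3 → ℝ) (z : (ℝ × E3) × (ℝ × E3)) : ℝ :=
  core χ m (1 - z.2.1) (qv z) (yv z)

lemma yv_smooth : ContDiff ℝ (⊤ : ℕ∞) yv := by unfold yv; fun_prop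

lemma srcH_joint {χ : ℝ → ℝ} (hχ : IsCutChi χ) {m : ℝ → E3 → ℝ} (hm : SmoothQSphere m)
    (p : ℝ × E3) {v : ℝ} (hv : v ∈ Icc (0:ℝ) 1) {σ : E3} (hσ : ‖σ‖ = 1) :
    ContDiffAt ℝ (⊤ : ℕ∞) (srcH χ m) (p, (v, σ)) := by
  have hw : ContDiff ℝ (⊤ : ℕ∞) fun z : (ℝ × E3) × (ℝ × E3) => 1 - z.2.1 := by fun_prop
  -- If `yv = 0` then `v < 1`, and the cutoff makes `srcH` vanish nearby.
  by_cases h0 : yv (p, (v, σ)) = 0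
  · have hw0 : 0 < 1 - v := by
      refine lt_of_le_of_ne (by linarith [hv.2]) fun h => ?_
      have hv1 : v = 1 := by linarith
      subst hv1
      simp [yv] at h0
      simp [h0] at hσ
    have hev : ∀ᶠ z in 𝓝 ((p, (v, σ)) : (ℝ × E3) × (ℝ × E3)), ‖yv z‖ < 2 * (1 - z.2.1) := by
      refine (yv_smooth.continuous.norm.continuousAt).eventually_lt
        ((continuous_const.mul hw.continuous).continuousAt) ?_
      simp only [h0, norm_zero]; linarith
    refine contDiffAt_const.congr_of_eventuallyEq (f := fun _ => (0:ℝ)) ?_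
    filter_upwards [hev] with z hz
    exact core_zero hχ m _ hz.le
  · refine core_smooth hχ hm hw.contDiffAt ?_ yv_smooth.contDiffAt h0
    unfold qv
    have hn : 0 < ‖yv (p, (v, σ))‖ := norm_pos_iff.2 h0
    have hv0 := hv.1
    refine ContDiffAt.sub (ContDiffAt.div ?_ ?_ (by simp only; linarith)) (by fun_prop)
    · refine ContDiffAt.add (hw.contDiffAt.mul ?_) (ContDiffAt.mul (by fun_prop) ?_)
      · exact ((contDiff_norm_sq ℝ).comp (contDiff_snd.comp contDiff_fst)).contDiffAt
      · exact ContDiffAt.inner ℝ (by fun_prop) (by fun_prop)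
    · exact (yv_smooth.contDiffAt.norm ℝ h0).add (by fun_prop)

lemma srcH_slice {χ : ℝ → ℝ} (hχ : IsCutChi χ) {m : ℝ → E3 → ℝ} (hm : SmoothQSphere m)
    (p : ℝ × E3) {v : ℝ} (hv : v ∈ Icc (0:ℝ) 1) {σ : E3} (hσ : ‖σ‖ = 1) :
    ContDiffAt ℝ (⊤ : ℕ∞) (fun p => srcH χ m (p, (v, σ))) p :=
  (srcH_joint hχ hm p hv hσ).comp (f := fun p : ℝ × E3 => (p, (v, σ))) p
    (contDiffAt_id.prodMk contDiffAt_const)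

lemma srcH_zero_param {χ : ℝ → ℝ} (m : ℝ → E3 → ℝ) (p : ℝ × E3) (σ : E3) :
    srcH χ m (p, (0, σ)) = src χ m p := by
  have hy : yv (p, (0, σ)) = p.2 := by simp [yv]
  unfold srcH src
  rw [hy]
  rcases eq_or_ne p.2 0 with h | h
  · simp [core, h]
  · have hn : ‖p.2‖ ≠ 0 := norm_ne_zero_iff.2 h
    have hq : qv (p, (0, σ)) = ‖p.2‖ - p.1 := by
      simp only [qv, hy, sub_zero, mul_zero, zero_mul, add_zero, one_mul]
      field_simp
    rw [hq, sub_zero]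

lemma src_smooth {χ : ℝ → ℝ} (hχ : IsCutChi χ) {m : ℝ → E3 → ℝ} (hm : SmoothQSphere m)
    (p : ℝ × E3) : ContDiffAt ℝ (⊤ : ℕ∞) (src χ m) p := by
  have := srcH_slice hχ hm p (v := 0) (by simp) (bv_norm 0)
  simpa only [srcH_zero_param] using this

/-- For `v < 1` the compactified integrand is the source itself at affine distance
`s = v / (1 - v)` along the forward light ray of direction `σ`. -/
lemma srcH_eq {χ : ℝ → ℝ} {m : ℝ → E3 → ℝ} (hm : SmoothQSphere m)
    (p : ℝ × E3) {v : ℝ} (hv0 : 0 ≤ v) (hv1 : v < 1) {σ : E3} (hσ : ‖σ‖ = 1) :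
    srcH χ m (p, (v, σ)) =
      ((1 - v) ^ 3)⁻¹ * src χ m (p + (v / (1 - v)) • ((1 : ℝ), σ)) := by
  have hw : 0 < 1 - v := by linarith
  set s := v / (1 - v) with hs
  have hsv : s * (1 - v) = v := by rw [hs]; field_simp
  have hs0 : 0 ≤ s := by positivity
  set Y : E3 := p.2 + s • σ with hY
  have hy : yv (p, (v, σ)) = (1 - v) • Y := by
    simp only [yv, hY, smul_add, smul_smul]
    rw [mul_comm (1 - v) s, hsv]
  have hP : p + s • ((1 : ℝ), σ) = (p.1 + s, Y) := by
    ext <;> simp [hY]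
  rw [hP]
  unfold srcH src
  simp only [hy]
  rcases eq_or_ne Y 0 with h | h
  · simp [core, h]
  · have hn : 0 < ‖Y‖ := norm_pos_iff.2 h
    have hny : ‖(1 - v) • Y‖ = (1 - v) * ‖Y‖ := by
      rw [norm_smul, Real.norm_eq_abs, abs_of_pos hw]
    have hsq : ‖Y‖ ^ 2 = ‖p.2‖ ^ 2 + 2 * (s * ⟪p.2, σ⟫) + s ^ 2 := by
      rw [hY, norm_add_sq_real, real_inner_smul_right, norm_smul, hσ, mul_one,
        Real.norm_eq_abs, sq_abs]
    have hq : qv (p, (v, σ)) = ‖Y‖ - (p.1 + s) := by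
      simp only [qv, hy, hny]
      rw [sub_eq_sub_iff_add_eq_add, div_add' _ _ _ (by positivity), div_eq_iff (by positivity)]
      clear_value s
      linear_combination (-(1 - v)) * hsq + (‖Y‖ - s - 2 * ⟪p.2, σ⟫) * hsv
    unfold core
    rw [hq, hm.1 _ _ hw Y, hny, mul_div_mul_left _ _ hw.ne', one_mul]
    field_simp

/-! ### Integration along light rays -/

lemma D2_comp_affine {P P' : Type} [NormedAddCommGroup P] [NormedSpace ℝ P]
    [NormedAddCommGroup P'] [NormedSpace ℝ P'] {u : P → ℝ} (c : P) (L : P' →L[ℝ] P) {y : P'}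
    (hu : ContDiffAt ℝ 2 u (c + L y)) (v w : P') :
    D2 (fun y => u (c + L y)) y v w = D2 u (c + L y) (L v) (L w) := by
  have hA : ∀ y, HasFDerivAt (fun y => c + L y) L y := fun y => L.hasFDerivAt.const_add c
  have hc : ContinuousAt (fun y => c + L y) y := (hA y).continuousAt
  have hg : ContDiffAt ℝ 2 (fun y => u (c + L y)) y :=
    ContDiffAt.comp (f := fun y => c + L y) y hu (contDiffAt_const.add L.contDiff.contDiffAt)
  rw [← D2_eq_fderiv hg, ← D2_eq_fderiv hu]
  have h1 : (fun y => fderiv ℝ (fun y => u (c + L y)) y w) =ᶠ[𝓝 y]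
      fun y => fderiv ℝ u (c + L y) (L w) := by
    filter_upwards [hc.eventually (hu.eventually (by simp))] with z hz
    have h : HasFDerivAt (fun y => u (c + L y)) ((fderiv ℝ u (c + L z)).comp L) z :=
      (hz.differentiableAt two_ne_zero).hasFDerivAt.comp z (hA z)
    rw [h.fderiv]
    rfl
  have h2 : DifferentiableAt ℝ (fun z => fderiv ℝ u z (L w)) (c + L y) :=
    (fderiv_differentiableAt hu).clm_apply (differentiableAt_const _)
  have h3 : HasFDerivAt (fun y => fderiv ℝ u (c + L y) (L w))
      ((fderiv ℝ (fun z => fderiv ℝ u z (L w)) (c + L y)).comp L) y :=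
    HasFDerivAt.comp (g := fun z => fderiv ℝ u z (L w)) (f := fun y => c + L y) y h2.hasFDerivAt
      (hA y)
  rw [h1.fderiv_eq, h3.fderiv]
  rfl

lemma D2_symm {P : Type} [NormedAddCommGroup P] [NormedSpace ℝ P] {u : P → ℝ} {p : P}
    (hu : ContDiffAt ℝ 2 u p) (v w : P) : D2 u p v w = D2 u p w v :=
  (hu.isSymmSndFDerivAt (by simp)) v w

/-- The boundary term `s (∂ₜ - ∂_σ) u - u` at affine distance `s` along the forward light ray from
`p` in direction `σ`. The derivative in `s` of its integral over `σ` is the integral of `s □u`. -/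
def rayB (u : ℝ × E3 → ℝ) (p : ℝ × E3) (s : ℝ) (σ : E3) : ℝ :=
  s * fderiv ℝ u (p + s • ((1 : ℝ), σ)) (1, -σ) - u (p + s • ((1 : ℝ), σ))

lemma rayB_joint {u : ℝ × E3 → ℝ} (hu : ∀ p, ContDiffAt ℝ (⊤ : ℕ∞) u p) (p : ℝ × E3)
    (z : ℝ × E3) : ContDiffAt ℝ (⊤ : ℕ∞) (fun z : ℝ × E3 => rayB u p z.1 z.2) z := by
  have hc : ContDiffAt ℝ (⊤ : ℕ∞) (fun z : ℝ × E3 => p + z.1 • ((1 : ℝ), z.2)) z := by fun_prop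
  have hd : ContDiff ℝ (⊤ : ℕ∞) (fderiv ℝ u) :=
    (contDiff_iff_contDiffAt.2 hu).fderiv_right (m := (⊤ : ℕ∞)) (by simp)
  refine ContDiffAt.sub (contDiffAt_fst.mul (ContDiffAt.clm_apply ?_ (by fun_prop))) ?_
  · exact hd.contDiffAt.comp (f := fun z : ℝ × E3 => p + z.1 • ((1 : ℝ), z.2)) z hc
  · exact (hu _).comp (f := fun z : ℝ × E3 => p + z.1 • ((1 : ℝ), z.2)) z hc

lemma ray_hasDerivAt (p V : ℝ × E3) (s : ℝ) : HasDerivAt (fun s : ℝ => p + s • V) V s :=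
  line_hasDerivAt p V s

lemma rayB_hasDerivAt {u : ℝ × E3 → ℝ} (hu : ∀ p, ContDiffAt ℝ (⊤ : ℕ∞) u p) (p : ℝ × E3)
    (s : ℝ) (σ : E3) : HasDerivAt (fun s => rayB u p s σ)
      (s * (D2 u (p + s • ((1 : ℝ), σ)) (1, 0) (1, 0) - D2 u (p + s • ((1 : ℝ), σ)) (0, σ) (0, σ))
        - 2 * fderiv ℝ u (p + s • ((1 : ℝ), σ)) (0, σ)) s := by
  have hray := ray_hasDerivAt p ((1 : ℝ), σ) s
  set P := p + s • ((1 : ℝ), σ) with hP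
  have h1 : HasDerivAt (fun s : ℝ => u (p + s • ((1 : ℝ), σ))) (fderiv ℝ u P (1, σ)) s :=
    ((hu P).differentiableAt (by simp)).hasFDerivAt.comp_hasDerivAt s hray
  have h2 : HasDerivAt (fun s : ℝ => fderiv ℝ u (p + s • ((1 : ℝ), σ)) (1, -σ))
      (D2 u P (1, σ) (1, -σ)) s := by
    have hd : DifferentiableAt ℝ (fun z => fderiv ℝ u z (1, -σ)) P :=
      (fderiv_differentiableAt (hu P).two).clm_apply (differentiableAt_const _)
    rw [← D2_eq_fderiv (hu P).two]
    exact hd.hasFDerivAt.comp_hasDerivAt s hray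
  refine (((hasDerivAt_id s).mul h2).sub h1).congr_deriv ?_
  have e1 : ((1 : ℝ), σ) = (1, 0) + (0, σ) := by simp
  have e2 : ((1 : ℝ), -σ) = (1, 0) - (0, σ) := by simp
  have h3 := D2_symm (hu P).two (1, 0) (0, σ)
  simp only [id, one_mul, ← hP]
  rw [e1, e2]
  unfold D2 at *
  simp only [map_add, map_sub, _root_.add_apply]
  linear_combination s * (-h3)

/-- Mean-value identity: integrating over the sphere turns the radial second derivative into the
full Laplacian. -/
lemma rayB_deriv_integral {u : ℝ × E3 → ℝ} (hu : ∀ p, ContDiffAt ℝ (⊤ : ℕ∞) u p) (p : ℝ × E3)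
    {s : ℝ} (hs : s ≠ 0) :
    ∫ σ, (s * (D2 u (p + s • ((1 : ℝ), σ)) (1, 0) (1, 0)
        - D2 u (p + s • ((1 : ℝ), σ)) (0, σ) (0, σ))
        - 2 * fderiv ℝ u (p + s • ((1 : ℝ), σ)) (0, σ)) ∂muS =
      ∫ σ, s * boxD u (p + s • ((1 : ℝ), σ)) ∂muS := by
  have hu' := contDiff_iff_contDiffAt.2 hu
  have hd : ContDiff ℝ (⊤ : ℕ∞) (fderiv ℝ u) := hu'.fderiv_right (m := (⊤ : ℕ∞)) (by simp)
  have hdd : ContDiff ℝ (⊤ : ℕ∞) (fderiv ℝ (fderiv ℝ u)) :=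
    hd.fderiv_right (m := (⊤ : ℕ∞)) (by simp)
  have hray : Continuous fun σ : E3 => p + s • ((1 : ℝ), σ) := by fun_prop
  have hD2 : ∀ V W : E3 → ℝ × E3, Continuous V → Continuous W →
      Continuous fun σ => D2 u (p + s • ((1 : ℝ), σ)) (V σ) (W σ) := fun V W hV hW =>
    ((hdd.continuous.comp hray).clm_apply hV).clm_apply hW
  let c : ℝ × E3 := (p.1 + s, p.2)
  let L : E3 →L[ℝ] ℝ × E3 := s • ContinuousLinearMap.inr ℝ ℝ E3
  have hL : ∀ y, L y = (0, s • y) := fun y => by simp [L]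
  have hcL : ∀ σ, c + L σ = p + s • ((1 : ℝ), σ) := fun σ => by
    rw [hL]; ext <;> simp [c]
  have hg : ∀ σ, ContDiffAt ℝ 2 (fun y => u (c + L y)) σ := fun σ =>
    (hu'.comp (contDiff_const.add L.contDiff)).contDiffAt.two
  -- The Laplacian on the unit sphere of `y ↦ u (t + s, x + s y)` has zero mean.
  have h0 := integral_sphLap (g := fun y => u (c + L y)) fun σ _ => hg σ
  have hv : ∀ (σ V : E3), L V = s • ((0 : ℝ), V) := fun σ V => by rw [hL]; simp
  have hlap : ∀ σ, sphLap (fun y => u (c + L y)) σ =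
      s * (s * ∑ i, D2 u (p + s • ((1 : ℝ), σ)) (0, bv i) (0, bv i)
        - 2 * fderiv ℝ u (p + s • ((1 : ℝ), σ)) (0, σ)
        - s * D2 u (p + s • ((1 : ℝ), σ)) (0, σ) (0, σ)) := by
    intro σ
    have h1 : ∀ V W, D2 (fun y => u (c + L y)) σ V W =
        s * (s * D2 u (p + s • ((1 : ℝ), σ)) (0, V) (0, W)) := by
      intro V W
      rw [D2_comp_affine c L (hu _).two, hcL, hv σ, hv σ]
      unfold D2
      simp only [map_smul, _root_.smul_apply, smul_eq_mul]
    have h2 : fderiv ℝ (fun y => u (c + L y)) σ σ =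
        s * fderiv ℝ u (p + s • ((1 : ℝ), σ)) (0, σ) := by
      have := (((hu (c + L σ)).differentiableAt (by simp)).hasFDerivAt.comp σ
        (L.hasFDerivAt.const_add c)).fderiv
      have h3 : fderiv ℝ (fun y => u (c + L y)) σ = _ := this
      rw [h3, ContinuousLinearMap.comp_apply, hcL, hv σ, map_smul, smul_eq_mul]
    unfold sphLap
    simp only [h1, h2, ← Finset.mul_sum]
    ring
  simp only [hlap] at h0
  rw [integral_const_mul] at h0
  have h4 := (mul_eq_zero.1 h0).resolve_left hs
  have hc1 : ∀ V W : E3 → ℝ × E3, Continuous V → Continuous W → Integrable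
      (fun σ => D2 u (p + s • ((1 : ℝ), σ)) (V σ) (W σ)) muS := fun V W hV hW =>
    muS_integrable fun σ _ => (hD2 V W hV hW).continuousAt
  have hc2 : Integrable (fun σ => fderiv ℝ u (p + s • ((1 : ℝ), σ)) (0, σ)) muS :=
    muS_integrable fun σ _ =>
      ((hd.continuous.comp hray).clm_apply (by fun_prop)).continuousAt
  have hi1 := ((((hc1 (fun _ => (1, 0)) (fun _ => (1, 0)) (by fun_prop) (by fun_prop)).sub
    (hc1 (fun σ => (0, σ)) (fun σ => (0, σ)) (by fun_prop) (by fun_prop))).const_mul s).sub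
    (hc2.const_mul 2))
  have hi2 := ((hc1 (fun _ => (1, 0)) (fun _ => (1, 0)) (by fun_prop) (by fun_prop)).sub
    (integrable_finsetSum Finset.univ fun i _ =>
      hc1 (fun _ => (0, bv i)) (fun _ => (0, bv i)) (by fun_prop) (by fun_prop))).const_mul s
  rw [← sub_eq_zero]
  refine (integral_sub hi1 hi2).symm.trans ((integral_congr_ae (Eventually.of_forall fun σ => ?_)).trans h4)
  simp only [Pi.sub_apply]
  ring

/-! ### Kirchhoff's formula -/

/-- The parameter domain of the compactified forward light cone: the affine parameter `v ∈ [0, 1]`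
and the direction `σ ∈ S²`. -/
def coneK : Set (ℝ × E3) := Icc (0:ℝ) 1 ×ˢ S2

/-- The product of Lebesgue measure on `[0, 1]` and surface measure. -/
def coneM : Measure (ℝ × E3) := (volume.restrict (Icc (0:ℝ) 1)).prod muS

instance : IsFiniteMeasure coneM := by unfold coneM; infer_instance

lemma coneK_compact : IsCompact coneK := isCompact_Icc.prod S2_compact

lemma coneM_compl : coneM coneKᶜ = 0 := by
  have hs : coneKᶜ = ((Icc (0:ℝ) 1)ᶜ ×ˢ (univ : Set E3)) ∪ ((univ : Set ℝ) ×ˢ S2ᶜ) := by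
    ext z; simp only [coneK, mem_compl_iff, mem_prod, mem_union, mem_univ]; tauto
  rw [hs]
  refine measure_union_null ?_ ?_
  · rw [coneM, Measure.prod_prod, Measure.restrict_apply measurableSet_Icc.compl]; simp
  · rw [coneM, Measure.prod_prod, muS_compl, mul_zero]

lemma coneM_integral {f : ℝ × E3 → ℝ} (hf : Integrable f coneM) :
    ∫ z, f z ∂coneM = ∫ v in (0:ℝ)..1, ∫ σ, f (v, σ) ∂muS := by
  rw [intervalIntegral.integral_of_le zero_le_one, ← integral_Icc_eq_integral_Ioc, coneM,
    integral_prod _ hf]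

lemma coneM_intervalIntegrable {f : ℝ × E3 → ℝ} (hf : Integrable f coneM) :
    IntervalIntegrable (fun v => ∫ σ, f (v, σ) ∂muS) volume 0 1 := by
  rw [intervalIntegrable_iff_integrableOn_Icc_of_le zero_le_one]
  exact Integrable.integral_prod_left hf

section Kirchhoff

variable {χ : ℝ → ℝ} {m : ℝ → E3 → ℝ}

lemma coneK_smooth (hχ : IsCutChi χ) (hm : SmoothQSphere m) (p : ℝ × E3) {z : ℝ × E3}
    (hz : z ∈ coneK) : ContDiffAt ℝ (⊤ : ℕ∞) (srcH χ m) (p, z) :=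
  srcH_joint hχ hm p hz.1 (by simpa using hz.2)

/-- The boundary term `rayB` in the compactified parameter. -/
def bdry (χ : ℝ → ℝ) (m : ℝ → E3 → ℝ) (p z : ℝ × E3) : ℝ :=
  (1 - z.1) ^ 2 * z.1 * pfd (srcH χ m) (p, z) (1, -z.2) - (1 - z.1) ^ 3 * srcH χ m (p, z)

lemma bdry_smooth (hχ : IsCutChi χ) (hm : SmoothQSphere m) (p : ℝ × E3) {z : ℝ × E3}
    (hz : z ∈ coneK) : ContDiffAt ℝ (⊤ : ℕ∞) (bdry χ m p) z := by
  have hc : ContDiffAt ℝ (⊤ : ℕ∞) (fun z : ℝ × E3 => (p, z)) z := by fun_prop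
  have h1 := coneK_smooth hχ hm p hz
  have h2 : ContDiffAt ℝ (⊤ : ℕ∞) (pfd (srcH χ m)) (p, z) := pfd_contDiffAt (by simpa using h1)
  unfold bdry
  refine ContDiffAt.sub (ContDiffAt.mul (by fun_prop) (ContDiffAt.clm_apply ?_ (by fun_prop)))
    (ContDiffAt.mul (by fun_prop) ?_)
  · exact h2.comp (f := fun z : ℝ × E3 => (p, z)) z hc
  · exact h1.comp (f := fun z : ℝ × E3 => (p, z)) z hc

/-- For `v < 1` the powers of `1 - v` in `bdry` cancel those in `srcH`. -/
lemma bdry_eq (hχ : IsCutChi χ) (hm : SmoothQSphere m) (p : ℝ × E3) {v : ℝ} (hv0 : 0 ≤ v)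
    (hv1 : v < 1) {σ : E3} (hσ : ‖σ‖ = 1) :
    bdry χ m p (v, σ) = rayB (src χ m) p (v / (1 - v)) σ := by
  have hw : 1 - v ≠ 0 := by linarith
  have h1 : (fun p => srcH χ m (p, (v, σ))) =
      fun p => ((1 - v) ^ 3)⁻¹ * src χ m (p + (v / (1 - v)) • ((1 : ℝ), σ)) := by
    funext p; exact srcH_eq hm p hv0 hv1 hσ
  have h2 : pfd (srcH χ m) (p, (v, σ)) =
      ((1 - v) ^ 3)⁻¹ • fderiv ℝ (src χ m) (p + (v / (1 - v)) • ((1 : ℝ), σ)) := by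
    unfold pfd
    simp only [h1]
    rw [fderiv_const_mul, fderiv_comp_add_right]
    exact (((src_smooth hχ hm _).differentiableAt (by simp)).comp p (by fun_prop))
  unfold bdry rayB
  rw [h2, srcH_eq hm p hv0 hv1 hσ]
  simp only [_root_.smul_apply, smul_eq_mul]
  field_simp

lemma boxD_srcH (hχ : IsCutChi χ) (hm : SmoothQSphere m) (p : ℝ × E3) {v : ℝ} (hv0 : 0 ≤ v)
    (hv1 : v < 1) {σ : E3} (hσ : ‖σ‖ = 1) :
    boxD (fun p => srcH χ m (p, (v, σ))) p =
      ((1 - v) ^ 3)⁻¹ * boxD (src χ m) (p + (v / (1 - v)) • ((1 : ℝ), σ)) := by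
  have h1 : (fun p => srcH χ m (p, (v, σ))) =
      fun p => ((1 - v) ^ 3)⁻¹ * src χ m ((v / (1 - v)) • ((1 : ℝ), σ) +
        ContinuousLinearMap.id ℝ (ℝ × E3) p) := by
    funext p; rw [srcH_eq hm p hv0 hv1 hσ, add_comm]; rfl
  have h2 : ∀ V W, D2 (fun p => srcH χ m (p, (v, σ))) p V W =
      ((1 - v) ^ 3)⁻¹ * D2 (src χ m) (p + (v / (1 - v)) • ((1 : ℝ), σ)) V W := by
    intro V W
    rw [h1, D2_const_mul, D2_comp_affine _ (ContinuousLinearMap.id ℝ (ℝ × E3))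
      (src_smooth hχ hm _).two, add_comm]
    · rfl
    · refine ContDiffAt.two ?_
      exact (src_smooth hχ hm _).comp p (by fun_prop)
  unfold boxD
  simp only [h2, ← Finset.mul_sum]
  ring

/-- The integrand of Kirchhoff's formula is an exact derivative in `v`; this is
`rayB_deriv_integral` in the compactified parameter. -/
lemma bdry_hasDerivAt (hχ : IsCutChi χ) (hm : SmoothQSphere m) (p : ℝ × E3) {v : ℝ}
    (hv : v ∈ Ioo (0:ℝ) 1) : HasDerivAt (fun v => ∫ σ, bdry χ m p (v, σ) ∂muS)
      (∫ σ, v * boxD (fun p => srcH χ m (p, (v, σ))) p ∂muS) v := by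
  have hs0 : v / (1 - v) ≠ 0 := (div_pos hv.1 (by linarith [hv.2])).ne'
  have hw : 1 - v ≠ 0 := by linarith [hv.2]
  set s := v / (1 - v) with hs
  have hu := src_smooth hχ hm
  have h1 : HasDerivAt (fun s => ∫ σ, rayB (src χ m) p s σ ∂muS)
      (∫ σ, s * boxD (src χ m) (p + s • ((1 : ℝ), σ)) ∂muS) s := by
    rw [← rayB_deriv_integral hu p hs0]
    have h := param_hasFDerivAt (μ := muS) S2_compact muS_compl
      (f := fun z : ℝ × E3 => rayB (src χ m) p z.1 z.2) (p0 := s)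
      (fun y _ => (rayB_joint hu p (s, y)).of_le (by simp))
    have hi : Integrable (fun σ => pfd (fun z : ℝ × E3 => rayB (src χ m) p z.1 z.2) (s, σ)) muS :=
      slice_integrable S2_compact muS_compl fun y _ => slice_continuousAt
        (pfd_contDiffAt (n := 0)
          ((rayB_joint hu p (s, y)).of_le (by simp))).continuousAt
    refine h.hasDerivAt.congr_deriv ?_
    rw [ContinuousLinearMap.integral_apply hi]
    refine integral_congr_ae (Eventually.of_forall fun σ => ?_)
    exact (rayB_hasDerivAt hu p s σ).deriv
  have h2 : HasDerivAt (fun v : ℝ => v / (1 - v)) ((1 - v) ^ 2)⁻¹ v := by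
    refine ((hasDerivAt_id v).fun_div ((hasDerivAt_id v).const_sub 1) hw).congr_deriv ?_
    simp only [id]
    field_simp
    ring
  have h3 := HasDerivAt.comp v (h₂ := fun s => ∫ σ, rayB (src χ m) p s σ ∂muS) h1 h2
  refine (h3.congr_of_eventuallyEq ?_).congr_deriv ?_
  · filter_upwards [Ioo_mem_nhds hv.1 hv.2] with x hx
    refine integral_congr_ae ?_
    filter_upwards [muS_ae] with σ hσ
    exact bdry_eq hχ hm p hx.1.le hx.2 hσ
  · rw [← integral_mul_const]
    refine integral_congr_ae ?_
    filter_upwards [muS_ae] with σ hσ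
    rw [boxD_srcH hχ hm p hv.1.le hv.2 hσ]
    simp only [hs]
    field_simp

lemma boxD_cont (hχ : IsCutChi χ) (hm : SmoothQSphere m) (p : ℝ × E3) {z : ℝ × E3}
    (hz : z ∈ coneK) (V W : ℝ × E3) :
    ContinuousAt (fun z : ℝ × E3 => D2 (fun p => srcH χ m (p, z)) p V W) z := by
  have h1 := coneK_smooth hχ hm p hz
  have h2 : ContDiffAt ℝ (⊤ : ℕ∞) (pfd (srcH χ m)) (p, z) := pfd_contDiffAt (by simpa using h1)
  have h3 : ContDiffAt ℝ (⊤ : ℕ∞) (pfd (pfd (srcH χ m))) (p, z) :=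
    pfd_contDiffAt (by simpa using h2)
  have h4 : ContinuousAt (fun z : ℝ × E3 => pfd (pfd (srcH χ m)) (p, z)) z :=
    slice_continuousAt h3.continuousAt
  exact (h4.clm_apply continuousAt_const).clm_apply continuousAt_const

/-- The advanced potential: the superposition `(4π)⁻¹ ∫∫ s src ds dσ` of the source over the
forward light cone of `p`, written in the parameter `v = s / (1 + s)`, in which `s ds` becomes `(1
- v)⁻³ v dv` and `srcH` absorbs `(1 - v)⁻³`. -/
def pot (χ : ℝ → ℝ) (m : ℝ → E3 → ℝ) (p : ℝ × E3) : ℝ :=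
  (4 * π)⁻¹ * ∫ z, z.1 * srcH χ m (p, z) ∂coneM

lemma pot_integrand_smooth (hχ : IsCutChi χ) (hm : SmoothQSphere m) (p : ℝ × E3) {z : ℝ × E3}
    (hz : z ∈ coneK) :
    ContDiffAt ℝ (⊤ : ℕ∞) (fun w : (ℝ × E3) × (ℝ × E3) => w.2.1 * srcH χ m (w.1, w.2)) (p, z) :=
  ContDiffAt.mul (by fun_prop) (coneK_smooth hχ hm p hz)

lemma pot_smooth (hχ : IsCutChi χ) (hm : SmoothQSphere m) (p : ℝ × E3) :
    ContDiffAt ℝ (⊤ : ℕ∞) (pot χ m) p := by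
  refine contDiffAt_const.mul ?_
  exact param_contDiffAt coneK_compact coneM_compl
    (f := fun w : (ℝ × E3) × (ℝ × E3) => w.2.1 * srcH χ m (w.1, w.2))
    fun z hz => pot_integrand_smooth hχ hm p hz

/-- Kirchhoff's formula: the potential solves the inhomogeneous wave equation. -/
lemma pot_box (hχ : IsCutChi χ) (hm : SmoothQSphere m) (p : ℝ × E3) :
    boxD (pot χ m) p = src χ m p := by
  have hint : ∀ p : ℝ × E3, ContDiffAt ℝ (⊤ : ℕ∞) (fun p => ∫ z, z.1 * srcH χ m (p, z) ∂coneM) p :=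
    fun p => param_contDiffAt coneK_compact coneM_compl
      (f := fun w : (ℝ × E3) × (ℝ × E3) => w.2.1 * srcH χ m (w.1, w.2))
      fun z hz => pot_integrand_smooth hχ hm p hz
  have hIs : ∀ V W, Integrable
      (fun z : ℝ × E3 => z.1 * D2 (fun p => srcH χ m (p, z)) p V W) coneM := fun V W =>
    slice_integrable coneK_compact coneM_compl fun z hz =>
      continuousAt_fst.mul (boxD_cont hχ hm p hz V W)
  have hD : ∀ V W, D2 (pot χ m) p V W =
      (4 * π)⁻¹ * ∫ z, z.1 * D2 (fun p => srcH χ m (p, z)) p V W ∂coneM := by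
    intro V W
    unfold pot
    rw [D2_const_mul (hint p).two]
    congr 1
    refine (param_D2 coneK_compact coneM_compl
      (f := fun w : (ℝ × E3) × (ℝ × E3) => w.2.1 * srcH χ m (w.1, w.2))
      (fun z hz => (pot_integrand_smooth hχ hm p hz).two) V W).trans ?_
    refine integral_congr_ae ?_
    filter_upwards [mem_ae_iff.2 coneM_compl] with z hz
    exact D2_const_mul (((coneK_smooth hχ hm p hz).comp (f := fun p : ℝ × E3 => (p, z)) p
      (by fun_prop)).two) z.1 V W
  have hbox : boxD (pot χ m) p =
      (4 * π)⁻¹ * ∫ z, z.1 * boxD (fun p => srcH χ m (p, z)) p ∂coneM := by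
    unfold boxD
    simp only [hD, ← Finset.mul_sum, ← mul_sub]
    rw [← integral_finsetSum _ fun i _ => hIs _ _, ← integral_sub (hIs _ _)
      (integrable_finsetSum _ fun i _ => hIs _ _)]
    simp only [mul_sub, Finset.mul_sum]
  have hI : Integrable (fun z : ℝ × E3 => z.1 * boxD (fun p => srcH χ m (p, z)) p) coneM := by
    have := (hIs (1, 0) (1, 0)).sub
      (integrable_finsetSum Finset.univ fun i _ => hIs (0, bv i) (0, bv i))
    refine this.congr (Eventually.of_forall fun z => ?_)
    simp only [Pi.sub_apply, boxD, mul_sub, Finset.mul_sum]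
  rw [hbox, coneM_integral hI]
  -- After integration over `σ`, the integrand is the derivative in `v` of the integral of `bdry`;
  -- the boundary value at `v = 1` vanishes and the one at `v = 0` is `-4π src p`.
  have hcont : ContinuousOn (fun v => ∫ σ, bdry χ m p (v, σ) ∂muS) (Icc 0 1) := fun v hv =>
    (param_continuousAt S2_compact muS_compl (f := bdry χ m p) fun σ hσ =>
      (bdry_smooth hχ hm p (z := (v, σ)) ⟨hv, hσ⟩).of_le (by simp)).continuousWithinAt
  rw [intervalIntegral.integral_eq_sub_of_hasDerivAt_of_le zero_le_one hcont
    (fun v hv => bdry_hasDerivAt hχ hm p hv) (coneM_intervalIntegrable hI)]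
  have h1 : ∫ σ, bdry χ m p (1, σ) ∂muS = 0 := by simp [bdry]
  have h0 : ∫ σ, bdry χ m p (0, σ) ∂muS = -(4 * π * src χ m p) := by
    simp only [bdry, srcH_zero_param]
    simp [muS_univ]
  rw [h1, h0]
  have := Real.pi_pos
  field_simp
  ring

end Kirchhoff

/-! ### Decay of the potential -/

lemma yv_norm_sq (p : ℝ × E3) (v : ℝ) {σ : E3} (hσ : ‖σ‖ = 1) :
    ‖yv (p, (v, σ))‖ ^ 2 = (1 - v) ^ 2 * ‖p.2‖ ^ 2 + 2 * ((1 - v) * v * ⟪p.2, σ⟫) + v ^ 2 := by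
  simp only [yv]
  rw [norm_add_sq_real, norm_smul, norm_smul, hσ, real_inner_smul_left, real_inner_smul_right,
    Real.norm_eq_abs, Real.norm_eq_abs, mul_one, mul_pow, sq_abs, sq_abs]
  ring

/-- The relation between `qv` and the rescaled radius, without division by `1 - v`. -/
lemma qv_mul (p : ℝ × E3) {v : ℝ} (hv : 0 ≤ v) {σ : E3} (hσ : ‖σ‖ = 1)
    (hy : 0 < ‖yv (p, (v, σ))‖) :
    (1 - v) * (qv (p, (v, σ)) + p.1) = ‖yv (p, (v, σ))‖ - v := by
  have h := yv_norm_sq p v hσ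
  have hq : qv (p, (v, σ)) + p.1 =
      ((1 - v) * ‖p.2‖ ^ 2 + 2 * v * ⟪p.2, σ⟫) / (‖yv (p, (v, σ))‖ + v) := by
    simp only [qv]; ring
  rw [hq]
  set n := ‖yv (p, (v, σ))‖
  rw [mul_div_assoc', div_eq_iff (by positivity)]
  linear_combination -h

/-- The function `r - t` does not increase along forward light rays. -/
lemma qv_le (p : ℝ × E3) {v : ℝ} (hv : 0 ≤ v) {σ : E3} (hσ : ‖σ‖ = 1) :
    qv (p, (v, σ)) ≤ ‖p.2‖ - p.1 := by
  simp only [qv]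
  refine sub_le_sub_right (div_le_of_le_mul₀ (by positivity) (norm_nonneg _) ?_) _
  have h1 := real_inner_le_norm p.2 (yv (p, (v, σ)))
  have h2 := real_inner_le_norm p.2 σ
  have h3 : ⟪p.2, yv (p, (v, σ))⟫ = (1 - v) * ‖p.2‖ ^ 2 + v * ⟪p.2, σ⟫ := by
    simp only [yv, inner_add_right, real_inner_smul_right, real_inner_self_eq_norm_sq]
  rw [hσ, mul_one] at h2
  nlinarith

/-- On the support of the cutoff the rescaled radius controls `(1 - v) t + v`, which bounds the
source along the cone. -/
lemma srcH_bound {χ : ℝ → ℝ} (hχ : IsCutChi χ) {m : ℝ → E3 → ℝ} (hm : SmoothQSphere m)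
    {κ : ℝ} (hκ : 2 ≤ κ) (hd : SymbolDecay κ m) :
    ∃ C, 0 ≤ C ∧ ∀ (p : ℝ × E3) (v : ℝ) (σ : E3), 0 < p.1 → v ∈ Icc (0:ℝ) 1 → ‖σ‖ = 1 →
      |srcH χ m (p, (v, σ))| ≤
        C * (((1 - v) * p.1 + v) ^ 3)⁻¹ * (1 + qv (p, (v, σ)) ^ 2)⁻¹ := by
  obtain ⟨C, hC0, hC⟩ := hd.bound hκ hm.1 []
  refine ⟨C * (27 / 8), by positivity, fun p v σ ht hv hσ => ?_⟩
  have hS : 0 < (1 - v) * p.1 + v := by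
    rcases eq_or_lt_of_le hv.1 with h | h
    · rw [← h]; simpa using ht
    · have := mul_nonneg (sub_nonneg.2 hv.2) ht.le
      linarith
  set S := (1 - v) * p.1 + v with hSdef
  set y := yv (p, (v, σ)) with hy
  set q := qv (p, (v, σ)) with hq
  have hrhs : 0 ≤ C * (27 / 8) * (S ^ 3)⁻¹ * (1 + q ^ 2)⁻¹ := by positivity
  have hH : srcH χ m (p, (v, σ)) = χ ((1 - v) * jb q / ‖y‖) * m q y / ‖y‖ ^ 3 := rfl
  rw [hH]
  rcases eq_or_ne y 0 with h0 | h0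
  · simpa [h0] using hrhs
  have hn : 0 < ‖y‖ := norm_pos_iff.2 h0
  rcases le_or_gt (1 / 2) ((1 - v) * jb q / ‖y‖) with hc | hc
  · rw [hχ.2.2.2 _ hc]; simpa using hrhs
  have h1 : (1 - v) * jb q < 1 / 2 * ‖y‖ := (div_lt_iff₀ hn).1 hc
  have h2 := qv_mul p hv.1 hσ hn
  have h3 : (1 - v) * (-q) ≤ (1 - v) * jb q :=
    mul_le_mul_of_nonneg_left ((neg_le_abs q).trans (abs_le_jb q)) (sub_nonneg.2 hv.2)
  -- On the support of the cutoff `S = ‖y‖ - (1 - v) q ≤ (3 / 2) ‖y‖`, whence the factor `27 / 8`.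
  have h4 : S ≤ 3 / 2 * ‖y‖ := by
    rw [hSdef]; nlinarith
  have h5 : |m q y| ≤ C * (1 + q ^ 2)⁻¹ := by simpa [pdMulti] using hC q y h0
  have h6 : |χ ((1 - v) * jb q / ‖y‖)| ≤ 1 := by
    rw [abs_of_nonneg (hχ.2.1 _).1]; exact (hχ.2.1 _).2
  have h7 : (‖y‖ ^ 3)⁻¹ ≤ 27 / 8 * (S ^ 3)⁻¹ := by
    have : S ^ 3 ≤ (3 / 2 * ‖y‖) ^ 3 := pow_le_pow_left₀ hS.le h4 3
    rw [inv_le_iff_one_le_mul₀ (by positivity), mul_assoc, ← div_eq_inv_mul, mul_div_assoc',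
      le_div_iff₀ (by positivity)]
    nlinarith
  rw [abs_div, abs_mul, abs_of_pos (pow_pos hn 3), div_eq_mul_inv]
  calc |χ ((1 - v) * jb q / ‖y‖)| * |m q y| * (‖y‖ ^ 3)⁻¹
      ≤ 1 * (C * (1 + q ^ 2)⁻¹) * (27 / 8 * (S ^ 3)⁻¹) := by gcongr
    _ = C * (27 / 8) * (S ^ 3)⁻¹ * (1 + q ^ 2)⁻¹ := by ring

lemma cone_pos {t v : ℝ} (ht : 0 < t) (hv : v ∈ Icc (0:ℝ) 1) : 0 < (1 - v) * t + v := by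
  rcases eq_or_lt_of_le hv.1 with h | h
  · rw [← h]; simpa using ht
  · have := mul_nonneg (sub_nonneg.2 hv.2) ht.le
    linarith

/-- With `S = (1 - v) t + v`, the integral `∫₀¹ S⁻² dv = t⁻¹` supplies one power of decay in `t`.
-/
lemma cone_integral {t : ℝ} (ht : 0 < t) :
    IntervalIntegrable (fun v => (((1 - v) * t + v) ^ 2)⁻¹) volume 0 1 ∧
      ∫ v in (0:ℝ)..1, (((1 - v) * t + v) ^ 2)⁻¹ = t⁻¹ := by
  have hc : ContinuousOn (fun v : ℝ => (((1 - v) * t + v) ^ 2)⁻¹) (Icc 0 1) :=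
    ContinuousOn.inv₀ (by fun_prop) fun v hv => pow_ne_zero 2 (cone_pos ht hv).ne'
  have hi : IntervalIntegrable (fun v => (((1 - v) * t + v) ^ 2)⁻¹) volume 0 1 := by
    refine ContinuousOn.intervalIntegrable ?_
    rwa [uIcc_of_le zero_le_one]
  refine ⟨hi, ?_⟩
  have hd : ∀ v ∈ uIcc (0:ℝ) 1, HasDerivAt (fun v : ℝ => t⁻¹ * (v / ((1 - v) * t + v)))
      (((1 - v) * t + v) ^ 2)⁻¹ v := by
    intro v hv
    rw [uIcc_of_le zero_le_one] at hv
    have hp := cone_pos ht hv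
    have h1 : HasDerivAt (fun v : ℝ => (1 - v) * t + v) (-1 * t + 1) v :=
      (((hasDerivAt_id v).const_sub 1).mul_const t).add (hasDerivAt_id v)
    refine (((hasDerivAt_id v).fun_div h1 hp.ne').const_mul t⁻¹).congr_deriv ?_
    simp only [id]
    have := hp.ne'
    field_simp
    ring
  rw [intervalIntegral.integral_eq_sub_of_hasDerivAt hd hi]
  simp

lemma pot_le {χ : ℝ → ℝ} (hχ : IsCutChi χ) {m : ℝ → E3 → ℝ} (hm : SmoothQSphere m)
    {p : ℝ × E3} (ht : 0 < p.1) {B : ℝ}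
    (hB : ∀ v ∈ Ioc (0:ℝ) 1, |∫ σ, v * srcH χ m (p, (v, σ)) ∂muS| ≤
      B * (((1 - v) * p.1 + v) ^ 2)⁻¹) :
    |pot χ m p| ≤ (4 * π)⁻¹ * (B * p.1⁻¹) := by
  have hI : Integrable (fun z : ℝ × E3 => z.1 * srcH χ m (p, z)) coneM :=
    slice_integrable coneK_compact coneM_compl fun z hz =>
      slice_continuousAt (f := fun w : (ℝ × E3) × (ℝ × E3) => w.2.1 * srcH χ m (w.1, w.2))
        (pot_integrand_smooth hχ hm p hz).continuousAt
  obtain ⟨h1, h2⟩ := cone_integral ht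
  rw [pot, coneM_integral hI, abs_mul, abs_of_pos (by positivity : 0 < (4 * π)⁻¹)]
  refine mul_le_mul_of_nonneg_left ?_ (by positivity)
  rw [← h2, ← intervalIntegral.integral_const_mul]
  exact intervalIntegral.norm_integral_le_of_norm_le (f := fun v => ∫ σ, v * srcH χ m (p, (v, σ)) ∂muS)
    zero_le_one (Eventually.of_forall fun v hv => hB v hv) (h1.const_mul B)

lemma tendsto_of_le_inv {f g : ℝ → ℝ} (hg : Tendsto g atTop atTop) {C : ℝ}
    (h : ∀ᶠ a in atTop, |f a| ≤ C * (g a)⁻¹) : Tendsto f atTop (𝓝 0) := by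
  refine squeeze_zero_norm' h ?_
  simpa using (tendsto_inv_atTop_zero.comp hg).const_mul C

/-- The potential does not contribute to the rescaled interior limit. -/
lemma pot_interior {χ : ℝ → ℝ} (hχ : IsCutChi χ) {m : ℝ → E3 → ℝ} (hm : SmoothQSphere m)
    {κ : ℝ} (hκ : 2 ≤ κ) (hd : SymbolDecay κ m) {x : E3} (hx : ‖x‖ < 1) :
    Tendsto (fun a : ℝ => a ^ 2 * pot χ m (a, a • x)) atTop (𝓝 0) := by
  obtain ⟨C, hC0, hC⟩ := srcH_bound hχ hm hκ hd
  have hδ : 0 < 1 - ‖x‖ := by linarith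
  refine tendsto_of_le_inv (g := fun a => a) tendsto_id
    (C := (4 * π)⁻¹ * (4 * π * (C * ((1 - ‖x‖) ^ 2)⁻¹))) ?_
  filter_upwards [eventually_gt_atTop 0] with a ha
  have key : |pot χ m (a, a • x)| ≤
      (4 * π)⁻¹ * ((4 * π * (C * ((1 - ‖x‖) ^ 2)⁻¹ * (a ^ 2)⁻¹)) * a⁻¹) := by
    refine pot_le hχ hm (p := (a, a • x)) ha fun v hv => ?_
    have hvI : v ∈ Icc (0:ℝ) 1 := ⟨hv.1.le, hv.2⟩
    have hS := cone_pos ha hvI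
    set S := (1 - v) * a + v with hSdef
    have hvS : v ≤ S := by
      have := mul_nonneg (sub_nonneg.2 hv.2) ha.le
      linarith
    have hb : ∀ᵐ σ ∂muS, ‖v * srcH χ m ((a, a • x), (v, σ))‖ ≤
        C * ((1 - ‖x‖) ^ 2)⁻¹ * (a ^ 2)⁻¹ * (S ^ 2)⁻¹ := by
      filter_upwards [muS_ae] with σ hσ
      have h1 := hC (a, a • x) v σ ha hvI hσ
      have h2 := qv_le (a, a • x) hvI.1 hσ
      set q := qv ((a, a • x), (v, σ))
      -- Since `r - t` does not increase, it stays below its initial value `-a (1 - |x|)`.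
      have h3 : q ≤ -(a * (1 - ‖x‖)) := by
        simp only [norm_smul, Real.norm_eq_abs, abs_of_pos ha] at h2
        linarith
      have h4 : (1 + q ^ 2)⁻¹ ≤ ((1 - ‖x‖) ^ 2)⁻¹ * (a ^ 2)⁻¹ := by
        rw [← mul_inv]
        refine inv_anti₀ (by positivity) ?_
        have : 0 < a * (1 - ‖x‖) := by positivity
        nlinarith
      rw [Real.norm_eq_abs, abs_mul, abs_of_pos hv.1]
      calc v * |srcH χ m ((a, a • x), (v, σ))|
          ≤ S * (C * (S ^ 3)⁻¹ * (((1 - ‖x‖) ^ 2)⁻¹ * (a ^ 2)⁻¹)) :=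
            mul_le_mul hvS (h1.trans (by gcongr)) (abs_nonneg _) hS.le
        _ = C * ((1 - ‖x‖) ^ 2)⁻¹ * (a ^ 2)⁻¹ * (S ^ 2)⁻¹ := by field_simp
    have h := norm_integral_le_of_norm_le_const (μ := muS) hb
    rw [muS_univ, Real.norm_eq_abs] at h
    refine h.trans (le_of_eq ?_)
    ring
  rw [abs_mul, abs_of_pos (by positivity : 0 < a ^ 2)]
  calc a ^ 2 * |pot χ m (a, a • x)| ≤ a ^ 2 * ((4 * π)⁻¹ *
        ((4 * π * (C * ((1 - ‖x‖) ^ 2)⁻¹ * (a ^ 2)⁻¹)) * a⁻¹)) := by gcongr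
    _ = (4 * π)⁻¹ * (4 * π * (C * ((1 - ‖x‖) ^ 2)⁻¹)) * a⁻¹ := by field_simp

/-- Along the forward cone of `(r - q, r ω)`, the value of `r - t` at parameter `(v, σ)` lies
below `q` by at least `(r v / ((1 - v) r + v)) (1 - ⟨ω, σ⟩)`. -/
lemma qv_radiation {r v q : ℝ} (hr : 0 < r) (hv : v ∈ Ioc (0:ℝ) 1) {ω σ : E3} (hω : ‖ω‖ = 1)
    (hσ : ‖σ‖ = 1) :
    r * v / ((1 - v) * r + v) * (1 - ⟪ω, σ⟫) ≤ q - qv ((r - q, r • ω), (v, σ)) := by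
  have hvI : v ∈ Icc (0:ℝ) 1 := ⟨hv.1.le, hv.2⟩
  have hS := cone_pos hr hvI
  have hn2 := yv_norm_sq (r - q, r • ω) v hσ
  simp only [norm_smul, hω, mul_one, Real.norm_eq_abs, sq_abs, real_inner_smul_left] at hn2
  simp only [qv, norm_smul, hω, mul_one, Real.norm_eq_abs, sq_abs, real_inner_smul_left]
  have hz := (inner_mem_Icc hω hσ).2
  set z := ⟪ω, σ⟫
  have hn0 := norm_nonneg (yv ((r - q, r • ω), (v, σ)))
  set n := ‖yv ((r - q, r • ω), (v, σ))‖
  set S := (1 - v) * r + v with hSdef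
  have hv0 := hv.1
  have hprod : 0 ≤ (1 - v) * v * r * (1 - z) :=
    mul_nonneg (mul_nonneg (mul_nonneg (sub_nonneg.2 hv.2) hv0.le) hr.le) (by linarith)
  have hnS : n ≤ S := by
    refine le_of_sq_le_sq ?_ hS.le
    rw [hn2, hSdef]; nlinarith
  have hid : q - (((1 - v) * r ^ 2 + 2 * v * (r * z)) / (n + v) - (r - q)) =
      2 * r * v * (1 - z) / (n + S) := by
    have h1 : n + v ≠ 0 := by positivity
    have h2 : n + S ≠ 0 := by positivity
    rw [eq_div_iff h2]
    have h3 : (((1 - v) * r ^ 2 + 2 * v * (r * z)) / (n + v)) * (n + v) =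
      (1 - v) * r ^ 2 + 2 * v * (r * z) := div_mul_cancel₀ _ h1
    refine mul_right_cancel₀ h1 ?_
    have h4 : ∀ A : ℝ, A * (n + v) = (1 - v) * r ^ 2 + 2 * v * (r * z) →
        (q - (A - (r - q))) * (n + S) * (n + v) = 2 * r * v * (1 - z) * (n + v) := by
      intro A hA
      rw [hSdef]
      linear_combination (-(n + ((1 - v) * r + v))) * hA + r * hn2
    exact h4 _ h3
  rw [hid, div_mul_eq_mul_div, div_le_div_iff₀ hS (by positivity)]
  have : 0 ≤ r * v * (1 - z) := mul_nonneg (by positivity) (by linarith)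
  nlinarith

/-- If `q'` lies below `q` by at least `b`, decay in `q'` is decay in `b`, up to a factor
depending on `q`. -/
lemma jap_compare (q q' : ℝ) {b : ℝ} (hb0 : 0 ≤ b) (hb : b ≤ q - q') :
    (1 + q' ^ 2)⁻¹ ≤ 2 * (1 + q ^ 2) * (1 + b ^ 2)⁻¹ := by
  rw [← div_eq_mul_inv, le_div_iff₀ (by positivity), inv_mul_le_iff₀ (by positivity)]
  nlinarith [sq_nonneg (q + q'), sq_nonneg (q * q'), mul_self_le_mul_self hb0 hb]

/-- The potential does not contribute to the radiation field. -/
lemma pot_radiation {χ : ℝ → ℝ} (hχ : IsCutChi χ) {m : ℝ → E3 → ℝ} (hm : SmoothQSphere m)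
    {κ : ℝ} (hκ : 2 ≤ κ) (hd : SymbolDecay κ m) (q : ℝ) {ω : E3} (hω : ‖ω‖ = 1) :
    Tendsto (fun r : ℝ => r * pot χ m (r - q, r • ω)) atTop (𝓝 0) := by
  obtain ⟨C, hC0, hC⟩ := srcH_bound hχ hm hκ hd
  refine tendsto_of_le_inv (g := fun r => r - q) (tendsto_atTop_add_const_right _ _ tendsto_id)
    (C := (4 * π)⁻¹ * (C * (2 * (1 + q ^ 2)) * (2 * π * π) * (1 + |q|))) ?_
  filter_upwards [eventually_ge_atTop (1 + |q|)] with r hr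
  have hq1 := le_abs_self q
  have hr0 : 0 < r := by linarith [abs_nonneg q]
  have ht1 : 1 ≤ r - q := by linarith
  have ht : 0 < r - q := by linarith
  have key : |pot χ m (r - q, r • ω)| ≤ (4 * π)⁻¹ *
      ((r⁻¹ * (C * (2 * (1 + q ^ 2)) * (2 * π * π) * (1 + |q|))) * (r - q)⁻¹) := by
    refine pot_le hχ hm (p := (r - q, r • ω)) ht fun v hv => ?_
    have hvI : v ∈ Icc (0:ℝ) 1 := ⟨hv.1.le, hv.2⟩
    have hv0 := hv.1
    have hS := cone_pos ht hvI
    have hR := cone_pos hr0 hvI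
    simp only
    set S := (1 - v) * (r - q) + v with hSdef
    set R := (1 - v) * r + v with hRdef
    -- `S` comes from the time `r - q` and `R` from the radius `r`; they are comparable with a
    -- constant depending on `q` only.
    have hRS : R ≤ (1 + |q|) * S := by
      have h1 : (1 - v) * q ≤ (1 - v) * (|q| * (r - q)) :=
        mul_le_mul_of_nonneg_left (by nlinarith [abs_nonneg q]) (sub_nonneg.2 hv.2)
      have h2 : 0 ≤ |q| * v := by positivity
      rw [hRdef, hSdef]; nlinarith
    set c := r * v / R with hc
    have hc0 : 0 < c := by positivity
    have hb : ∀ᵐ σ ∂muS, ‖v * srcH χ m ((r - q, r • ω), (v, σ))‖ ≤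
        v * (C * (S ^ 3)⁻¹ * (2 * (1 + q ^ 2))) * (1 + (c * ⟪ω, σ⟫ - (c - 0)) ^ 2)⁻¹ := by
      filter_upwards [muS_ae] with σ hσ
      have h1 := hC (r - q, r • ω) v σ ht hvI hσ
      have h2 := qv_radiation (q := q) hr0 hv hω hσ
      have h3 := jap_compare q _ (mul_nonneg hc0.le
        (sub_nonneg.2 (inner_mem_Icc hω hσ).2)) h2
      rw [Real.norm_eq_abs, abs_mul, abs_of_pos hv.1, mul_assoc]
      refine mul_le_mul_of_nonneg_left ?_ hv0.le
      have h4 : (c * ⟪ω, σ⟫ - (c - 0)) ^ 2 = (c * (1 - ⟪ω, σ⟫)) ^ 2 := by ring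
      rw [h4, mul_assoc]
      refine h1.trans ?_
      gcongr
    have hcont : ∀ σ ∈ S2, ContinuousAt
        (fun σ => v * (C * (S ^ 3)⁻¹ * (2 * (1 + q ^ 2))) *
          (1 + (c * ⟪ω, σ⟫ - (c - 0)) ^ 2)⁻¹) σ := by
      intro σ _
      have hi : Continuous fun σ : E3 => ⟪ω, σ⟫ := (innerSL ℝ ω).continuous
      refine Continuous.continuousAt (continuous_const.mul (Continuous.inv₀ ?_ fun σ => ?_))
      · exact continuous_const.add (((continuous_const.mul hi).sub continuous_const).pow 2)
      · positivity
    have h := norm_integral_le_of_norm_le (μ := muS) (muS_integrable hcont) hb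
    rw [Real.norm_eq_abs] at h
    refine h.trans ?_
    rw [integral_const_mul]
    -- The angular integral gains the factor `c⁻¹ = R / (r v)`, which cancels `v` and costs one
    -- power of `S`.
    have hz := zonal_arctan_le hω 0 c
    set I := ∫ σ, (1 + (c * ⟪ω, σ⟫ - (c - 0)) ^ 2)⁻¹ ∂muS
    have hvI : v * I = r⁻¹ * R * (c * I) := by
      rw [hc]; field_simp
    calc v * (C * (S ^ 3)⁻¹ * (2 * (1 + q ^ 2))) * I
        = C * (S ^ 3)⁻¹ * (2 * (1 + q ^ 2)) * (v * I) := by ring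
      _ ≤ C * (S ^ 3)⁻¹ * (2 * (1 + q ^ 2)) * (r⁻¹ * ((1 + |q|) * S) * (2 * π * π)) := by
          rw [hvI]; gcongr
      _ = r⁻¹ * (C * (2 * (1 + q ^ 2)) * (2 * π * π) * (1 + |q|)) * (S ^ 2)⁻¹ := by
          field_simp
  rw [abs_mul, abs_of_pos hr0]
  calc r * |pot χ m (r - q, r • ω)| ≤ r * ((4 * π)⁻¹ *
      ((r⁻¹ * (C * (2 * (1 + q ^ 2)) * (2 * π * π) * (1 + |q|))) * (r - q)⁻¹)) := by gcongr
    _ = _ := by field_simp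

/-! ### The scattering solution -/

lemma dt2_sub_lap3 {u : ℝ × E3 → ℝ} (hu : ∀ p, ContDiffAt ℝ (⊤ : ℕ∞) u p) (t : ℝ) (x : E3) :
    dt2 (fun t x => u (t, x)) t x - lap3 (fun x => u (t, x)) x = boxD u (t, x) := by
  have hsm := contDiff_iff_contDiffAt.2 hu
  have h1 : dt2 (fun t x => u (t, x)) t x = D2 u (t, x) (1, 0) (1, 0) := by
    have ha : ∀ s, deriv (fun s => u (s, x)) s = fderiv ℝ u (s, x) (1, 0) := by
      intro s
      have hl : HasDerivAt (fun s : ℝ => (s, x)) ((1 : ℝ), (0 : E3)) s :=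
        (hasDerivAt_id s).prodMk (hasDerivAt_const s x)
      exact ((hu (s, x)).differentiableAt (by simp)).hasFDerivAt.comp_hasDerivAt
        (f := fun s : ℝ => (s, x)) s hl |>.deriv
    have hl : HasDerivAt (fun s : ℝ => (s, x)) ((1 : ℝ), (0 : E3)) t :=
      (hasDerivAt_id t).prodMk (hasDerivAt_const t x)
    have hd : DifferentiableAt ℝ (fun z => fderiv ℝ u z (1, 0)) (t, x) :=
      (fderiv_differentiableAt (hu _).two).clm_apply (differentiableAt_const _)
    unfold dt2
    simp only [ha]
    rw [← D2_eq_fderiv (hu _).two]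
    exact (hd.hasFDerivAt.comp_hasDerivAt (f := fun s : ℝ => (s, x)) t hl).deriv
  have h2 : (fun x => u (t, x)) =
      fun x => u ((t, 0) + ContinuousLinearMap.inr ℝ ℝ E3 x) := by
    funext y; simp
  have h3 : lap3 (fun x => u (t, x)) x = ∑ i, D2 u (t, x) (0, bv i) (0, bv i) := by
    have h4 : ContDiffAt ℝ 2 (fun x => u (t, x)) x :=
      ((hu (t, x)).comp (f := fun x => (t, x)) x (by fun_prop)).two
    rw [lap3_eq h4, lapD]
    refine Finset.sum_congr rfl fun i _ => ?_
    rw [h2, D2_comp_affine _ _ (hu _).two]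
    simp
  rw [h1, h3, boxD]

lemma boxD_add {u u' : ℝ × E3 → ℝ} {p : ℝ × E3} (hu : ContDiffAt ℝ 2 u p)
    (hu' : ContDiffAt ℝ 2 u' p) : boxD (fun p => u p + u' p) p = boxD u p + boxD u' p := by
  unfold boxD
  simp only [D2_add hu hu', Finset.sum_add_distrib]
  ring

lemma src_eq (χ : ℝ → ℝ) (m : ℝ → E3 → ℝ) (t : ℝ) (x : E3) : src χ m (t, x) =
    if x = 0 then 0 else χ (jb (t - ‖x‖) / ‖x‖) * m (‖x‖ - t) x / ‖x‖ ^ 3 := by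
  split_ifs with h
  · simp [src, core, h]
  · have : jb (t - ‖x‖) = jb (‖x‖ - t) := by
      unfold jb; congr 1; ring
    simp [src, core, this]

/-- scattering solutions with cubic source terms
(Theorem 1.2 of the paper). -/
theorem scattering_cubic_source
    (γ : ℝ) (hγ1 : 1/2 ≤ γ) (hγ2 : γ < 1)
    (χ : ℝ → ℝ) (hχ : IsCutChi χ)
    (χneg : ℝ → ℝ) (hχneg : IsCutNeg χneg)
    (m : ℝ → E3 → ℝ) (hm : SmoothQSphere m) (hmdec : SymbolDecay (1 + 2*γ) m)
    (M : E3 → ℝ) (hM : ∀ σ : E3, M σ = ∫ q : ℝ, m q σ)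
    (Mbar : ℝ) (hMbar : Mbar = (1/(4*π)) * sphereIntegral M) :
    ∃ Q : E3 → ℝ,
      (SmoothOnSphere Q ∧ sphereIntegral Q = 0 ∧
        (∀ ω : E3, ‖ω‖ = 1 → lap3 Q ω = -M ω + Mbar)) ∧
      (∀ Q' : E3 → ℝ,
        (SmoothOnSphere Q' ∧ sphereIntegral Q' = 0 ∧
          (∀ ω : E3, ‖ω‖ = 1 → lap3 Q' ω = -M ω + Mbar)) →
        ∀ ω : E3, ‖ω‖ = 1 → Q' ω = Q ω) ∧
      (∀ G0 : ℝ → E3 → ℝ, SmoothQSphere G0 → SymbolDecay 2 G0 →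
        (∃ c : ℝ, ∀ ω : E3, ‖ω‖ = 1 → (∫ q : ℝ, G0 q ω) - Q ω = c) →
        ∃ φ : ℝ → E3 → ℝ,
          ContDiffOn ℝ (⊤ : ℕ∞) (fun p : ℝ × E3 => φ p.1 p.2) {p : ℝ × E3 | 2 < p.1} ∧
          (∀ t : ℝ, 2 < t → ∀ x : E3,
            dt2 φ t x - lap3 (φ t) x =
              if x = 0 then 0 else χ (jb (t - ‖x‖) / ‖x‖) * m (‖x‖ - t) x / ‖x‖ ^ 3) ∧
          (∀ (q : ℝ) (ω : E3), ‖ω‖ = 1 →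
            Tendsto (fun r : ℝ => r * φ (r - q) (r • ω)) atTop
              (nhds (Mbar * (jb q)⁻¹ * χneg q + G0 q ω))) ∧
          (∀ x : E3, 0 < ‖x‖ → ‖x‖ < 1 →
            Tendsto (fun a : ℝ => a ^ 2 * φ a (a • x)) atTop
              (nhds (2 * Mbar / (1 - ‖x‖ ^ 2))))) := by
  have hκ : 2 ≤ 1 + 2 * γ := by linarith
  obtain ⟨Q, hQ, hQ0, hQΔ⟩ := poisson_exists (M_smooth hκ hm hmdec hM) hMbar
  refine ⟨Q, ⟨hQ, hQ0, hQΔ⟩, fun Q' ⟨hQ', hQ0', hQΔ'⟩ =>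
    poisson_unique hQ hQ' hQ0 hQ0' hQΔ hQΔ', fun G0 hG hGd _ => ?_⟩
  obtain ⟨u, hu, hbox, hrad, hint⟩ := free_part hχneg Mbar hG hGd
  have hψ := pot_smooth hχ hm
  have hφ : ∀ p, ContDiffAt ℝ (⊤ : ℕ∞) (fun p => u p + pot χ m p) p :=
    fun p => (hu p).add (hψ p)
  -- The solution is the free wave `u` plus the advanced potential; only `u` contributes to the
  -- limits.
  refine ⟨fun t x => u (t, x) + pot χ m (t, x), ?_, ?_, ?_, ?_⟩
  · exact (contDiff_iff_contDiffAt.2 hφ).contDiffOn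
  · intro t _ x
    rw [← src_eq, ← pot_box hχ hm]
    refine (dt2_sub_lap3 hφ t x).trans ?_
    rw [boxD_add (hu _).two (hψ _).two, hbox, zero_add]
  · intro q ω hω
    have := (hrad q ω hω).add (pot_radiation hχ hm hκ hmdec q hω)
    simpa only [add_zero, mul_add] using this
  · intro x hx0 hx1
    have := (hint x hx0 hx1).add (pot_interior hχ hm hκ hmdec hx1)
    simpa only [add_zero, mul_add] using this
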